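/- arXiv:0902.0132 — 2 statements merged into one kernel-verified Lean document; each statement's English description precedes it below -/
import Mathlib

section
/- For a sequence (G_n) of finite simple graphs with |V(G_n)| → ∞ and a graphon W, one has t(F,G_n) → t(F,W) for every finite simple graph F if and only if δ_□(W_{G_n}, W) → 0. -/
open MeasureTheory Set Filter

/-- The Lebesgue measure restricted to `[0,1]`. -/
noncomputable abbrev μ01 : MeasureTheory.Measure ℝ :=
  MeasureTheory.volume.restrict (Set.Icc (0:ℝ) 1)

/-- A graphon: a symmetric measurable function `[0,1]² → [0,1]`
(defined on all of `ℝ²` for convenience). -/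
def IsGraphon (W : ℝ → ℝ → ℝ) : Prop :=
  Measurable (Function.uncurry W) ∧ (∀ x y, W x y = W y x) ∧ ∀ x y, W x y ∈ Set.Icc (0:ℝ) 1

-- The homomorphism density `t(F,W)` of a finite simple graph `F` in a graphon `W`.
open scoped Classical in
noncomputable def homDensity {n : ℕ} (F : SimpleGraph (Fin n)) (W : ℝ → ℝ → ℝ) : ℝ :=
  ∫ x : Fin n → ℝ,
    (∏ p ∈ Finset.univ.filter (fun p : Fin n × Fin n => p.1 < p.2 ∧ F.Adj p.1 p.2),
      W (x p.1) (x p.2)) ∂(MeasureTheory.Measure.pi fun _ => μ01)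

/-- The cut norm `‖U‖_□` of a kernel `U`. -/
noncomputable def cutNorm (U : ℝ → ℝ → ℝ) : ℝ :=
  sSup { r : ℝ | ∃ S T : Set ℝ, MeasurableSet S ∧ MeasurableSet T ∧
    S ⊆ Set.Icc (0:ℝ) 1 ∧ T ⊆ Set.Icc (0:ℝ) 1 ∧
    r = |∫ x in S, ∫ y in T, U x y| }

/-- An invertible measure preserving map of `[0,1]` onto itself. -/
def IsInvMeasurePreserving (φ : ℝ → ℝ) : Prop :=
  Set.MapsTo φ (Set.Icc (0:ℝ) 1) (Set.Icc (0:ℝ) 1) ∧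
  MeasureTheory.MeasurePreserving φ μ01 μ01 ∧
  ∃ ψ : ℝ → ℝ, Set.MapsTo ψ (Set.Icc (0:ℝ) 1) (Set.Icc (0:ℝ) 1) ∧
    MeasureTheory.MeasurePreserving ψ μ01 μ01 ∧
    (∀ x ∈ Set.Icc (0:ℝ) 1, ψ (φ x) = x) ∧ (∀ x ∈ Set.Icc (0:ℝ) 1, φ (ψ x) = x)

/-- The cut distance `δ_□(U,W)` between two graphons. -/
noncomputable def cutDist (U W : ℝ → ℝ → ℝ) : ℝ :=
  sInf { r : ℝ | ∃ φ : ℝ → ℝ, IsInvMeasurePreserving φ ∧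
    r = cutNorm (fun x y => U x y - W (φ x) (φ y)) }

-- The step-function graphon `W_G` associated with a finite simple graph `G` on `{0,…,n−1}`,
-- using the intervals `J_i = [i/n, (i+1)/n)`.
open scoped Classical in
noncomputable def graphonOf {n : ℕ} (G : SimpleGraph (Fin n)) : ℝ → ℝ → ℝ :=
  fun x y =>
    if ∃ i j : Fin n, G.Adj i j ∧
        x ∈ Set.Ico (((i : ℕ) : ℝ) / n) ((((i : ℕ) : ℝ) + 1) / n) ∧
        y ∈ Set.Ico (((j : ℕ) : ℝ) / n) ((((j : ℕ) : ℝ) + 1) / n)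
    then 1 else 0

-- The homomorphism density `t(F,G) = hom(F,G)/|V(G)|^{|V(F)|}` for finite simple graphs.
open scoped Classical in
noncomputable def homDensityFin {m n : ℕ} (F : SimpleGraph (Fin m)) (G : SimpleGraph (Fin n)) : ℝ :=
  (Fintype.card { f : Fin m → Fin n // ∀ i j, F.Adj i j → G.Adj (f i) (f j) } : ℝ) / (n : ℝ) ^ m


/-- bounded measurable kernel -/
def Ker (U : ℝ → ℝ → ℝ) (C : ℝ) : Prop :=
  Measurable (Function.uncurry U) ∧ ∀ x y, |U x y| ≤ C

lemma IsGraphon.ker {W : ℝ → ℝ → ℝ} (h : IsGraphon W) : Ker W 1 :=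
  ⟨h.1, fun x y => abs_le.2 ⟨by linarith [(h.2.2 x y).1], (h.2.2 x y).2⟩⟩

lemma Ker.sub {U V : ℝ → ℝ → ℝ} {C D : ℝ} (hU : Ker U C) (hV : Ker V D) :
    Ker (fun x y => U x y - V x y) (C + D) :=
  ⟨hU.1.sub hV.1, fun x y => (abs_sub _ _).trans (add_le_add (hU.2 x y) (hV.2 x y))⟩

lemma Ker.add {U V : ℝ → ℝ → ℝ} {C D : ℝ} (hU : Ker U C) (hV : Ker V D) :
    Ker (fun x y => U x y + V x y) (C + D) :=
  ⟨hU.1.add hV.1, fun x y => (abs_add_le _ _).trans (add_le_add (hU.2 x y) (hV.2 x y))⟩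

lemma Ker.comp {U : ℝ → ℝ → ℝ} {C : ℝ} (hU : Ker U C) {φ : ℝ → ℝ} (hφ : Measurable φ) :
    Ker (fun x y => U (φ x) (φ y)) C :=
  ⟨hU.1.comp ((hφ.comp measurable_fst).prodMk (hφ.comp measurable_snd)), fun _ _ => hU.2 _ _⟩

lemma isFin_of_sub {S : Set ℝ} (hS : S ⊆ Icc (0:ℝ) 1) : IsFiniteMeasure (volume.restrict S) := by
  refine ⟨?_⟩
  rw [Measure.restrict_apply_univ]
  exact (measure_mono hS).trans_lt (by simp)

lemma integrable_bdd {α : Type*} [MeasurableSpace α] {μ : Measure α} [IsFiniteMeasure μ]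
    {f : α → ℝ} (hf : Measurable f) (C : ℝ) (h : ∀ x, |f x| ≤ C) : Integrable f μ :=
  Integrable.of_bound hf.aestronglyMeasurable C (Eventually.of_forall h)

lemma Ker.meas_right {U : ℝ → ℝ → ℝ} {C : ℝ} (hU : Ker U C) (x : ℝ) : Measurable (U x) :=
  hU.1.comp measurable_prodMk_left

lemma Ker.meas_int {U : ℝ → ℝ → ℝ} {C : ℝ} (hU : Ker U C) (μ : Measure ℝ) [SFinite μ] :
    Measurable (fun x => ∫ y, U x y ∂μ) :=
  (hU.1.stronglyMeasurable.integral_prod_right').measurable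

lemma Ker.nonneg {U : ℝ → ℝ → ℝ} {C : ℝ} (hU : Ker U C) : 0 ≤ C :=
  (abs_nonneg _).trans (hU.2 0 0)

lemma meas_le_one {S : Set ℝ} (hS : S ⊆ Icc (0:ℝ) 1) : (volume.restrict S).real univ ≤ 1 := by
  rw [measureReal_restrict_apply_univ]
  calc volume.real S ≤ volume.real (Icc (0:ℝ) 1) := measureReal_mono hS (by simp)
    _ = 1 := by simp

lemma abs_int_le {f : ℝ → ℝ} {C : ℝ} (hC : 0 ≤ C) (h : ∀ x, |f x| ≤ C) {S : Set ℝ}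
    (hS : S ⊆ Icc (0:ℝ) 1) : |∫ x in S, f x| ≤ C := by
  haveI := isFin_of_sub hS
  have := norm_integral_le_of_norm_le_const (μ := volume.restrict S) (f := f) (C := C)
    (Eventually.of_forall h)
  rw [Real.norm_eq_abs] at this
  exact this.trans (mul_le_of_le_one_right hC (meas_le_one hS))

lemma cutNorm_le {U : ℝ → ℝ → ℝ} {r : ℝ}
    (h : ∀ S T : Set ℝ, MeasurableSet S → MeasurableSet T → S ⊆ Icc (0:ℝ) 1 → T ⊆ Icc (0:ℝ) 1 →
      |∫ x in S, ∫ y in T, U x y| ≤ r) : cutNorm U ≤ r := by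
  apply csSup_le
  · exact ⟨_, ∅, ∅, .empty, .empty, empty_subset _, empty_subset _, rfl⟩
  · rintro _ ⟨S, T, hS, hT, hS', hT', rfl⟩
    exact h S T hS hT hS' hT'

lemma le_cutNorm {U : ℝ → ℝ → ℝ} {C : ℝ} (hU : Ker U C) {S T : Set ℝ} (hS : MeasurableSet S)
    (hT : MeasurableSet T) (hS' : S ⊆ Icc (0:ℝ) 1) (hT' : T ⊆ Icc (0:ℝ) 1) :
    |∫ x in S, ∫ y in T, U x y| ≤ cutNorm U := by
  apply le_csSup
  · refine ⟨C, ?_⟩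
    rintro _ ⟨S, T, hS, hT, hS', hT', rfl⟩
    exact abs_int_le hU.nonneg (fun x => abs_int_le hU.nonneg (hU.2 x) hT') hS'
  · exact ⟨S, T, hS, hT, hS', hT', rfl⟩

lemma cutNorm_nonneg (U : ℝ → ℝ → ℝ) : 0 ≤ cutNorm U := by
  apply Real.sSup_nonneg
  rintro _ ⟨S, T, hS, hT, hS', hT', rfl⟩
  exact abs_nonneg _

lemma cutNorm_congr {U V : ℝ → ℝ → ℝ}
    (h : ∀ x ∈ Ico (0:ℝ) 1, ∀ y ∈ Ico (0:ℝ) 1, U x y = V x y) : cutNorm U = cutNorm V := by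
  have ae : ∀ S : Set ℝ, MeasurableSet S → S ⊆ Icc (0:ℝ) 1 →
      ∀ᵐ x ∂(volume.restrict S), x ∈ Ico (0:ℝ) 1 := by
    intro S hS hS'
    rw [ae_restrict_iff' hS]
    have : ∀ᵐ x : ℝ, x ≠ 1 := by simp [ae_iff]
    filter_upwards [this] with x hx hxS
    exact ⟨(hS' hxS).1, lt_of_le_of_ne (hS' hxS).2 hx⟩
  have key : ∀ S T : Set ℝ, MeasurableSet S → MeasurableSet T → S ⊆ Icc (0:ℝ) 1 →
      T ⊆ Icc (0:ℝ) 1 → ∫ x in S, ∫ y in T, U x y = ∫ x in S, ∫ y in T, V x y := by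
    intro S T hS hT hS' hT'
    refine integral_congr_ae ?_
    filter_upwards [ae S hS hS'] with x hx
    refine integral_congr_ae ?_
    filter_upwards [ae T hT hT'] with y hy
    exact h x hx y hy
  unfold cutNorm
  congr 1
  ext r
  constructor
  · rintro ⟨S, T, hS, hT, hS', hT', rfl⟩
    exact ⟨S, T, hS, hT, hS', hT', by rw [key S T hS hT hS' hT']⟩
  · rintro ⟨S, T, hS, hT, hS', hT', rfl⟩
    exact ⟨S, T, hS, hT, hS', hT', by rw [key S T hS hT hS' hT']⟩

lemma int2_add {U V : ℝ → ℝ → ℝ} {C D : ℝ} (hU : Ker U C) (hV : Ker V D) {S T : Set ℝ}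
    (hS' : S ⊆ Icc (0:ℝ) 1) (hT' : T ⊆ Icc (0:ℝ) 1) :
    ∫ x in S, ∫ y in T, (U x y + V x y) =
      (∫ x in S, ∫ y in T, U x y) + ∫ x in S, ∫ y in T, V x y := by
  haveI := isFin_of_sub hS'
  haveI := isFin_of_sub hT'
  rw [← integral_add]
  · congr 1; ext x
    exact integral_add (integrable_bdd (hU.meas_right x) C (hU.2 x))
      (integrable_bdd (hV.meas_right x) D (hV.2 x))
  · exact integrable_bdd (hU.meas_int _) C (fun x => abs_int_le hU.nonneg (hU.2 x) hT')
  · exact integrable_bdd (hV.meas_int _) D (fun x => abs_int_le hV.nonneg (hV.2 x) hT')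

lemma cutNorm_add_le {U V : ℝ → ℝ → ℝ} {C D : ℝ} (hU : Ker U C) (hV : Ker V D) :
    cutNorm (fun x y => U x y + V x y) ≤ cutNorm U + cutNorm V := by
  apply cutNorm_le
  intro S T hS hT hS' hT'
  rw [int2_add hU hV hS' hT']
  exact (abs_add_le _ _).trans
    (add_le_add (le_cutNorm hU hS hT hS' hT') (le_cutNorm hV hS hT hS' hT'))

lemma cutNorm_neg (U : ℝ → ℝ → ℝ) : cutNorm (fun x y => - U x y) = cutNorm U := by
  unfold cutNorm
  simp only [integral_neg, abs_neg]

lemma cutNorm_sub_comm (U V : ℝ → ℝ → ℝ) :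
    cutNorm (fun x y => U x y - V x y) = cutNorm (fun x y => V x y - U x y) := by
  rw [← cutNorm_neg]; simp

lemma int_comp {φ : ℝ → ℝ} (hφ : IsInvMeasurePreserving φ) {S : Set ℝ} (hS : MeasurableSet S)
    (hS' : S ⊆ Icc (0:ℝ) 1) : ∃ S' : Set ℝ, MeasurableSet S' ∧ S' ⊆ Icc (0:ℝ) 1 ∧
    ∀ f : ℝ → ℝ, Measurable f → ∫ x in S, f (φ x) = ∫ x in S', f x := by
  obtain ⟨h1, h2, ψ, h3, h4, h5, h6⟩ := hφ
  have hm : MeasurableSet (ψ ⁻¹' S ∩ Icc (0:ℝ) 1) := (h4.measurable hS).inter measurableSet_Icc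
  refine ⟨ψ ⁻¹' S ∩ Icc (0:ℝ) 1, hm, inter_subset_right, ?_⟩
  intro f hf
  have e1 : ∀ (S : Set ℝ) (g : ℝ → ℝ), MeasurableSet S → S ⊆ Icc (0:ℝ) 1 →
      ∫ x in S, g x = ∫ x, S.indicator g x ∂μ01 := by
    intro S g hS hS'
    rw [integral_indicator hS, Measure.restrict_restrict hS, inter_eq_left.2 hS']
  rw [e1 S _ hS hS', e1 _ f hm inter_subset_right]
  have := integral_map (μ := μ01) (φ := φ) h2.measurable.aemeasurable
    (f := (ψ ⁻¹' S ∩ Icc (0:ℝ) 1).indicator f) (hf.indicator hm).aestronglyMeasurable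
  rw [h2.map_eq] at this
  rw [this]
  refine integral_congr_ae ?_
  filter_upwards [ae_restrict_mem measurableSet_Icc] with x hx
  by_cases hxS : x ∈ S
  · rw [indicator_of_mem hxS, indicator_of_mem]
    exact ⟨by simpa [h5 x hx] using hxS, h1 hx⟩
  · rw [indicator_of_notMem hxS, indicator_of_notMem]
    rintro ⟨h, -⟩
    exact hxS (by simpa [h5 x hx] using h)

lemma cutNorm_comp_le {U : ℝ → ℝ → ℝ} {C : ℝ} (hU : Ker U C) {φ : ℝ → ℝ}
    (hφ : IsInvMeasurePreserving φ) : cutNorm (fun x y => U (φ x) (φ y)) ≤ cutNorm U := by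
  apply cutNorm_le
  intro S T hS hT hS' hT'
  obtain ⟨S', hS1, hS2, hS3⟩ := int_comp hφ hS hS'
  obtain ⟨T', hT1, hT2, hT3⟩ := int_comp hφ hT hT'
  have : ∫ x in S, ∫ y in T, U (φ x) (φ y) = ∫ x in S', ∫ y in T', U x y := by
    rw [← hS3 _ (hU.meas_int _)]
    congr 1; ext x
    exact hT3 _ (hU.meas_right _)
  rw [this]
  exact le_cutNorm hU hS1 hT1 hS2 hT2

lemma IsInvMeasurePreserving.comp {φ ψ : ℝ → ℝ} (hφ : IsInvMeasurePreserving φ)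
    (hψ : IsInvMeasurePreserving ψ) : IsInvMeasurePreserving (fun x => φ (ψ x)) := by
  obtain ⟨h1, h2, φ', h3, h4, h5, h6⟩ := hφ
  obtain ⟨k1, k2, ψ', k3, k4, k5, k6⟩ := hψ
  refine ⟨fun x hx => h1 (k1 hx), h2.comp k2, fun x => ψ' (φ' x), fun x hx => k3 (h3 hx),
    k4.comp h4, ?_, ?_⟩
  · intro x hx
    simp only [h5 _ (k1 hx), k5 x hx]
  · intro x hx
    simp only [k6 _ (h3 hx), h6 x hx]

lemma isInv_id : IsInvMeasurePreserving (fun x => x) :=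
  ⟨fun _ h => h, MeasurePreserving.id _, fun x => x, fun _ h => h, MeasurePreserving.id _,
    fun _ _ => rfl, fun _ _ => rfl⟩

lemma cutDist_nonneg (U W : ℝ → ℝ → ℝ) : 0 ≤ cutDist U W := by
  apply Real.sInf_nonneg
  rintro _ ⟨φ, -, rfl⟩
  exact cutNorm_nonneg _

lemma cutDist_le {U W : ℝ → ℝ → ℝ} {φ : ℝ → ℝ} (h : IsInvMeasurePreserving φ) :
    cutDist U W ≤ cutNorm (fun x y => U x y - W (φ x) (φ y)) := by
  apply csInf_le
  · refine ⟨0, ?_⟩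
    rintro _ ⟨φ, -, rfl⟩
    exact cutNorm_nonneg _
  · exact ⟨φ, h, rfl⟩

lemma exists_of_cutDist_lt {U W : ℝ → ℝ → ℝ} {r : ℝ} (h : cutDist U W < r) :
    ∃ φ, IsInvMeasurePreserving φ ∧ cutNorm (fun x y => U x y - W (φ x) (φ y)) < r := by
  obtain ⟨_, ⟨φ, h1, rfl⟩, h2⟩ := exists_lt_of_csInf_lt (s := { r : ℝ | ∃ φ : ℝ → ℝ,
    IsInvMeasurePreserving φ ∧ r = cutNorm (fun x y => U x y - W (φ x) (φ y)) })
    ⟨_, _, isInv_id, rfl⟩ h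
  exact ⟨φ, h1, h2⟩

lemma cutDist_le_two {U V : ℝ → ℝ → ℝ} {C D : ℝ} (hU : Ker U C) (hV : Ker V D) {φ ψ : ℝ → ℝ}
    (hφ : IsInvMeasurePreserving φ) (hψ : IsInvMeasurePreserving ψ) :
    cutDist U V ≤ cutNorm (fun x y => U (φ x) (φ y) - V (ψ x) (ψ y)) := by
  obtain ⟨h1, h2, φ', h3, h4, h5, h6⟩ := id hφ
  have hφ' : IsInvMeasurePreserving φ' := ⟨h3, h4, φ, h1, h2, h6, h5⟩
  refine (cutDist_le (hψ.comp hφ')).trans ?_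
  refine le_trans (le_of_eq ?_)
    (cutNorm_comp_le ((hU.comp h2.measurable).sub (hV.comp hψ.2.1.measurable)) hφ')
  apply cutNorm_congr
  intro x hx y hy
  simp only [h6 x ⟨hx.1, hx.2.le⟩, h6 y ⟨hy.1, hy.2.le⟩]

lemma cutDist_comm_le {U V : ℝ → ℝ → ℝ} {C D : ℝ} (hU : Ker U C) (hV : Ker V D) :
    cutDist U V ≤ cutDist V U := by
  apply le_of_forall_pos_lt_add
  intro ε hε
  obtain ⟨φ, h1, h2⟩ := exists_of_cutDist_lt (show cutDist V U < cutDist V U + ε by linarith)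
  refine (cutDist_le_two hU hV h1 isInv_id).trans_lt ?_
  rwa [cutNorm_sub_comm]

lemma cutDist_triangle {U V W : ℝ → ℝ → ℝ} {C D E : ℝ} (hU : Ker U C) (hV : Ker V D)
    (hW : Ker W E) : cutDist U W ≤ cutDist U V + cutDist V W := by
  apply le_of_forall_pos_lt_add
  intro ε hε
  obtain ⟨φ, h1, h2⟩ :=
    exists_of_cutDist_lt (show cutDist U V < cutDist U V + ε / 2 by linarith)
  obtain ⟨ψ, k1, k2⟩ :=
    exists_of_cutDist_lt (show cutDist V W < cutDist V W + ε / 2 by linarith)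
  have a := cutDist_le (U := U) (W := W) (k1.comp h1)
  have b := cutNorm_comp_le (hV.sub (hW.comp k1.2.1.measurable)) h1
  have c := cutNorm_add_le (hU.sub (hV.comp h1.2.1.measurable))
    ((hV.sub (hW.comp k1.2.1.measurable)).comp h1.2.1.measurable)
  simp only [sub_add_sub_cancel] at c
  linarith


instance instProbMu01 : IsProbabilityMeasure μ01 := ⟨by simp⟩

lemma exists_set_abs_le {h a : ℝ → ℝ} {C : ℝ} (hh : Measurable h) (hC : ∀ x, |h x| ≤ C)
    (ha : Measurable a) (ha' : ∀ x, a x ∈ Icc (0:ℝ) 1) :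
    ∃ S : Set ℝ, MeasurableSet S ∧ S ⊆ Icc (0:ℝ) 1 ∧
      |∫ x, a x * h x ∂μ01| ≤ |∫ x in S, h x| := by
  have hab : ∀ x, |a x| ≤ 1 := fun x => abs_le.2 ⟨by linarith [(ha' x).1], (ha' x).2⟩
  have iah : Integrable (fun x => a x * h x) μ01 :=
    integrable_bdd (ha.mul hh) C (fun x => by
      rw [abs_mul]
      calc |a x| * |h x| ≤ 1 * C :=
            mul_le_mul (hab x) (hC x) (abs_nonneg _) zero_le_one
        _ = C := one_mul C)
  have ih : Integrable h μ01 := integrable_bdd hh C hC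
  have e1 : ∀ (S : Set ℝ), MeasurableSet S →
      ∫ x in (S ∩ Icc (0:ℝ) 1), h x = ∫ x, S.indicator h x ∂μ01 := by
    intro S hS
    rw [integral_indicator hS, Measure.restrict_restrict hS]
  have mp : MeasurableSet {x | 0 < h x} := measurableSet_lt measurable_const hh
  have mn : MeasurableSet {x | h x < 0} := measurableSet_lt hh measurable_const
  have up : ∫ x, a x * h x ∂μ01 ≤ ∫ x in ({x | 0 < h x} ∩ Icc (0:ℝ) 1), h x := by
    rw [e1 _ mp]
    refine integral_mono iah (ih.indicator mp) (fun x => ?_)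
    have := ha' x
    by_cases hx : 0 < h x
    · rw [indicator_of_mem (by exact hx)]
      exact mul_le_of_le_one_left hx.le this.2
    · rw [indicator_of_notMem (by exact hx)]
      exact mul_nonpos_of_nonneg_of_nonpos this.1 (not_lt.1 hx)
  have lo : ∫ x in ({x | h x < 0} ∩ Icc (0:ℝ) 1), h x ≤ ∫ x, a x * h x ∂μ01 := by
    rw [e1 _ mn]
    refine integral_mono (ih.indicator mn) iah (fun x => ?_)
    have := ha' x
    by_cases hx : h x < 0
    · rw [indicator_of_mem (by exact hx)]
      simp only
      nlinarith [this.1, this.2]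
    · rw [indicator_of_notMem (by exact hx)]
      exact mul_nonneg this.1 (not_lt.1 hx)
  rcases le_total 0 (∫ x, a x * h x ∂μ01) with h0 | h0
  · refine ⟨_, mp.inter measurableSet_Icc, inter_subset_right, ?_⟩
    rw [abs_of_nonneg h0]
    exact up.trans (le_abs_self _)
  · refine ⟨_, mn.inter measurableSet_Icc, inter_subset_right, ?_⟩
    rw [abs_of_nonpos h0]
    exact (neg_le_neg lo).trans (neg_le_abs _)

lemma abs_int_ab_le {D : ℝ → ℝ → ℝ} {C : ℝ} (hD : Ker D C) {a b : ℝ → ℝ}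
    (ha : Measurable a) (ha' : ∀ x, a x ∈ Icc (0:ℝ) 1)
    (hb : Measurable b) (hb' : ∀ x, b x ∈ Icc (0:ℝ) 1) :
    |∫ x, ∫ y, a x * (b y * D x y) ∂μ01 ∂μ01| ≤ cutNorm D := by
  have hbD : Ker (fun x y => b y * D x y) C := by
    refine ⟨(hb.comp measurable_snd).mul hD.1, fun x y => ?_⟩
    rw [abs_mul, abs_of_nonneg (hb' y).1]
    exact (mul_le_of_le_one_left (abs_nonneg _) (hb' y).2).trans (hD.2 x y)
  have hDs : Ker (fun x y => D y x) C := ⟨hD.1.comp measurable_swap, fun x y => hD.2 y x⟩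
  simp only [integral_const_mul]
  obtain ⟨S, hS, hS', h1⟩ := exists_set_abs_le (hbD.meas_int μ01) (C := C)
    (fun x => abs_int_le hD.nonneg (hbD.2 x) subset_rfl) ha ha'
  refine h1.trans ?_
  have := isFin_of_sub hS'
  rw [integral_integral_swap]
  · simp only [integral_const_mul]
    obtain ⟨T, hT, hT', h2⟩ := exists_set_abs_le (hDs.meas_int (volume.restrict S)) (C := C)
      (fun x => abs_int_le hD.nonneg (hDs.2 x) hS') hb hb'
    refine h2.trans ?_
    have := isFin_of_sub hT'
    rw [integral_integral_swap]
    · exact le_cutNorm hD hS hT hS' hT'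
    · exact integrable_bdd hDs.1 C (fun p => hDs.2 _ _)
  · exact integrable_bdd hbD.1 C (fun p => hbD.2 _ _)

lemma meas_pair {n : ℕ} (i j : Fin n) : Measurable (fun x : Fin n → ℝ => (x i, x j)) := by
  fun_prop

/-- product measure on the cube -/
noncomputable abbrev pm (n : ℕ) : Measure (Fin n → ℝ) := Measure.pi (fun _ => μ01)

lemma meas_upd {n : ℕ} (i : Fin n) :
    Measurable (fun q : (Fin n → ℝ) × ℝ => Function.update q.1 i q.2) := by
  rw [measurable_pi_iff]
  intro j
  by_cases h : j = i
  · subst h; simpa using measurable_snd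
  · simp only [Function.update_of_ne h]; fun_prop

lemma mp_upd {n : ℕ} (i : Fin n) :
    MeasurePreserving (fun q : (Fin n → ℝ) × ℝ => Function.update q.1 i q.2)
      ((pm n).prod μ01) (pm n) := by
  refine ⟨meas_upd i, ?_⟩
  symm
  apply Measure.pi_eq
  intro s hs
  rw [Measure.map_apply (meas_upd i) (MeasurableSet.univ_pi hs)]
  have : (fun q : (Fin n → ℝ) × ℝ => Function.update q.1 i q.2) ⁻¹' (univ.pi s) =
      (univ.pi (Function.update s i univ)) ×ˢ (s i) := by
    ext ⟨x, u⟩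
    simp only [mem_preimage, Set.mem_pi, mem_univ, true_imp_iff, mem_prod]
    constructor
    · intro h
      refine ⟨fun j => ?_, by simpa using h i⟩
      by_cases hj : j = i
      · subst hj; simp
      · simpa [Function.update_of_ne hj] using h j
    · rintro ⟨h, h'⟩ j
      by_cases hj : j = i
      · subst hj; simpa using h'
      · simpa [Function.update_of_ne hj] using h j
  rw [this, Measure.prod_prod, Measure.pi_pi, ← Finset.prod_erase_mul _ _ (Finset.mem_univ i),
    ← Finset.prod_erase_mul (a := i) Finset.univ (fun j => μ01 (s j)) (Finset.mem_univ i)]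
  simp only [Function.update_self, measure_univ, mul_one]
  congr 1
  apply Finset.prod_congr rfl
  intro j hj
  rw [Function.update_of_ne (Finset.ne_of_mem_erase hj)]

lemma integral_upd {n : ℕ} (i : Fin n) {f : (Fin n → ℝ) → ℝ} (hf : Measurable f) {C : ℝ}
    (hC : ∀ x, |f x| ≤ C) :
    ∫ x, f x ∂(pm n) = ∫ x, ∫ u, f (Function.update x i u) ∂μ01 ∂(pm n) := by
  conv_lhs => rw [← (mp_upd i).map_eq]
  rw [integral_map (meas_upd i).aemeasurable hf.aestronglyMeasurable, integral_prod]
  exact integrable_bdd (hf.comp (meas_upd i)) C (fun _ => hC _)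

lemma edge_bound {n : ℕ} {i j : Fin n} (hij : i ≠ j) {D : ℝ → ℝ → ℝ} {C : ℝ} (hD : Ker D C)
    {a b : (Fin n → ℝ) → ℝ} (ha : Measurable a) (ha' : ∀ x, a x ∈ Icc (0:ℝ) 1)
    (hb : Measurable b) (hb' : ∀ x, b x ∈ Icc (0:ℝ) 1)
    (haj : ∀ x v, a (Function.update x j v) = a x)
    (hbi : ∀ x u, b (Function.update x i u) = b x) :
    |∫ x, a x * (b x * D (x i) (x j)) ∂(pm n)| ≤ cutNorm D := by
  have hDm : Measurable (fun x : Fin n → ℝ => D (x i) (x j)) :=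
    hD.1.comp (meas_pair i j)
  have hfm : Measurable (fun x => a x * (b x * D (x i) (x j))) := ha.mul (hb.mul hDm)
  have hfC : ∀ x, |a x * (b x * D (x i) (x j))| ≤ C := by
    intro x
    rw [abs_mul, abs_mul, abs_of_nonneg (ha' x).1, abs_of_nonneg (hb' x).1]
    exact (mul_le_of_le_one_left (by have := (hb' x).1; positivity) (ha' x).2).trans
      ((mul_le_of_le_one_left (abs_nonneg _) (hb' x).2).trans (hD.2 _ _))
  have m2 : ∀ x : Fin n → ℝ, Measurable (fun v : ℝ => Function.update x j v) :=
    fun x => (meas_upd j).comp measurable_prodMk_left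
  have m2i : ∀ x : Fin n → ℝ, Measurable (fun v : ℝ => Function.update x i v) :=
    fun x => (meas_upd i).comp measurable_prodMk_left
  set g : (Fin n → ℝ) → ℝ := fun x => ∫ v, a (Function.update x j v) *
    (b (Function.update x j v) * D ((Function.update x j v) i) ((Function.update x j v) j)) ∂μ01
    with hg
  have hgm : Measurable g :=
    ((hfm.comp (meas_upd j)).stronglyMeasurable.integral_prod_right').measurable
  have hgC : ∀ x, |g x| ≤ C := fun x => abs_int_le hD.nonneg (fun v => hfC _) subset_rfl
  rw [integral_upd j hfm hfC, integral_upd i hgm hgC]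
  have key : ∀ x, |∫ u, g (Function.update x i u) ∂μ01| ≤ cutNorm D := by
    intro x
    have h := abs_int_ab_le hD (a := fun u => a (Function.update x i u))
      (b := fun v => b (Function.update x j v)) (ha.comp (m2i x)) (fun _ => ha' _)
      (hb.comp (m2 x)) (fun _ => hb' _)
    refine le_of_eq_of_le ?_ h
    congr 2; ext u
    simp only [hg]
    congr 1; ext v
    rw [haj, Function.update_self, Function.update_of_ne hij, Function.update_self,
      Function.update_comm hij, hbi]
  have := norm_integral_le_of_norm_le_const (μ := pm n)
    (f := fun x => ∫ u, g (Function.update x i u) ∂μ01) (Eventually.of_forall key)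
  simpa using this

/-- density of an edge set -/
noncomputable def tS {n : ℕ} (S : Finset (Fin n × Fin n)) (W : ℝ → ℝ → ℝ) : ℝ :=
  ∫ x, (∏ p ∈ S, W (x p.1) (x p.2)) ∂(pm n)

lemma graphon_prod_meas {n : ℕ} {W : ℝ → ℝ → ℝ} (hW : IsGraphon W)
    (S : Finset (Fin n × Fin n)) :
    Measurable (fun x : Fin n → ℝ => ∏ p ∈ S, W (x p.1) (x p.2)) :=
  Finset.measurable_prod _ fun p _ =>
    hW.1.comp (meas_pair p.1 p.2)

lemma graphon_prod_mem {n : ℕ} {W : ℝ → ℝ → ℝ} (hW : IsGraphon W)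
    (S : Finset (Fin n × Fin n)) (x : Fin n → ℝ) :
    ∏ p ∈ S, W (x p.1) (x p.2) ∈ Icc (0:ℝ) 1 :=
  ⟨Finset.prod_nonneg fun _ _ => (hW.2.2 _ _).1,
    Finset.prod_le_one (fun _ _ => (hW.2.2 _ _).1) (fun _ _ => (hW.2.2 _ _).2)⟩

lemma prod_upd {n : ℕ} (W : ℝ → ℝ → ℝ) (S : Finset (Fin n × Fin n)) (j : Fin n)
    (h : ∀ p ∈ S, p.1 ≠ j ∧ p.2 ≠ j) (x : Fin n → ℝ) (v : ℝ) :
    ∏ p ∈ S, W (Function.update x j v p.1) (Function.update x j v p.2) =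
      ∏ p ∈ S, W (x p.1) (x p.2) := by
  apply Finset.prod_congr rfl
  intro p hp
  rw [Function.update_of_ne (h p hp).1, Function.update_of_ne (h p hp).2]

lemma Icc_mul {a b : ℝ} (ha : a ∈ Icc (0:ℝ) 1) (hb : b ∈ Icc (0:ℝ) 1) : a * b ∈ Icc (0:ℝ) 1 :=
  ⟨mul_nonneg ha.1 hb.1, mul_le_one₀ ha.2 hb.1 hb.2⟩

lemma counting_aux {n : ℕ} {U W : ℝ → ℝ → ℝ} (hU : IsGraphon U) (hW : IsGraphon W)
    (S : Finset (Fin n × Fin n)) : ∀ T : Finset (Fin n × Fin n), (∀ p ∈ S, p.1 < p.2) →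
    (∀ p ∈ T, p.1 < p.2) → Disjoint S T →
    |∫ x, ((∏ p ∈ S, U (x p.1) (x p.2)) * ∏ p ∈ T, W (x p.1) (x p.2)) ∂(pm n) -
      ∫ x, ((∏ p ∈ S, W (x p.1) (x p.2)) * ∏ p ∈ T, W (x p.1) (x p.2)) ∂(pm n)| ≤
      S.card * cutNorm (fun x y => U x y - W x y) := by
  have I : ∀ {A B : ℝ → ℝ → ℝ} (_ : IsGraphon A) (_ : IsGraphon B)
      (S T : Finset (Fin n × Fin n)), Integrable (fun x : Fin n → ℝ =>
        (∏ p ∈ S, A (x p.1) (x p.2)) * ∏ p ∈ T, B (x p.1) (x p.2)) (pm n) := by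
    intro A B hA hB S T
    refine integrable_bdd ((graphon_prod_meas hA S).mul (graphon_prod_meas hB T)) 1 (fun x => ?_)
    have := Icc_mul (graphon_prod_mem hA S x) (graphon_prod_mem hB T x)
    exact abs_le.2 ⟨by linarith [this.1], this.2⟩
  induction S using Finset.induction_on with
  | empty => intro T _ _ _; simp
  | insert q S hq ih =>
    intro T hS hT hST
    have hqS := hS q (Finset.mem_insert_self _ _)
    have hS' : ∀ p ∈ S, p.1 < p.2 := fun p hp => hS p (Finset.mem_insert_of_mem hp)
    have hqT : q ∉ T := Finset.disjoint_left.1 hST (Finset.mem_insert_self _ _)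
    have hT' : ∀ p ∈ insert q T, p.1 < p.2 := by
      intro p hp
      rcases Finset.mem_insert.1 hp with rfl | h
      · exact hqS
      · exact hT p h
    have hd : Disjoint S (insert q T) := by
      rw [Finset.disjoint_insert_right]
      exact ⟨hq, Finset.disjoint_of_subset_left (Finset.subset_insert _ _) hST⟩
    have h2 := ih (insert q T) hS' hT' hd
    have h1 : |∫ x, ((∏ p ∈ insert q S, U (x p.1) (x p.2)) *
          ∏ p ∈ T, W (x p.1) (x p.2)) ∂(pm n) -
        ∫ x, ((∏ p ∈ S, U (x p.1) (x p.2)) *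
          ∏ p ∈ insert q T, W (x p.1) (x p.2)) ∂(pm n)| ≤
        cutNorm (fun x y => U x y - W x y) := by
      rw [← integral_sub (I hU hW _ _) (I hU hW _ _)]
      set P : Fin n × Fin n → Prop := fun p => p.1 = q.2 ∨ p.2 = q.2 with hP
      classical
      have := edge_bound (i := q.1) (j := q.2) hqS.ne (hU.ker.sub hW.ker)
        (a := fun x => (∏ p ∈ S.filter (fun p => ¬ P p), U (x p.1) (x p.2)) *
          ∏ p ∈ T.filter (fun p => ¬ P p), W (x p.1) (x p.2))
        (b := fun x => (∏ p ∈ S.filter P, U (x p.1) (x p.2)) *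
          ∏ p ∈ T.filter P, W (x p.1) (x p.2))
        ((graphon_prod_meas hU _).mul (graphon_prod_meas hW _))
        (fun x => Icc_mul (graphon_prod_mem hU _ x) (graphon_prod_mem hW _ x))
        ((graphon_prod_meas hU _).mul (graphon_prod_meas hW _))
        (fun x => Icc_mul (graphon_prod_mem hU _ x) (graphon_prod_mem hW _ x))
        ?_ ?_
      · refine le_of_eq_of_le ?_ this
        congr 2; ext x
        rw [Finset.prod_insert hq, Finset.prod_insert hqT,
          ← Finset.prod_filter_mul_prod_filter_not S P,
          ← Finset.prod_filter_mul_prod_filter_not T P]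
        ring
      · intro x v
        rw [prod_upd, prod_upd] <;>
        · intro p hp
          have := (Finset.mem_filter.1 hp).2
          simpa [hP, not_or] using this
      · intro x v
        have aux : ∀ R : Finset (Fin n × Fin n), q ∉ R → (∀ p ∈ R, p.1 < p.2) →
            ∀ p ∈ R.filter P, p.1 ≠ q.1 ∧ p.2 ≠ q.1 := by
          intro R hqR hR p hp
          obtain ⟨hpR, hp2⟩ := Finset.mem_filter.1 hp
          have hlt := hR p hpR
          have hne : p ≠ q := fun h => hqR (h ▸ hpR)
          rcases hp2 with h | h
          · constructor
            · rw [h]; exact hqS.ne'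
            · exact (hqS.trans (h ▸ hlt)).ne'
          · constructor
            · intro h'; exact hne (Prod.ext h' h)
            · rw [h]; exact hqS.ne'
        rw [prod_upd _ _ _ (aux S hq hS'), prod_upd _ _ _ (aux T hqT hT)]
    have h3 : ∫ x, ((∏ p ∈ S, W (x p.1) (x p.2)) *
          ∏ p ∈ insert q T, W (x p.1) (x p.2)) ∂(pm n) =
        ∫ x, ((∏ p ∈ insert q S, W (x p.1) (x p.2)) *
          ∏ p ∈ T, W (x p.1) (x p.2)) ∂(pm n) := by
      congr 1; ext x
      rw [Finset.prod_insert hq, Finset.prod_insert hqT]; ring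
    rw [h3] at h2
    rw [Finset.card_insert_of_notMem hq]
    push_cast
    have := (abs_sub_le _ _ _).trans (add_le_add h1 h2)
    linarith

lemma counting {n : ℕ} {U W : ℝ → ℝ → ℝ} (hU : IsGraphon U) (hW : IsGraphon W)
    (S : Finset (Fin n × Fin n)) (hS : ∀ p ∈ S, p.1 < p.2) :
    |tS S U - tS S W| ≤ S.card * cutNorm (fun x y => U x y - W x y) := by
  have := counting_aux hU hW S ∅ hS (by simp) (by simp)
  simpa [tS] using this

lemma IsGraphon.comp {W : ℝ → ℝ → ℝ} (hW : IsGraphon W) {φ : ℝ → ℝ} (hφ : Measurable φ) :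
    IsGraphon (fun x y => W (φ x) (φ y)) :=
  ⟨(hW.ker.comp hφ).1, fun _ _ => hW.2.1 _ _, fun _ _ => hW.2.2 _ _⟩

lemma tS_comp {n : ℕ} {W : ℝ → ℝ → ℝ} (hW : IsGraphon W) {φ : ℝ → ℝ}
    (hφ : IsInvMeasurePreserving φ) (S : Finset (Fin n × Fin n)) :
    tS S (fun x y => W (φ x) (φ y)) = tS S W := by
  have h := measurePreserving_pi (fun _ : Fin n => μ01) (fun _ => μ01) (f := fun _ => φ)
    (fun _ => hφ.2.1)
  unfold tS
  conv_rhs => rw [pm, ← h.map_eq]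
  rw [integral_map h.measurable.aemeasurable (graphon_prod_meas hW S).aestronglyMeasurable]

lemma counting_dist {n : ℕ} {U W : ℝ → ℝ → ℝ} (hU : IsGraphon U) (hW : IsGraphon W)
    (S : Finset (Fin n × Fin n)) (hS : ∀ p ∈ S, p.1 < p.2) :
    |tS S U - tS S W| ≤ S.card * cutDist U W := by
  apply le_of_forall_pos_le_add
  intro ε hε
  have hc : (0:ℝ) < S.card + 1 := by positivity
  obtain ⟨φ, h1, h2⟩ := exists_of_cutDist_lt
    (show cutDist U W < cutDist U W + ε / (S.card + 1) by have := div_pos hε hc; linarith)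
  have := counting hU (hW.comp h1.2.1.measurable) S hS
  rw [tS_comp hW h1] at this
  refine this.trans ?_
  calc (S.card:ℝ) * _ ≤ S.card * (cutDist U W + ε / (S.card + 1)) := by gcongr
    _ = S.card * cutDist U W + S.card / (S.card + 1) * ε := by ring
    _ ≤ S.card * cutDist U W + 1 * ε := by
        gcongr
        rw [div_le_one hc]; linarith
    _ = _ := by ring


/-- index of the interval of length `1/n` containing `x` -/
noncomputable def idx (n : ℕ) [NeZero n] (x : ℝ) : Fin n :=
  ⟨min ⌊(n:ℝ) * x⌋₊ (n - 1), by have := NeZero.pos n; omega⟩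

lemma npos (n : ℕ) [NeZero n] : (0:ℝ) < n := by exact_mod_cast NeZero.pos n

lemma idx_val {n : ℕ} [NeZero n] {x : ℝ} (hx : x ∈ Ico (0:ℝ) 1) :
    (idx n x).val = ⌊(n:ℝ) * x⌋₊ := by
  have hn := npos n
  have : ⌊(n:ℝ) * x⌋₊ < n := by
    rw [Nat.floor_lt (mul_nonneg hn.le hx.1)]
    nlinarith [hx.2]
  simp only [idx]; omega

lemma idx_eq_iff {n : ℕ} [NeZero n] {x : ℝ} (hx : x ∈ Ico (0:ℝ) 1) (i : Fin n) :
    idx n x = i ↔ x ∈ Ico (((i : ℕ) : ℝ) / n) ((((i : ℕ) : ℝ) + 1) / n) := by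
  have hn := npos n
  rw [Fin.ext_iff, idx_val hx, Nat.floor_eq_iff (mul_nonneg hn.le hx.1), mem_Ico, div_le_iff₀ hn,
    lt_div_iff₀ hn, mul_comm x]

lemma meas_idx (n : ℕ) [NeZero n] : Measurable (idx n) := by
  have h : Measurable (fun x : ℝ => min ⌊(n:ℝ) * x⌋₊ (n - 1)) := by
    have : Measurable (fun x : ℝ => ⌊(n:ℝ) * x⌋₊) :=
      Nat.measurable_floor.comp (measurable_const_mul _)
    exact this.min measurable_const
  refine measurable_to_countable' fun i => ?_
  have : idx n ⁻¹' {i} = (fun x : ℝ => min ⌊(n:ℝ) * x⌋₊ (n - 1)) ⁻¹' {i.val} := by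
    ext x; simp [idx, Fin.ext_iff]
  rw [this]
  exact h (measurableSet_singleton _)

lemma mu01_eq : μ01 = volume.restrict (Ico (0:ℝ) 1) :=
  Measure.restrict_congr_set Ico_ae_eq_Icc.symm

/-- the intervals -/
def J (n : ℕ) (i : Fin n) : Set ℝ := Ico (((i : ℕ) : ℝ) / n) ((((i : ℕ) : ℝ) + 1) / n)

lemma J_sub {n : ℕ} [NeZero n] (i : Fin n) : J n i ⊆ Ico (0:ℝ) 1 := by
  have hn := npos n
  intro x hx
  refine ⟨le_trans (by positivity) hx.1, hx.2.trans_le ?_⟩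
  rw [div_le_one hn]
  exact_mod_cast i.2

lemma mem_J_iff {n : ℕ} [NeZero n] {x : ℝ} {i : Fin n} :
    x ∈ J n i ↔ x ∈ Ico (0:ℝ) 1 ∧ idx n x = i :=
  ⟨fun h => ⟨J_sub i h, (idx_eq_iff (J_sub i h) i).2 h⟩, fun h => (idx_eq_iff h.1 i).1 h.2⟩

lemma preimage_idx {n : ℕ} [NeZero n] (i : Fin n) : idx n ⁻¹' {i} ∩ Ico (0:ℝ) 1 = J n i := by
  ext x; rw [mem_J_iff]; simp [and_comm]

lemma vol_J {n : ℕ} [NeZero n] (i : Fin n) : volume (J n i) = ENNReal.ofReal (1 / n) := by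
  rw [J, Real.volume_Ico]; congr 1; ring

lemma map_idx {n : ℕ} [NeZero n] (i : Fin n) :
    (μ01.map (idx n)) {i} = ENNReal.ofReal (1 / n) := by
  rw [Measure.map_apply (meas_idx n) (measurableSet_singleton _), mu01_eq,
    Measure.restrict_apply (meas_idx n (measurableSet_singleton _)), preimage_idx, vol_J]

lemma int_idx (n : ℕ) [NeZero n] {S : Set ℝ} (hS' : S ⊆ Icc (0:ℝ) 1) :
    ∃ s : Fin n → ℝ, (∀ i, 0 ≤ s i ∧ s i ≤ 1 / n) ∧
      ∀ f : Fin n → ℝ, ∫ x in S, f (idx n x) = ∑ i, f i * s i := by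
  have := isFin_of_sub hS'
  refine ⟨fun i => ((volume.restrict S).map (idx n)).real {i}, fun i => ⟨measureReal_nonneg, ?_⟩,
    fun f => ?_⟩
  · simp only [measureReal_def]
    refine ENNReal.toReal_le_of_le_ofReal (by positivity) ?_
    rw [← map_idx i, Measure.map_apply (meas_idx n) (measurableSet_singleton _),
      Measure.map_apply (meas_idx n) (measurableSet_singleton _)]
    exact Measure.restrict_mono hS' le_rfl _
  · have h := integral_map (μ := volume.restrict S) (meas_idx n).aemeasurable
      (f := f) (measurable_of_finite f).aestronglyMeasurable
    rw [← h]
    have := Measure.isFiniteMeasure_map (volume.restrict S) (idx n)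
    rw [integral_fintype (integrable_bdd (measurable_of_finite f) (∑ i, |f i|)
      (fun i => Finset.single_le_sum (f := fun i => |f i|) (fun i _ => abs_nonneg _)
        (Finset.mem_univ i)))]
    simp [mul_comm]

/-- step kernel of a matrix -/
noncomputable def step {n : ℕ} [NeZero n] (A : Fin n → Fin n → ℝ) (x y : ℝ) : ℝ :=
  A (idx n x) (idx n y)

lemma step_meas {n : ℕ} [NeZero n] (A : Fin n → Fin n → ℝ) :
    Measurable (Function.uncurry (step A)) := by
  have : Function.uncurry (step A) =
      (Function.uncurry A) ∘ (fun p : ℝ × ℝ => (idx n p.1, idx n p.2)) := by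
    ext ⟨x, y⟩; rfl
  rw [this]
  exact (measurable_of_finite _).comp
    (((meas_idx n).comp measurable_fst).prodMk ((meas_idx n).comp measurable_snd))

lemma step_ker {n : ℕ} [NeZero n] {A : Fin n → Fin n → ℝ} {C : ℝ} (h : ∀ i j, |A i j| ≤ C) :
    Ker (step A) C := ⟨step_meas A, fun _ _ => h _ _⟩

/-- matrices with entries in `[0,1]`, symmetric -/
def SymMat {n : ℕ} (A : Fin n → Fin n → ℝ) : Prop :=
  (∀ i j, A i j = A j i) ∧ ∀ i j, A i j ∈ Icc (0:ℝ) 1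

lemma step_graphon {n : ℕ} [NeZero n] {A : Fin n → Fin n → ℝ} (h : SymMat A) :
    IsGraphon (step A) := ⟨step_meas A, fun _ _ => h.1 _ _, fun _ _ => h.2 _ _⟩

/-- fourth power of the (unnormalised) `C4` norm -/
def Q4 {n : ℕ} (D : Fin n → Fin n → ℝ) : ℝ := ∑ j, ∑ j', (∑ i, D i j * D i j') ^ 2

lemma Q4_nonneg {n : ℕ} (D : Fin n → Fin n → ℝ) : 0 ≤ Q4 D :=
  Finset.sum_nonneg fun _ _ => Finset.sum_nonneg fun _ _ => sq_nonneg _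

lemma Q4_perm {n : ℕ} (D : Fin n → Fin n → ℝ) (σ : Equiv.Perm (Fin n)) :
    Q4 (fun i j => D (σ i) (σ j)) = Q4 D := by
  unfold Q4
  rw [← Equiv.sum_comp σ (fun j => ∑ j', (∑ i, D i j * D i j') ^ 2)]
  refine Finset.sum_congr rfl fun j _ => ?_
  rw [← Equiv.sum_comp σ (fun j' => (∑ i, D i (σ j) * D i j') ^ 2)]
  refine Finset.sum_congr rfl fun j' _ => ?_
  rw [← Equiv.sum_comp σ (fun i => D i (σ j) * D i (σ j'))]

lemma sum_sq_le {n : ℕ} {s : Fin n → ℝ} (hs : ∀ i, 0 ≤ s i ∧ s i ≤ 1 / n) :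
    ∑ i, s i ^ 2 ≤ 1 / n := by
  rcases Nat.eq_zero_or_pos n with rfl | hn
  · simp
  have hn' : (0:ℝ) < n := by exact_mod_cast hn
  calc ∑ i, s i ^ 2 ≤ ∑ i : Fin n, (1 / (n:ℝ)) ^ 2 :=
        Finset.sum_le_sum fun i _ => pow_le_pow_left₀ (hs i).1 (hs i).2 2
    _ = 1 / n := by simp; field_simp

lemma cut_C4 {n : ℕ} (D : Fin n → Fin n → ℝ) {s t : Fin n → ℝ}
    (hs : ∀ i, 0 ≤ s i ∧ s i ≤ 1 / n) (ht : ∀ i, 0 ≤ t i ∧ t i ≤ 1 / n) :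
    (∑ i, (∑ j, D i j * t j) * s i) ^ 4 ≤ Q4 D / (n:ℝ) ^ 4 := by
  have h1 : (∑ i, (∑ j, D i j * t j) * s i) ^ 2 ≤ (∑ i, (∑ j, D i j * t j) ^ 2) * (1 / n) :=
    (Finset.sum_mul_sq_le_sq_mul_sq _ _ _).trans
      (mul_le_mul_of_nonneg_left (sum_sq_le hs) (Finset.sum_nonneg fun _ _ => sq_nonneg _))
  have h2 : ∑ i, (∑ j, D i j * t j) ^ 2 =
      ∑ p : Fin n × Fin n, (∑ i, D i p.1 * D i p.2) * (t p.1 * t p.2) := by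
    rw [Fintype.sum_prod_type]
    simp only [sq, Finset.sum_mul, Finset.mul_sum]
    rw [Finset.sum_comm]
    refine Finset.sum_congr rfl fun j _ => ?_
    rw [Finset.sum_comm]
    refine Finset.sum_congr rfl fun j' _ => Finset.sum_congr rfl fun i _ => ?_
    ring
  have h3 : (∑ i, (∑ j, D i j * t j) ^ 2) ^ 2 ≤ Q4 D * ((1 / n) * (1 / n)) := by
    rw [h2]
    refine (Finset.sum_mul_sq_le_sq_mul_sq _ _ _).trans ?_
    rw [Fintype.sum_prod_type]
    refine mul_le_mul_of_nonneg_left ?_ (Q4_nonneg D)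
    rw [Fintype.sum_prod_type]
    simp only [mul_pow, ← Finset.sum_mul_sum]
    exact mul_le_mul (sum_sq_le ht) (sum_sq_le ht) (Finset.sum_nonneg fun _ _ => sq_nonneg _)
      (by positivity)
  calc (∑ i, (∑ j, D i j * t j) * s i) ^ 4 = ((∑ i, (∑ j, D i j * t j) * s i) ^ 2) ^ 2 := by ring
    _ ≤ ((∑ i, (∑ j, D i j * t j) ^ 2) * (1 / n)) ^ 2 := pow_le_pow_left₀ (sq_nonneg _) h1 2
    _ = (∑ i, (∑ j, D i j * t j) ^ 2) ^ 2 * (1 / n) ^ 2 := by ring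
    _ ≤ (Q4 D * ((1 / n) * (1 / n))) * (1 / n) ^ 2 := by gcongr
    _ = Q4 D / (n:ℝ) ^ 4 := by field_simp

lemma cutNorm_step_le {n : ℕ} [NeZero n] (D : Fin n → Fin n → ℝ) {r : ℝ} (hr : 0 ≤ r)
    (h : Q4 D / (n:ℝ) ^ 4 ≤ r ^ 4) : cutNorm (step D) ≤ r := by
  apply cutNorm_le
  intro S T hS hT hS' hT'
  obtain ⟨s, hs, hs2⟩ := int_idx n hS'
  obtain ⟨t, ht, ht2⟩ := int_idx n hT'
  have : ∫ x in S, ∫ y in T, step D x y = ∑ i, (∑ j, D i j * t j) * s i := by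
    rw [← hs2]
    congr 1; ext x
    exact ht2 (fun j => D (idx n x) j)
  rw [this]
  refine le_of_pow_le_pow_left₀ (n := 4) (by norm_num) hr ?_
  rw [Even.pow_abs (by decide)]
  exact (cut_C4 D hs ht).trans h

/-! ### permuting intervals -/

lemma mu01_sum {n : ℕ} [NeZero n] {s : Set ℝ} (hs : MeasurableSet s) :
    μ01 s = ∑ i : Fin n, volume (s ∩ J n i) := by
  rw [mu01_eq, Measure.restrict_apply hs]
  have : s ∩ Ico (0:ℝ) 1 = ⋃ i : Fin n, s ∩ J n i := by
    ext x
    simp only [mem_inter_iff, mem_iUnion, mem_J_iff (n := n)]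
    constructor
    · rintro ⟨h1, h2⟩; exact ⟨_, h1, h2, rfl⟩
    · rintro ⟨i, h1, h2, -⟩; exact ⟨h1, h2⟩
  rw [this, measure_iUnion, tsum_fintype]
  · intro i j hij
    refine Set.disjoint_left.2 fun x hx hx' => hij ?_
    rw [← (mem_J_iff.1 hx.2).2, ← (mem_J_iff.1 hx'.2).2]
  · exact fun i => hs.inter measurableSet_Ico

open scoped Classical in
/-- the interval permutation -/
noncomputable def perm {n : ℕ} [NeZero n] (σ : Equiv.Perm (Fin n)) (x : ℝ) : ℝ :=
  if x ∈ Ico (0:ℝ) 1 then x + (((σ (idx n x) : ℕ) : ℝ) - ((idx n x : ℕ) : ℝ)) / n else x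

lemma perm_mem {n : ℕ} [NeZero n] (σ : Equiv.Perm (Fin n)) {x : ℝ} (hx : x ∈ Ico (0:ℝ) 1) :
    perm σ x ∈ J n (σ (idx n x)) := by
  have hn := npos n
  have h := (idx_eq_iff hx (idx n x)).1 rfl
  rw [perm, if_pos hx, J]
  rw [mem_Ico] at h ⊢
  have e : ((((σ (idx n x)) : ℕ) : ℝ) - ((idx n x : ℕ) : ℝ)) / n =
    (((σ (idx n x)) : ℕ) : ℝ) / n - ((idx n x : ℕ) : ℝ) / n := by ring
  have e2 : ∀ a : ℝ, (a + 1) / n = a / n + 1 / n := fun a => by ring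
  rw [e, e2]; rw [e2] at h
  constructor <;> linarith [h.1, h.2]

lemma perm_idx {n : ℕ} [NeZero n] (σ : Equiv.Perm (Fin n)) {x : ℝ} (hx : x ∈ Ico (0:ℝ) 1) :
    idx n (perm σ x) = σ (idx n x) := (mem_J_iff.1 (perm_mem σ hx)).2

lemma perm_meas {n : ℕ} [NeZero n] (σ : Equiv.Perm (Fin n)) : Measurable (perm σ) := by
  refine Measurable.ite measurableSet_Ico ?_ measurable_id
  refine measurable_id.add ?_
  exact (measurable_of_finite (fun i : Fin n => (((σ i : ℕ) : ℝ) - ((i : ℕ) : ℝ)) / n)).comp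
    (meas_idx n)

lemma perm_mp {n : ℕ} [NeZero n] (σ : Equiv.Perm (Fin n)) :
    MeasurePreserving (perm σ) μ01 μ01 := by
  refine ⟨perm_meas σ, ?_⟩
  ext s hs
  rw [Measure.map_apply (perm_meas σ) hs, mu01_sum (n := n) hs, mu01_sum (n := n) (perm_meas σ hs),
    ← Equiv.sum_comp σ (fun i => volume (s ∩ J n i))]
  refine Finset.sum_congr rfl fun i _ => ?_
  have : perm σ ⁻¹' s ∩ J n i =
      (fun x => x + (((σ i : ℕ) : ℝ) - ((i : ℕ) : ℝ)) / n) ⁻¹' (s ∩ J n (σ i)) := by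
    ext x
    simp only [mem_inter_iff, mem_preimage]
    have e : x + (((σ i : ℕ) : ℝ) - ((i : ℕ) : ℝ)) / n ∈ J n (σ i) ↔ x ∈ J n i := by
      simp only [J, mem_Ico]
      have e1 : (((σ i : ℕ) : ℝ) - ((i : ℕ) : ℝ)) / n = ((σ i : ℕ) : ℝ) / n - ((i : ℕ) : ℝ) / n := by
        ring
      have e2 : ∀ a : ℝ, (a + 1) / n = a / n + 1 / n := fun a => by ring
      rw [e1, e2, e2]
      constructor <;> rintro ⟨h1, h2⟩ <;> constructor <;> linarith
    rw [e]
    refine and_congr_left fun hx => ?_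
    have hx' := mem_J_iff.1 hx
    rw [perm, if_pos hx'.1, hx'.2]
  rw [this, measure_preimage_add_right]

lemma perm_inv {n : ℕ} [NeZero n] (σ : Equiv.Perm (Fin n)) (x : ℝ) :
    perm σ⁻¹ (perm σ x) = x := by
  by_cases hx : x ∈ Ico (0:ℝ) 1
  · have h := perm_mem σ hx
    rw [perm, if_pos (J_sub _ h), perm_idx σ hx, perm, if_pos hx]
    simp
    ring
  · have : perm σ x = x := by rw [perm, if_neg hx]
    rw [this, perm, if_neg hx]

lemma perm_isInv {n : ℕ} [NeZero n] (σ : Equiv.Perm (Fin n)) :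
    IsInvMeasurePreserving (perm σ) := by
  have hm : ∀ τ : Equiv.Perm (Fin n), MapsTo (perm τ) (Icc (0:ℝ) 1) (Icc (0:ℝ) 1) := by
    intro τ x hx
    by_cases h : x ∈ Ico (0:ℝ) 1
    · exact Ico_subset_Icc_self (J_sub _ (perm_mem τ h))
    · rw [perm, if_neg h]; exact hx
  refine ⟨hm σ, perm_mp σ, perm σ⁻¹, hm _, perm_mp _, fun x _ => perm_inv σ x, fun x _ => ?_⟩
  have := perm_inv σ⁻¹ x
  rwa [inv_inv] at this

lemma cutDist_step_perm {k n : ℕ} [NeZero k] [NeZero n] {H : Fin k → Fin k → ℝ}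
    {A : Fin n → Fin n → ℝ} {C D : ℝ} (hH : ∀ i j, |H i j| ≤ C) (hA : ∀ i j, |A i j| ≤ D)
    (τ : Equiv.Perm (Fin k)) (σ : Equiv.Perm (Fin n)) :
    cutDist (step H) (step A) ≤ cutNorm (fun x y => step (fun i j => H (τ i) (τ j)) x y -
      step (fun i j => A (σ i) (σ j)) x y) := by
  refine (cutDist_le_two (step_ker hH) (step_ker hA) (perm_isInv τ) (perm_isInv σ)).trans
    (le_of_eq ?_)
  apply cutNorm_congr
  intro x hx y hy
  simp only [step, perm_idx _ hx, perm_idx _ hy]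


lemma mono_le_iff {n : ℕ} {f : Fin n → ℕ} (hf : Monotone f) (c : ℕ) (a : Fin n) :
    f a ≤ c ↔ a.val < (Finset.univ.filter (fun b => f b ≤ c)).card := by
  constructor
  · intro h
    have : Finset.Iic a ⊆ Finset.univ.filter (fun b => f b ≤ c) := by
      intro b hb
      simp only [Finset.mem_filter, Finset.mem_univ, true_and]
      exact (hf (Finset.mem_Iic.1 hb)).trans h
    have := Finset.card_le_card this
    rw [Fin.card_Iic] at this
    omega
  · intro h
    by_contra hc
    have : Finset.univ.filter (fun b => f b ≤ c) ⊆ Finset.Iio a := by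
      intro b hb
      simp only [Finset.mem_filter, Finset.mem_univ, true_and] at hb
      rw [Finset.mem_Iio]
      by_contra hab
      exact hc ((hf (not_lt.1 hab)).trans hb)
    have := Finset.card_le_card this
    rw [Fin.card_Iio] at this
    omega

/-- cumulative frequency -/
noncomputable def cum {n : ℕ} (f : Fin n → ℕ) (c : ℕ) : ℝ :=
  ((Finset.univ.filter (fun b => f b ≤ c)).card : ℝ) / n

lemma cum_perm {n : ℕ} (f : Fin n → ℕ) (σ : Equiv.Perm (Fin n)) (c : ℕ) :
    cum (fun i => f (σ i)) c = cum f c := by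
  unfold cum
  congr 2
  exact Finset.card_equiv σ (by simp)

lemma idx_le_iff {n : ℕ} [NeZero n] {f : Fin n → ℕ} (hf : Monotone f) (c : ℕ) {x : ℝ}
    (hx : x ∈ Ico (0:ℝ) 1) : f (idx n x) ≤ c ↔ x < cum f c := by
  have hn := npos n
  rw [mono_le_iff hf, idx_val hx, Nat.floor_lt (mul_nonneg hn.le hx.1), cum, lt_div_iff₀ hn,
    mul_comm]

lemma mismatch_measure {k n : ℕ} [NeZero k] [NeZero n] {f : Fin k → ℕ} {g : Fin n → ℕ}
    (hf : Monotone f) (hg : Monotone g) {K : ℕ} (hfK : ∀ a, f a < K) (hgK : ∀ a, g a < K) :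
    μ01.real {x | f (idx k x) ≠ g (idx n x)} ≤
      ∑ c ∈ Finset.range K, |cum f c - cum g c| := by
  have hm : MeasurableSet {x | f (idx k x) ≠ g (idx n x)} :=
    (measurableSet_eq_fun ((measurable_of_finite f).comp (meas_idx k))
      ((measurable_of_finite g).comp (meas_idx n))).compl
  rw [mu01_eq, measureReal_restrict_apply hm]
  have hsub : {x | f (idx k x) ≠ g (idx n x)} ∩ Ico (0:ℝ) 1 ⊆
      ⋃ c ∈ Finset.range K, Ico (min (cum f c) (cum g c)) (max (cum f c) (cum g c)) := by
    rintro x ⟨hx, hx'⟩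
    simp only [mem_iUnion]
    rcases lt_or_gt_of_ne hx with h | h
    · refine ⟨f (idx k x), Finset.mem_range.2 (hfK _), ?_⟩
      have h1 := (idx_le_iff hf (f (idx k x)) hx').1 le_rfl
      have h2 := (idx_le_iff hg (f (idx k x)) hx').not.1 (not_le.2 h)
      exact ⟨min_le_of_right_le (not_lt.1 h2), lt_max_of_lt_left h1⟩
    · refine ⟨g (idx n x), Finset.mem_range.2 (hgK _), ?_⟩
      have h1 := (idx_le_iff hg (g (idx n x)) hx').1 le_rfl
      have h2 := (idx_le_iff hf (g (idx n x)) hx').not.1 (not_le.2 h)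
      exact ⟨min_le_of_left_le (not_lt.1 h2), lt_max_of_lt_right h1⟩
  have hfin : volume (⋃ c ∈ Finset.range K,
      Ico (min (cum f c) (cum g c)) (max (cum f c) (cum g c))) ≠ ⊤ := by
    refine ne_of_lt ((measure_biUnion_finset_le _ _).trans_lt ?_)
    rw [ENNReal.sum_lt_top]
    intro c _
    simp
  refine (measureReal_mono hsub hfin).trans ?_
  refine (measureReal_biUnion_finset_le _ _).trans ?_
  refine Finset.sum_le_sum fun c _ => ?_
  rw [measureReal_def, Real.volume_Ico, max_sub_min_eq_abs, ENNReal.toReal_ofReal (abs_nonneg _),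
    abs_sub_comm]

lemma mismatch {k n : ℕ} [NeZero k] [NeZero n] {f : Fin k → ℕ} {g : Fin n → ℕ}
    (hf : Monotone f) (hg : Monotone g) {K : ℕ} (hfK : ∀ a, f a < K) (hgK : ∀ a, g a < K)
    {B : ℕ → ℕ → ℝ} (hB : ∀ a b, B a b ∈ Icc (0:ℝ) 1) :
    cutNorm (fun x y => step (fun i j => B (f i) (f j)) x y - step (fun i j => B (g i) (g j)) x y)
      ≤ 2 * ∑ c ∈ Finset.range K, |cum f c - cum g c| := by
  set M : Set ℝ := {x | f (idx k x) ≠ g (idx n x)} with hM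
  have hm : MeasurableSet M :=
    (measurableSet_eq_fun ((measurable_of_finite f).comp (meas_idx k))
      ((measurable_of_finite g).comp (meas_idx n))).compl
  refine le_trans ?_ (mul_le_mul_of_nonneg_left (mismatch_measure hf hg hfK hgK) zero_le_two)
  apply cutNorm_le
  intro S T hS hT hS' hT'
  have := isFin_of_sub hS'
  have := isFin_of_sub hT'
  set χ : ℝ → ℝ := M.indicator (fun _ => 1) with hχ
  have χm : Measurable χ := measurable_const.indicator hm
  have χ0 : ∀ x, 0 ≤ χ x := fun x => indicator_nonneg (fun _ _ => zero_le_one) x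
  have χ1 : ∀ x, |χ x| ≤ 1 := by
    intro x
    by_cases h : x ∈ M <;> simp [χ, h]
  have χint : ∀ R : Set ℝ, R ⊆ Icc (0:ℝ) 1 → ∫ x in R, χ x ≤ μ01.real M := by
    intro R hR
    have := isFin_of_sub hR
    rw [hχ, integral_indicator hm]
    simp only [integral_const, smul_eq_mul, mul_one, measureReal_restrict_apply_univ]
    rw [measureReal_restrict_apply hm, measureReal_restrict_apply hm]
    exact measureReal_mono (inter_subset_inter_right _ hR)
      (ne_of_lt ((measure_mono inter_subset_right).trans_lt (by simp)))
  have pt : ∀ x y, |step (fun i j => B (f i) (f j)) x y - step (fun i j => B (g i) (g j)) x y| ≤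
      χ x + χ y := by
    intro x y
    by_cases hx : x ∈ M
    · have h1 : χ x = 1 := by simp [χ, hx]
      have hb : |step (fun i j => B (f i) (f j)) x y - step (fun i j => B (g i) (g j)) x y| ≤ 1 := by
        simp only [step]
        rw [abs_le]
        have a1 := hB (f (idx k x)) (f (idx k y))
        have a2 := hB (g (idx n x)) (g (idx n y))
        constructor <;> linarith [a1.1, a1.2, a2.1, a2.2]
      linarith [χ0 y]
    · by_cases hy : y ∈ M
      · have h1 : χ y = 1 := by simp [χ, hy]
        have hb : |step (fun i j => B (f i) (f j)) x y - step (fun i j => B (g i) (g j)) x y| ≤ 1 := by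
          simp only [step]
          rw [abs_le]
          have a1 := hB (f (idx k x)) (f (idx k y))
          have a2 := hB (g (idx n x)) (g (idx n y))
          constructor <;> linarith [a1.1, a1.2, a2.1, a2.2]
        linarith [χ0 x]
      · have e1 : f (idx k x) = g (idx n x) := not_not.1 hx
        have e2 : f (idx k y) = g (idx n y) := not_not.1 hy
        simp only [step, e1, e2, sub_self, abs_zero]
        linarith [χ0 x, χ0 y]
  have inner : ∀ x, |∫ y in T, (step (fun i j => B (f i) (f j)) x y -
      step (fun i j => B (g i) (g j)) x y)| ≤ χ x + μ01.real M := by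
    intro x
    have h1 := norm_integral_le_of_norm_le (μ := volume.restrict T)
      (f := fun y => step (fun i j => B (f i) (f j)) x y - step (fun i j => B (g i) (g j)) x y)
      (g := fun y => χ x + χ y) ((integrable_const _).add (integrable_bdd χm 1 χ1))
      (Eventually.of_forall (pt x))
    refine h1.trans ?_
    rw [integral_add (integrable_const _) (integrable_bdd χm 1 χ1), integral_const, smul_eq_mul]
    exact add_le_add (mul_le_of_le_one_left (χ0 x) (meas_le_one hT')) (χint T hT')
  have h2 := norm_integral_le_of_norm_le (μ := volume.restrict S)
      (f := fun x => ∫ y in T, (step (fun i j => B (f i) (f j)) x y -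
        step (fun i j => B (g i) (g j)) x y))
      (g := fun x => χ x + μ01.real M) ((integrable_bdd χm 1 χ1).add (integrable_const _))
      (Eventually.of_forall inner)
  refine h2.trans ?_
  rw [integral_add (integrable_bdd χm 1 χ1) (integrable_const _), integral_const, smul_eq_mul]
  have := add_le_add (χint S hS') (mul_le_of_le_one_left (measureReal_nonneg (μ := μ01) (s := M))
    (meas_le_one hS'))
  linarith

/-- finite version of the density of an edge set -/
noncomputable def tfin {m n : ℕ} (S : Finset (Fin m × Fin m)) (A : Fin n → Fin n → ℝ) : ℝ :=
  (∑ x : Fin m → Fin n, ∏ p ∈ S, A (x p.1) (x p.2)) / (n:ℝ) ^ m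

lemma tS_step {m n : ℕ} [NeZero n] (S : Finset (Fin m × Fin m)) (A : Fin n → Fin n → ℝ) :
    tS S (step A) = tfin S A := by
  have : IsProbabilityMeasure (μ01.map (idx n)) :=
    Measure.isProbabilityMeasure_map (meas_idx n).aemeasurable
  have hmp : MeasurePreserving (fun (x : Fin m → ℝ) i => idx n (x i)) (pm m)
      (Measure.pi fun _ : Fin m => μ01.map (idx n)) :=
    measurePreserving_pi _ _ (fun _ => ⟨meas_idx n, rfl⟩)
  have h := integral_map (μ := pm m) hmp.measurable.aemeasurable
    (f := fun x : Fin m → Fin n => ∏ p ∈ S, A (x p.1) (x p.2))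
    (measurable_of_finite _).aestronglyMeasurable
  rw [hmp.map_eq] at h
  unfold tS
  have h2 : ∫ x, (∏ p ∈ S, step A (x p.1) (x p.2)) ∂(pm m) =
    ∫ x, (∏ p ∈ S, A (idx n (x p.1)) (idx n (x p.2))) ∂(pm m) := rfl
  rw [h2, ← h, integral_fintype (integrable_bdd (measurable_of_finite _)
    (∑ x : Fin m → Fin n, |∏ p ∈ S, A (x p.1) (x p.2)|)
      (fun x => Finset.single_le_sum (f := fun x : Fin m → Fin n =>
        |∏ p ∈ S, A (x p.1) (x p.2)|) (fun i _ => abs_nonneg _) (Finset.mem_univ x)))]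
  rw [tfin, Finset.sum_div]
  refine Finset.sum_congr rfl fun x _ => ?_
  rw [measureReal_def, Measure.pi_singleton]
  simp only [map_idx, Finset.prod_const, Finset.card_univ, Fintype.card_fin, ENNReal.toReal_pow,
    smul_eq_mul]
  rw [ENNReal.toReal_ofReal (by positivity), one_div, inv_pow, div_eq_mul_inv, mul_comm]

open scoped Classical in
/-- adjacency matrix -/
noncomputable def adjm {n : ℕ} (G : SimpleGraph (Fin n)) (i j : Fin n) : ℝ :=
  if G.Adj i j then 1 else 0

lemma adjm_sym {n : ℕ} (G : SimpleGraph (Fin n)) : SymMat (adjm G) := by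
  constructor
  · intro i j; classical unfold adjm; exact if_congr (G.adj_comm i j) rfl rfl
  · intro i j; unfold adjm; split_ifs <;> simp

lemma graphonOf_eq {n : ℕ} [NeZero n] (G : SimpleGraph (Fin n)) {x y : ℝ}
    (hx : x ∈ Ico (0:ℝ) 1) (hy : y ∈ Ico (0:ℝ) 1) : graphonOf G x y = step (adjm G) x y := by
  unfold graphonOf step adjm
  congr 1
  simp only [← idx_eq_iff hx, ← idx_eq_iff hy]
  simp

lemma cutDist_graphonOf {n : ℕ} [NeZero n] (G : SimpleGraph (Fin n)) (W : ℝ → ℝ → ℝ) :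
    cutDist (graphonOf G) W = cutDist (step (adjm G)) W := by
  unfold cutDist
  congr 1; ext r
  refine exists_congr fun φ => and_congr_right fun _ => ?_
  rw [cutNorm_congr (V := fun x y => step (adjm G) x y - W (φ x) (φ y))]
  intro x hx y hy
  rw [graphonOf_eq G hx hy]

open scoped Classical in
/-- edge set -/
noncomputable def ES {m : ℕ} (F : SimpleGraph (Fin m)) : Finset (Fin m × Fin m) :=
  Finset.univ.filter (fun p : Fin m × Fin m => p.1 < p.2 ∧ F.Adj p.1 p.2)

lemma homDensity_eq {m : ℕ} (F : SimpleGraph (Fin m)) (W : ℝ → ℝ → ℝ) :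
    homDensity F W = tS (ES F) W := rfl

lemma ES_lt {m : ℕ} (F : SimpleGraph (Fin m)) : ∀ p ∈ ES F, p.1 < p.2 := by
  intro p hp
  simp only [ES, Finset.mem_filter] at hp
  exact hp.2.1

lemma homDensityFin_eq {m n : ℕ} (F : SimpleGraph (Fin m)) (G : SimpleGraph (Fin n)) :
    homDensityFin F G = tfin (ES F) (adjm G) := by
  classical
  unfold homDensityFin tfin
  congr 1
  have : ∀ x : Fin m → Fin n, ∏ p ∈ ES F, adjm G (x p.1) (x p.2) =
      if (∀ i j, F.Adj i j → G.Adj (x i) (x j)) then 1 else 0 := by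
    intro x
    split_ifs with h
    · apply Finset.prod_eq_one
      intro p hp
      simp only [ES, Finset.mem_filter] at hp
      rw [adjm, if_pos (h _ _ hp.2.2)]
    · push Not at h
      obtain ⟨i, j, h1, h2⟩ := h
      rcases lt_or_gt_of_ne h1.ne with hl | hl
      · refine Finset.prod_eq_zero (i := (i, j)) (by simp [ES, hl, h1]) ?_
        simp [adjm, h2]
      · refine Finset.prod_eq_zero (i := (j, i)) (by simp [ES, hl, h1.symm]) ?_
        rw [G.adj_comm] at h2
        simp [adjm, h2]
  simp only [this]
  rw [Finset.sum_boole, Fintype.card_subtype]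


lemma Q4_expand {n : ℕ} (D : Fin n → Fin n → ℝ) :
    Q4 D = ∑ j, ∑ j', ∑ i, ∑ i', D i j * D i j' * (D i' j * D i' j') := by
  unfold Q4
  refine Finset.sum_congr rfl fun j _ => Finset.sum_congr rfl fun j' _ => ?_
  rw [sq, Finset.sum_mul_sum]

lemma exists_corr {n : ℕ} (D : Fin n → Fin n → ℝ) (hD : ∀ i j, |D i j| ≤ 1) {η : ℝ}
    (h : η * (n:ℝ) ^ 4 < Q4 D) :
    ∃ i' j', η * (n:ℝ) ^ 2 < |∑ i, ∑ j, D i j * (D i j' * D i' j)| := by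
  by_contra hc
  push Not at hc
  have e : Q4 D = ∑ j', ∑ i', D i' j' * ∑ i, ∑ j, D i j * (D i j' * D i' j) := by
    rw [Q4_expand, Finset.sum_comm]
    refine Finset.sum_congr rfl fun j' _ => ?_
    simp only [Finset.mul_sum]
    have e1 : ∀ j, ∑ i, ∑ i', D i j * D i j' * (D i' j * D i' j') =
        ∑ i', ∑ i, D i j * D i j' * (D i' j * D i' j') := fun j => Finset.sum_comm
    simp only [e1]
    rw [Finset.sum_comm]
    refine Finset.sum_congr rfl fun i' _ => ?_
    rw [Finset.sum_comm]
    refine Finset.sum_congr rfl fun i _ => Finset.sum_congr rfl fun j _ => ?_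
    ring
  have : Q4 D ≤ ∑ j' : Fin n, ∑ i' : Fin n, η * (n:ℝ) ^ 2 := by
    rw [e]
    refine Finset.sum_le_sum fun j' _ => Finset.sum_le_sum fun i' _ => ?_
    refine (le_abs_self _).trans ?_
    rw [abs_mul]
    exact (mul_le_of_le_one_left (abs_nonneg _) (hD i' j')).trans (hc i' j')
  simp at this
  nlinarith

/-- rounding level -/
noncomputable def lev (M : ℕ) (t : ℝ) : ℕ := ⌊(t + 1) * M⌋₊

/-- rounded value -/
noncomputable def lval (M : ℕ) (l : ℕ) : ℝ := (l:ℝ) / M - 1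

lemma lev_spec {M : ℕ} (hM : 0 < M) {t : ℝ} (ht : |t| ≤ 1) :
    lev M t < 2 * M + 1 ∧ |lval M (lev M t)| ≤ 1 ∧ |t - lval M (lev M t)| ≤ 1 / M := by
  have hM' : (0:ℝ) < M := by exact_mod_cast hM
  obtain ⟨h1, h2⟩ := abs_le.1 ht
  have h0 : 0 ≤ (t + 1) * M := by apply mul_nonneg <;> linarith
  have f1 := Nat.floor_le h0
  have f2 := Nat.lt_floor_add_one ((t + 1) * M)
  have g1 : ((lev M t : ℕ) : ℝ) / M ≤ t + 1 := by rw [div_le_iff₀ hM']; exact f1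
  have g2 : t + 1 < ((lev M t : ℕ) : ℝ) / M + 1 / M := by
    rw [← add_div, lt_div_iff₀ hM']; exact f2
  have g3 : 0 ≤ ((lev M t : ℕ) : ℝ) / M := by positivity
  refine ⟨?_, ?_, ?_⟩
  · have : (t + 1) * M ≤ ((2 * M : ℕ) : ℝ) := by push_cast; nlinarith
    have := Nat.floor_le_of_le this
    unfold lev; omega
  · unfold lval; rw [abs_le]; constructor <;> linarith
  · unfold lval; rw [abs_le]; constructor <;> linarith

/-- energy -/
noncomputable def En {n : ℕ} (D : Fin n → Fin n → ℝ) : ℝ := (∑ i, ∑ j, D i j ^ 2) / (n:ℝ) ^ 2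

/-- clamp to `[0,1]` -/
noncomputable def clamp (t : ℝ) : ℝ := max 0 (min 1 t)

lemma clamp_mem (t : ℝ) : clamp t ∈ Icc (0:ℝ) 1 :=
  ⟨le_max_left _ _, max_le zero_le_one (min_le_left _ _)⟩

lemma clamp_sq {a t : ℝ} (ha : a ∈ Icc (0:ℝ) 1) : |a - clamp t| ≤ |a - t| := by
  unfold clamp
  obtain ⟨h1, h2⟩ := ha
  rcases le_total t 0 with h | h
  · rw [min_eq_right (h.trans zero_le_one), max_eq_left h, abs_of_nonneg (by linarith),
      abs_of_nonneg (by linarith)]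
    linarith
  · rcases le_total 1 t with h' | h'
    · rw [min_eq_left h', max_eq_right zero_le_one, abs_of_nonpos (by linarith),
        abs_of_nonpos (by linarith)]
      linarith
    · rw [min_eq_right h', max_eq_right h]

lemma sub_Icc_abs {a b : ℝ} (ha : a ∈ Icc (0:ℝ) 1) (hb : b ∈ Icc (0:ℝ) 1) : |a - b| ≤ 1 :=
  abs_le.2 ⟨by linarith [ha.1, hb.2], by linarith [ha.2, hb.1]⟩

lemma corr_round {n : ℕ} {D : Fin n → Fin n → ℝ} (hD : ∀ i j, |D i j| ≤ 1)
    {h g h' g' : Fin n → ℝ} {δ : ℝ} (hg : ∀ j, |g j| ≤ 1) (hh' : ∀ j, |h' j| ≤ 1)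
    (dh : ∀ i, |h i - h' i| ≤ δ) (dg : ∀ i, |g i - g' i| ≤ δ) :
    |∑ i, ∑ j, D i j * (h i * g j)| ≤ |∑ i, ∑ j, D i j * (h' i * g' j)| + 2 * δ * (n:ℝ) ^ 2 := by
  have e : ∑ i, ∑ j, D i j * (h i * g j) = ∑ i, ∑ j, D i j * (h' i * g' j) +
      ∑ i, ∑ j, D i j * (h i * g j - h' i * g' j) := by
    rw [← Finset.sum_add_distrib]
    refine Finset.sum_congr rfl fun i _ => ?_
    rw [← Finset.sum_add_distrib]
    refine Finset.sum_congr rfl fun j _ => by ring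
  rw [e]
  refine (abs_add_le _ _).trans (add_le_add le_rfl ?_)
  refine (Finset.abs_sum_le_sum_abs _ _).trans ?_
  have : ∀ i ∈ (Finset.univ : Finset (Fin n)), |∑ j, D i j * (h i * g j - h' i * g' j)| ≤
      ∑ j : Fin n, 2 * δ := by
    intro i _
    refine (Finset.abs_sum_le_sum_abs _ _).trans (Finset.sum_le_sum fun j _ => ?_)
    rw [abs_mul]
    refine (mul_le_of_le_one_left (abs_nonneg _) (hD i j)).trans ?_
    have : h i * g j - h' i * g' j = (h i - h' i) * g j + h' i * (g j - g' j) := by ring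
    rw [this]
    refine (abs_add_le _ _).trans ?_
    rw [abs_mul, abs_mul]
    have a1 := mul_le_of_le_one_right (abs_nonneg (h i - h' i)) (hg j)
    have a2 := mul_le_of_le_one_left (abs_nonneg (g j - g' j)) (hh' i)
    linarith [dh i, dg j]
  refine (Finset.sum_le_sum this).trans (le_of_eq ?_)
  simp
  ring

lemma energy_step {n : ℕ} [NeZero n] {D : Fin n → Fin n → ℝ} {h g : Fin n → ℝ}
    (hh : ∀ j, |h j| ≤ 1) (hg : ∀ j, |g j| ≤ 1) :
    En (fun i j => D i j - ((∑ i, ∑ j, D i j * (h i * g j)) / (n:ℝ) ^ 2) * (h i * g j)) ≤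
      En D - ((∑ i, ∑ j, D i j * (h i * g j)) / (n:ℝ) ^ 2) ^ 2 := by
  have hn := npos n
  set R := (∑ i, ∑ j, D i j * (h i * g j)) / (n:ℝ) ^ 2 with hR
  have hR' : ∑ i, ∑ j, D i j * (h i * g j) = R * (n:ℝ) ^ 2 := by
    rw [hR]; field_simp
  unfold En
  rw [div_le_iff₀ (by positivity), sub_mul, div_mul_cancel₀ _ (by positivity)]
  have e : ∑ i, ∑ j, (D i j - R * (h i * g j)) ^ 2 ≤
      ∑ i, ∑ j, (D i j ^ 2 - 2 * R * (D i j * (h i * g j)) + R ^ 2) := by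
    refine Finset.sum_le_sum fun i _ => Finset.sum_le_sum fun j _ => ?_
    have : (h i * g j) ^ 2 ≤ 1 := by
      rw [sq_le_one_iff_abs_le_one, abs_mul]
      exact mul_le_one₀ (hh i) (abs_nonneg _) (hg j)
    nlinarith [sq_nonneg R]
  refine e.trans (le_of_eq ?_)
  simp only [Finset.sum_add_distrib, Finset.sum_sub_distrib, ← Finset.mul_sum, hR']
  simp
  ring

lemma regularity_aux {η : ℝ} (hη : 0 < η) (r : ℕ) :
    ∃ K : ℕ, 0 < K ∧ ∀ (n : ℕ) [NeZero n] (A : Fin n → Fin n → ℝ), (∀ i j, A i j ∈ Icc (0:ℝ) 1) →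
      ∃ (f : Fin n → ℕ) (B : ℕ → ℕ → ℝ), (∀ i, f i < K) ∧ (∀ a b, B a b ∈ Icc (0:ℝ) 1) ∧
      (Q4 (fun i j => A i j - B (f i) (f j)) ≤ η * (n:ℝ) ^ 4 ∨
        En (fun i j => A i j - B (f i) (f j)) ≤ 1 - r * (η / 2) ^ 2) := by
  induction r with
  | zero =>
    refine ⟨1, one_pos, fun n _ A hA => ⟨fun _ => 0, fun _ _ => 0, by simp, by simp, Or.inr ?_⟩⟩
    have hn := npos n
    unfold En
    rw [div_le_iff₀ (by positivity)]
    have : ∑ i, ∑ j, (A i j - 0) ^ 2 ≤ ∑ i : Fin n, ∑ j : Fin n, (1:ℝ) := by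
      refine Finset.sum_le_sum fun i _ => Finset.sum_le_sum fun j _ => ?_
      rw [sub_zero]
      exact pow_le_one₀ (hA i j).1 (hA i j).2
    refine this.trans (le_of_eq ?_)
    simp; ring
  | succ r ih =>
    obtain ⟨K, hK, ih⟩ := ih
    obtain ⟨M, hM⟩ := exists_nat_gt (4 / η)
    have hM0 : (0:ℝ) < M := lt_trans (by positivity) hM
    have hM0' : 0 < M := by exact_mod_cast hM0
    set L := 2 * M + 1
    set K2 := max K (L ^ 2) with hK2
    refine ⟨K2 ^ 2, by positivity, fun n _ A hA => ?_⟩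
    have hn := npos n
    obtain ⟨f, B, hf, hB, hor⟩ := ih n A hA
    by_cases hq : Q4 (fun i j => A i j - B (f i) (f j)) ≤ η * (n:ℝ) ^ 4
    · refine ⟨f, B, fun i => ?_, hB, Or.inl hq⟩
      have : K ≤ K2 := le_max_left _ _
      have := hf i
      nlinarith
    · have hen := hor.resolve_left hq
      push Not at hq
      set D : Fin n → Fin n → ℝ := fun i j => A i j - B (f i) (f j) with hDdef
      have hD : ∀ i j, |D i j| ≤ 1 := fun i j => sub_Icc_abs (hA i j) (hB _ _)
      obtain ⟨i', j', hc⟩ := exists_corr D hD hq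
      set lh : Fin n → ℕ := fun i => lev M (D i j')
      set lg : Fin n → ℕ := fun j => lev M (D i' j)
      set h' : Fin n → ℝ := fun i => lval M (lh i)
      set g' : Fin n → ℝ := fun i => lval M (lg i)
      have sh := fun i => lev_spec hM0' (hD i j')
      have sg := fun j => lev_spec hM0' (hD i' j)
      have cr := corr_round hD (h := fun i => D i j') (g := fun j => D i' j) (h' := h') (g' := g')
        (δ := 1 / M) (fun j => hD i' j) (fun i => (sh i).2.1) (fun i => (sh i).2.2)
        (fun i => (sg i).2.2)
      set R := (∑ i, ∑ j, D i j * (h' i * g' j)) / (n:ℝ) ^ 2 with hR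
      have hRabs : η / 2 ≤ |R| := by
        rw [hR, abs_div, abs_of_pos (show (0:ℝ) < (n:ℝ) ^ 2 by positivity), le_div_iff₀ (by positivity)]
        have h1 : 1 / (M:ℝ) ≤ η / 4 := by
          rw [div_le_div_iff₀ hM0 (by norm_num)]
          rw [div_lt_iff₀ hη] at hM
          linarith
        have : 2 * (1 / (M:ℝ)) * (n:ℝ) ^ 2 ≤ (η / 2) * (n:ℝ) ^ 2 := by
          gcongr; linarith
        linarith
      have hRsq : (η / 2) ^ 2 ≤ R ^ 2 := by
        rw [← sq_abs R]
        exact pow_le_pow_left₀ (by positivity) hRabs 2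
      have es := energy_step (D := D) (fun i => (sh i).2.1) (fun i => (sg i).2.1)
      refine ⟨fun i => Nat.pair (f i) (Nat.pair (lh i) (lg i)), fun a b =>
        clamp (B a.unpair.1 b.unpair.1 +
          R * (lval M a.unpair.2.unpair.1 * lval M b.unpair.2.unpair.2)), fun i => ?_,
        fun _ _ => clamp_mem _, Or.inr ?_⟩
      · have b1 : Nat.pair (lh i) (lg i) < L ^ 2 := by
          refine (Nat.pair_lt_max_add_one_sq _ _).trans_le (Nat.pow_le_pow_left ?_ 2)
          exact Nat.succ_le_of_lt (max_lt (sh i).1 (sg i).1)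
        refine (Nat.pair_lt_max_add_one_sq _ _).trans_le (Nat.pow_le_pow_left ?_ 2)
        exact Nat.succ_le_of_lt (max_lt ((hf i).trans_le (le_max_left _ _))
          (b1.trans_le (le_max_right _ _)))
      · simp only [Nat.unpair_pair]
        have : En (fun i j => A i j - clamp (B (f i) (f j) + R * (h' i * g' j))) ≤
            En (fun i j => D i j - R * (h' i * g' j)) := by
          unfold En
          refine div_le_div_of_nonneg_right ?_ (by positivity)
          refine Finset.sum_le_sum fun i _ => Finset.sum_le_sum fun j _ => ?_
          have := clamp_sq (t := B (f i) (f j) + R * (h' i * g' j)) (hA i j)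
          rw [← sub_sub] at this
          exact sq_le_sq.2 this
        refine this.trans (es.trans ?_)
        push_cast
        have : R ^ 2 = ((∑ i, ∑ j, D i j * (lval M (lev M (D i j')) * lval M (lev M (D i' j)))) / (n:ℝ) ^ 2) ^ 2 := rfl
        linarith

lemma regularity {η : ℝ} (hη : 0 < η) :
    ∃ K : ℕ, 0 < K ∧ ∀ (n : ℕ) [NeZero n] (A : Fin n → Fin n → ℝ), (∀ i j, A i j ∈ Icc (0:ℝ) 1) →
      ∃ (f : Fin n → ℕ) (B : ℕ → ℕ → ℝ), (∀ i, f i < K) ∧ (∀ a b, B a b ∈ Icc (0:ℝ) 1) ∧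
      Q4 (fun i j => A i j - B (f i) (f j)) / (n:ℝ) ^ 4 ≤ η := by
  obtain ⟨r, hr⟩ := exists_nat_gt (1 / (η / 2) ^ 2)
  obtain ⟨K, hK, h⟩ := regularity_aux hη r
  refine ⟨K, hK, fun n _ A hA => ?_⟩
  have hn := npos n
  obtain ⟨f, B, hf, hB, hor⟩ := h n A hA
  refine ⟨f, B, hf, hB, ?_⟩
  rw [div_le_iff₀ (by positivity)]
  refine hor.resolve_right fun hc => ?_
  rw [div_lt_iff₀ (by positivity)] at hr
  have : 0 ≤ En (fun i j => A i j - B (f i) (f j)) :=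
    div_nonneg (Finset.sum_nonneg fun _ _ => Finset.sum_nonneg fun _ _ => sq_nonneg _)
      (by positivity)
  linarith


lemma samp {α β : Type} [Fintype α] [DecidableEq α] [Fintype β] [DecidableEq β] {n : ℕ}
    (ι : β → α) (hι : Function.Injective ι) (Φ : (β → Fin n) → ℝ) :
    (∑ x : α → Fin n, Φ (fun b => x (ι b))) * (n:ℝ) ^ Fintype.card β =
      (n:ℝ) ^ Fintype.card α * ∑ y, Φ y := by
  classical
  let e : β ⊕ ((range ι)ᶜ : Set α) ≃ α :=
    ((Equiv.ofInjective ι hι).sumCongr (Equiv.refl _)).trans (Equiv.Set.sumCompl (range ι))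
  let E : (α → Fin n) ≃ (β → Fin n) × (((range ι)ᶜ : Set α) → Fin n) :=
    (Equiv.arrowCongr e.symm (Equiv.refl _)).trans (Equiv.sumArrowEquivProdArrow _ _ _)
  have h1 : ∀ x : α → Fin n, (fun b => x (ι b)) = (E x).1 := by
    intro x; ext b; simp [E, e, Equiv.sumArrowEquivProdArrow]
  have h2 : Fintype.card α = Fintype.card β + Fintype.card ((range ι)ᶜ : Set α) := by
    rw [← Fintype.card_sum]; exact Fintype.card_congr e.symm
  simp_rw [h1]
  rw [Equiv.sum_comp E (fun z => Φ z.1), Fintype.sum_prod_type, h2, pow_add]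
  simp [Finset.card_univ]
  rw [← Finset.mul_sum]; ring

lemma sum_fin_succ {m n : ℕ} (Φ : (Fin (m+1) → Fin n) → ℝ) :
    ∑ y, Φ y = ∑ i, ∑ y : Fin m → Fin n, Φ (Fin.cons i y) := by
  rw [← Equiv.sum_comp (Fin.consEquiv (fun _ => Fin n)) Φ, Fintype.sum_prod_type]
  rfl

lemma samp4 {k n : ℕ} {b b' a a' : Fin k} (h : Function.Injective ![b, b', a, a'])
    (Φ : Fin n → Fin n → Fin n → Fin n → ℝ) :
    (∑ x : Fin k → Fin n, Φ (x b) (x b') (x a) (x a')) * (n:ℝ) ^ 4 =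
      (n:ℝ) ^ k * ∑ j, ∑ j', ∑ i, ∑ i', Φ j j' i i' := by
  have := samp (n := n) _ h (fun y => Φ (y 0) (y 1) (y 2) (y 3))
  simp only [Fintype.card_fin] at this
  have h2 : ∑ y : Fin 4 → Fin n, Φ (y 0) (y 1) (y 2) (y 3) =
      ∑ j, ∑ j', ∑ i, ∑ i', Φ j j' i i' := by
    simp only [sum_fin_succ, Fintype.sum_unique]
    rfl
  rw [← h2, ← this]
  rfl

lemma samp2 {k n : ℕ} {b b' : Fin k} (h : b ≠ b')
    (Φ : Fin n → Fin n → ℝ) :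
    (∑ x : Fin k → Fin n, Φ (x b) (x b')) * (n:ℝ) ^ 2 =
      (n:ℝ) ^ k * ∑ j, ∑ j', Φ j j' := by
  have hi : Function.Injective ![b, b'] := by
    intro i j; fin_cases i <;> fin_cases j <;> simp [h, h.symm]
  have := samp (n := n) _ hi (fun y => Φ (y 0) (y 1))
  simp only [Fintype.card_fin] at this
  have h2 : ∑ y : Fin 2 → Fin n, Φ (y 0) (y 1) = ∑ j, ∑ j', Φ j j' := by
    simp only [sum_fin_succ, Fintype.sum_unique]
    rfl
  rw [← h2, ← this]
  rfl

lemma quad_bound {k : ℕ} {T : Fin k → Fin k → Fin k → Fin k → ℝ} {c : ℝ} (hc : 0 ≤ c)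
    (h1 : ∀ b b' a a', T b b' a a' ≤ 1)
    (h2 : ∀ b b' a a', b ≠ b' → b ≠ a → b ≠ a' → b' ≠ a → b' ≠ a' → a ≠ a' →
      T b b' a a' ≤ c) :
    ∑ b, ∑ b', ∑ a, ∑ a', T b b' a a' ≤ (k:ℝ) ^ 4 * c + 6 * (k:ℝ) ^ 3 := by
  have h : ∀ b b' a a', T b b' a a' ≤ c + (if b = b' then 1 else 0) + (if b = a then 1 else 0)
      + (if b = a' then 1 else 0) + (if b' = a then 1 else 0) + (if b' = a' then 1 else 0)
      + (if a = a' then 1 else 0) := by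
    intro b b' a a'
    have hh := h1 b b' a a'
    have h2' := h2 b b' a a'
    split_ifs <;> first | linarith | (rename_i a b c d e f; linarith [h2' (by assumption) (by assumption) (by assumption) (by assumption) (by assumption) (by assumption)])
  calc _ ≤ ∑ b : Fin k, ∑ b' : Fin k, ∑ a : Fin k, ∑ a' : Fin k, (c + (if b = b' then (1:ℝ) else 0) + (if b = a then 1 else 0)
      + (if b = a' then 1 else 0) + (if b' = a then 1 else 0) + (if b' = a' then 1 else 0)
      + (if a = a' then 1 else 0)) := by
        gcongr with b _ b' _ a _ a' _
        exact h _ _ _ _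
    _ = _ := by
      simp only [Finset.sum_add_distrib, Finset.sum_const, Finset.card_univ, Fintype.card_fin,
        nsmul_eq_mul, Finset.sum_ite_eq, Finset.mem_univ, if_true, ← Finset.mul_sum]
      ring

lemma sample_Q4 {k n : ℕ} [NeZero n] {D : Fin n → Fin n → ℝ} (hD : ∀ i j, |D i j| ≤ 1) :
    (∑ x : Fin k → Fin n, Q4 (fun a b => D (x a) (x b))) / (n:ℝ) ^ k ≤
      (k:ℝ) ^ 4 * (Q4 D / (n:ℝ) ^ 4) + 6 * (k:ℝ) ^ 3 := by
  have hn := npos n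
  have hnk : (0:ℝ) < (n:ℝ) ^ k := by positivity
  have e : (∑ x : Fin k → Fin n, Q4 (fun a b => D (x a) (x b))) / (n:ℝ) ^ k =
      ∑ b : Fin k, ∑ b' : Fin k, ∑ a : Fin k, ∑ a' : Fin k,
        (∑ x : Fin k → Fin n, D (x a) (x b) * D (x a) (x b') * (D (x a') (x b) * D (x a') (x b')))
          / (n:ℝ) ^ k := by
    simp only [Q4_expand, Finset.sum_div]
    rw [Finset.sum_comm]
    refine Finset.sum_congr rfl fun b _ => ?_
    rw [Finset.sum_comm]
    refine Finset.sum_congr rfl fun b' _ => ?_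
    rw [Finset.sum_comm]
    refine Finset.sum_congr rfl fun a _ => ?_
    rw [Finset.sum_comm]
  rw [e]
  apply quad_bound
  · have := Q4_nonneg D; positivity
  · intro b b' a a'
    rw [div_le_one hnk]
    calc _ ≤ ∑ x : Fin k → Fin n, (1:ℝ) := by
          refine Finset.sum_le_sum fun x _ => (le_abs_self _).trans ?_
          rw [abs_mul, abs_mul, abs_mul]
          have := hD (x a) (x b); have := hD (x a) (x b')
          have := hD (x a') (x b); have := hD (x a') (x b')
          exact mul_le_one₀ (mul_le_one₀ (hD _ _) (abs_nonneg _) (hD _ _)) (by positivity)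
            (mul_le_one₀ (hD _ _) (abs_nonneg _) (hD _ _))
      _ = _ := by simp
  · intro b b' a a' h1 h2 h3 h4 h5 h6
    have hi : Function.Injective ![b, b', a, a'] := by
      intro i j
      fin_cases i <;> fin_cases j <;>
        simp [h1, h2, h3, h4, h5, h6, h1.symm, h2.symm, h3.symm, h4.symm, h5.symm, h6.symm]
    have := samp4 hi (fun j j' i i' => D i j * D i j' * (D i' j * D i' j'))
    rw [← Q4_expand] at this
    rw [div_le_div_iff₀ hnk (by positivity), this, mul_comm]

lemma cum_var {k n : ℕ} [NeZero k] [NeZero n] (f : Fin n → ℕ) (c : ℕ) :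
    (∑ x : Fin k → Fin n, (cum (fun a => f (x a)) c - cum f c) ^ 2) / (n:ℝ) ^ k ≤ 1 / k := by
  have hn := npos n
  have hk := npos k
  have hnk : (0:ℝ) < (n:ℝ) ^ k := by positivity
  set g : Fin n → ℝ := fun i => (if f i ≤ c then 1 else 0) - cum f c with hg
  have hc0 : 0 ≤ cum f c := by unfold cum; positivity
  have hc1 : cum f c ≤ 1 := by
    unfold cum; rw [div_le_one hn]; exact_mod_cast (Finset.card_le_univ _).trans (by simp)
  have g0 : ∑ i, g i = 0 := by
    simp only [hg, Finset.sum_sub_distrib, Finset.sum_boole, Finset.sum_const, Finset.card_univ,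
      Fintype.card_fin, nsmul_eq_mul]
    unfold cum
    field_simp
    simp
  have g1 : ∀ i, |g i| ≤ 1 := by
    intro i; simp only [hg]; rw [abs_le]; split_ifs <;> constructor <;> linarith
  have e : ∀ x : Fin k → Fin n, (cum (fun a => f (x a)) c - cum f c) ^ 2 =
      (∑ a, ∑ a', g (x a) * g (x a')) / (k:ℝ) ^ 2 := by
    intro x
    rw [← Finset.sum_mul_sum, ← sq, ← div_pow]
    congr 1
    simp only [hg, Finset.sum_sub_distrib, Finset.sum_boole, Finset.sum_const, Finset.card_univ,
      Fintype.card_fin, nsmul_eq_mul]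
    rw [sub_div, mul_div_cancel_left₀ _ hk.ne']
    rfl
  simp_rw [e]
  rw [← Finset.sum_div, div_div, div_le_div_iff₀ (by positivity) hk]
  have key : ∀ a a' : Fin k, ∑ x : Fin k → Fin n, g (x a) * g (x a') ≤
      if a = a' then (n:ℝ) ^ k else 0 := by
    intro a a'
    split_ifs with h
    · subst h
      calc _ ≤ ∑ x : Fin k → Fin n, (1:ℝ) := by
            refine Finset.sum_le_sum fun x _ => (le_abs_self _).trans ?_
            rw [abs_mul]; exact mul_le_one₀ (g1 _) (abs_nonneg _) (g1 _)
        _ = _ := by simp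
    · have := samp2 h (fun i j => g i * g j)
      rw [← Finset.sum_mul_sum, g0] at this
      simp at this
      rcases this with h | h
      · exact h.le
      · exact absurd h (NeZero.ne n)
  have : ∑ x : Fin k → Fin n, ∑ a, ∑ a', g (x a) * g (x a') ≤ k * (n:ℝ) ^ k := by
    rw [Finset.sum_comm]
    calc _ ≤ ∑ a : Fin k, ∑ a' : Fin k, if a = a' then (n:ℝ) ^ k else 0 := by
          refine Finset.sum_le_sum fun a _ => ?_
          rw [Finset.sum_comm]
          exact Finset.sum_le_sum fun a' _ => key a a'
      _ = _ := by simp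
  calc _ ≤ k * (n:ℝ) ^ k * k := by gcongr
    _ = _ := by ring


/-- ordered pairs -/
def Ek (k : ℕ) : Finset (Fin k × Fin k) := Finset.univ.filter (fun p => p.1 < p.2)

def gkey {k : ℕ} (a b : Fin k) : Fin k × Fin k := (min a b, max a b)

/-- graph with given edge set -/
def gr {k : ℕ} (e : Finset (Fin k × Fin k)) : SimpleGraph (Fin k) where
  Adj a b := a ≠ b ∧ gkey a b ∈ e
  symm := ⟨fun a b h => ⟨h.1.symm, by
    have h2 := h.2
    unfold gkey at *
    rwa [min_comm, max_comm]⟩⟩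
  loopless := ⟨fun a h => h.1 rfl⟩

noncomputable def wt {k : ℕ} (M : Fin k → Fin k → ℝ) (e : Finset (Fin k × Fin k)) : ℝ :=
  (∏ p ∈ e, M p.1 p.2) * ∏ p ∈ Ek k \ e, (1 - M p.1 p.2)

lemma wt_nonneg {k : ℕ} {M : Fin k → Fin k → ℝ} (hM : ∀ i j, M i j ∈ Icc (0:ℝ) 1)
    (e : Finset (Fin k × Fin k)) : 0 ≤ wt M e :=
  mul_nonneg (Finset.prod_nonneg fun _ _ => (hM _ _).1)
    (Finset.prod_nonneg fun _ _ => sub_nonneg.2 (hM _ _).2)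

lemma sum_wt {k : ℕ} (M : Fin k → Fin k → ℝ) : ∑ e ∈ (Ek k).powerset, wt M e = 1 := by
  unfold wt
  rw [← Finset.prod_add (fun p : Fin k × Fin k => M p.1 p.2) (fun p => 1 - M p.1 p.2)]
  simp

lemma gkey_ne {k : ℕ} {a b c d : Fin k} (h : (a ≠ c ∧ a ≠ d) ∨ (b ≠ c ∧ b ≠ d)) :
    gkey c d ≠ gkey a b := by
  unfold gkey
  intro h'
  rw [Prod.mk.injEq] at h'
  obtain ⟨h1, h2⟩ := h'
  rcases le_total a b with u | u <;> rcases le_total c d with v | v <;>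
    simp only [min_eq_left, min_eq_right, max_eq_left, max_eq_right, u, v] at h1 h2 <;>
    subst h1 h2 <;> simp at h

lemma gkey_mem {k : ℕ} {a b : Fin k} (h : a ≠ b) : gkey a b ∈ Ek k := by
  simp [Ek, gkey, h.symm]

lemma adjm_gr_insert {k : ℕ} {e : Finset (Fin k × Fin k)} {p : Fin k × Fin k} {c d : Fin k}
    (h : gkey c d ≠ p) : adjm (gr (insert p e)) c d = adjm (gr e) c d := by
  unfold adjm gr
  simp [h]

lemma rand_zero {k : ℕ} {M : Fin k → Fin k → ℝ} (hM : SymMat M) {a b : Fin k} (hab : a ≠ b)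
    (Ψ : Finset (Fin k × Fin k) → ℝ) (hΨ : ∀ t, Ψ (insert (gkey a b) t) = Ψ t) :
    ∑ e ∈ (Ek k).powerset, wt M e * ((adjm (gr e) a b - M a b) * Ψ e) = 0 := by
  set p := gkey a b with hp
  have hMp : M p.1 p.2 = M a b := by
    rw [hp]; unfold gkey
    rcases le_total a b with u | u
    · simp [u]
    · simp [u, hM.1 b a]
  have hE : Ek k = insert p ((Ek k).erase p) := (Finset.insert_erase (gkey_mem hab)).symm
  rw [hE, Finset.sum_powerset_insert (Finset.notMem_erase _ _), ← Finset.sum_add_distrib]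
  refine Finset.sum_eq_zero fun t ht => ?_
  rw [Finset.mem_powerset] at ht
  have hpt : p ∉ t := fun h => Finset.notMem_erase _ _ (ht h)
  have x1 : adjm (gr t) a b = 0 := by
    unfold adjm gr; simp [← hp, hpt]
  have x2 : adjm (gr (insert p t)) a b = 1 := by
    unfold adjm gr; simp [← hp, hab]
  have w1 : wt M t = (∏ q ∈ t, M q.1 q.2) * ((1 - M a b) *
      ∏ q ∈ (Ek k).erase p \ t, (1 - M q.1 q.2)) := by
    unfold wt
    rw [← hMp, ← Finset.prod_insert (s := (Ek k).erase p \ t) (a := p)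
      (f := fun q => (1 - M q.1 q.2)) (by simp), ← Finset.insert_sdiff_of_notMem _ hpt, ← hE]
  have w2 : wt M (insert p t) = (M a b * ∏ q ∈ t, M q.1 q.2) *
      ∏ q ∈ (Ek k).erase p \ t, (1 - M q.1 q.2) := by
    unfold wt
    rw [Finset.prod_insert hpt, hMp]
    congr 2
    ext q; simp only [Finset.mem_sdiff, Finset.mem_insert, Finset.mem_erase]; tauto
  rw [x1, x2, w1, w2, hΨ]
  ring

lemma rand_Q4 {k : ℕ} {M : Fin k → Fin k → ℝ} (hM : SymMat M) :
    ∑ e ∈ (Ek k).powerset, wt M e * Q4 (fun a b => adjm (gr e) a b - M a b) ≤ 6 * (k:ℝ) ^ 3 := by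
  have e : ∑ e ∈ (Ek k).powerset, wt M e * Q4 (fun a b => adjm (gr e) a b - M a b) =
      ∑ b : Fin k, ∑ b' : Fin k, ∑ a : Fin k, ∑ a' : Fin k, ∑ e ∈ (Ek k).powerset, wt M e *
        ((adjm (gr e) a b - M a b) * (adjm (gr e) a b' - M a b') *
          ((adjm (gr e) a' b - M a' b) * (adjm (gr e) a' b' - M a' b'))) := by
    simp only [Q4_expand, Finset.mul_sum]
    rw [Finset.sum_comm]
    refine Finset.sum_congr rfl fun b _ => ?_
    rw [Finset.sum_comm]
    refine Finset.sum_congr rfl fun b' _ => ?_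
    rw [Finset.sum_comm]
    refine Finset.sum_congr rfl fun a _ => ?_
    rw [Finset.sum_comm]
  rw [e]
  have := quad_bound (k := k) (c := 0) le_rfl (T := fun b b' a a' => ∑ e ∈ (Ek k).powerset, wt M e *
        ((adjm (gr e) a b - M a b) * (adjm (gr e) a b' - M a b') *
          ((adjm (gr e) a' b - M a' b) * (adjm (gr e) a' b' - M a' b')))) ?_ ?_
  · simpa using this
  · intro b b' a a'
    rw [← sum_wt M]
    refine Finset.sum_le_sum fun e _ => ?_
    refine mul_le_of_le_one_right (wt_nonneg hM.2 e) ((le_abs_self _).trans ?_)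
    have h : ∀ i j, |adjm (gr e) i j - M i j| ≤ 1 :=
      fun i j => sub_Icc_abs ((adjm_sym (gr e)).2 i j) (hM.2 i j)
    rw [abs_mul, abs_mul, abs_mul]
    exact mul_le_one₀ (mul_le_one₀ (h _ _) (abs_nonneg _) (h _ _)) (by positivity)
      (mul_le_one₀ (h _ _) (abs_nonneg _) (h _ _))
  · intro b b' a a' h1 h2 h3 h4 h5 h6
    have := rand_zero hM h2.symm (fun e => (adjm (gr e) a b' - M a b') *
          ((adjm (gr e) a' b - M a' b) * (adjm (gr e) a' b' - M a' b'))) ?_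
    · refine le_of_eq ?_
      simpa only [mul_assoc] using this
    · intro t
      rw [adjm_gr_insert (gkey_ne (Or.inr ⟨h2, h1⟩)), adjm_gr_insert (gkey_ne (Or.inl ⟨h6, h2.symm⟩)),
        adjm_gr_insert (gkey_ne (Or.inl ⟨h6, h4.symm⟩))]

lemma ES_gr {k : ℕ} {S : Finset (Fin k × Fin k)} (hS : S ⊆ Ek k) : ES (gr S) = S := by
  classical
  ext ⟨a, b⟩
  simp only [ES, Finset.mem_filter, Finset.mem_univ, true_and]
  simp only [gr, gkey]
  constructor
  · rintro ⟨h, _, h2⟩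
    simpa [min_eq_left h.le, max_eq_right h.le] using h2
  · intro h
    have h' : a < b := by simpa [Ek] using hS h
    exact ⟨h', h'.ne, by simpa [min_eq_left h'.le, max_eq_right h'.le] using h⟩

/-- probability of sampling the graph with edge set `e` -/
noncomputable def pr {k n : ℕ} (e : Finset (Fin k × Fin k)) (A : Fin n → Fin n → ℝ) : ℝ :=
  (∑ x : Fin k → Fin n, wt (fun a b => A (x a) (x b)) e) / (n:ℝ) ^ k

lemma pr_eq {k n : ℕ} {e : Finset (Fin k × Fin k)} (A : Fin n → Fin n → ℝ) :
    pr e A = ∑ T ∈ (Ek k \ e).powerset, (-1) ^ T.card * tfin (e ∪ T) A := by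
  unfold pr tfin
  have : ∀ x : Fin k → Fin n, wt (fun a b => A (x a) (x b)) e =
      ∑ T ∈ (Ek k \ e).powerset, (-1) ^ T.card * ∏ p ∈ e ∪ T, A (x p.1) (x p.2) := by
    intro x
    unfold wt
    have h1 : ∀ p : Fin k × Fin k, 1 - A (x p.1) (x p.2) = - A (x p.1) (x p.2) + 1 :=
      fun p => by ring
    simp_rw [h1]
    rw [Finset.prod_add, Finset.mul_sum]
    refine Finset.sum_congr rfl fun T hT => ?_
    rw [Finset.mem_powerset] at hT
    rw [Finset.prod_union (Finset.disjoint_of_subset_right hT Finset.disjoint_sdiff),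
      Finset.prod_neg]
    simp; ring
  simp_rw [this]
  rw [Finset.sum_comm, Finset.sum_div]
  refine Finset.sum_congr rfl fun T _ => ?_
  rw [← Finset.mul_sum, mul_div_assoc]

lemma pr_nonneg {k n : ℕ} {A : Fin n → Fin n → ℝ} (hA : SymMat A) (e : Finset (Fin k × Fin k)) :
    0 ≤ pr e A :=
  div_nonneg (Finset.sum_nonneg fun _ _ => wt_nonneg (fun _ _ => hA.2 _ _) _) (by positivity)

lemma pr_sum {k n : ℕ} [NeZero n] (A : Fin n → Fin n → ℝ) :
    ∑ e ∈ (Ek k).powerset, pr e A = 1 := by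
  unfold pr
  have hn := npos n
  rw [← Finset.sum_div, Finset.sum_comm]
  simp_rw [sum_wt]
  simp


lemma Ker.neg {U : ℝ → ℝ → ℝ} {C : ℝ} (hU : Ker U C) : Ker (fun x y => - U x y) C :=
  ⟨hU.1.neg, fun x y => by rw [abs_neg]; exact hU.2 x y⟩

lemma sample_det {k n : ℕ} [NeZero k] [NeZero n] {H : Fin k → Fin k → ℝ} (hH : SymMat H)
    {A : Fin n → Fin n → ℝ} (hA : SymMat A) {f : Fin n → ℕ} {B : ℕ → ℕ → ℝ} {K : ℕ}
    (hf : ∀ i, f i < K) (hB : ∀ a b, B a b ∈ Icc (0:ℝ) 1) (x : Fin k → Fin n) {ε : ℝ} (hε : 0 < ε)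
    (h1 : Q4 (fun a b => H a b - A (x a) (x b)) / (k:ℝ) ^ 4 ≤ (ε / 4) ^ 4)
    (h2 : Q4 (fun a b => A (x a) (x b) - B (f (x a)) (f (x b))) / (k:ℝ) ^ 4 ≤ (ε / 4) ^ 4)
    (h3 : ∑ c ∈ Finset.range K, |cum (fun a => f (x a)) c - cum f c| ≤ ε / 8)
    (h4 : Q4 (fun i j => A i j - B (f i) (f j)) / (n:ℝ) ^ 4 ≤ (ε / 4) ^ 4) :
    cutDist (step H) (step A) ≤ ε := by
  set τ := Tuple.sort (fun a => f (x a)) with hτ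
  set σ := Tuple.sort f with hσ
  have mτ : Monotone (fun a => f (x (τ a))) := Tuple.monotone_sort (fun a => f (x a))
  have mσ : Monotone (fun a => f (σ a)) := Tuple.monotone_sort f
  have habs : ∀ {t : ℝ}, t ∈ Icc (0:ℝ) 1 → |t| ≤ 1 := fun h => abs_le.2 ⟨by linarith [h.1], h.2⟩
  refine (cutDist_step_perm (C := 1) (D := 1) (fun i j => habs (hH.2 i j))
    (fun i j => habs (hA.2 i j)) τ σ).trans ?_
  have hε4 : 0 ≤ ε / 4 := by positivity
  have c1 := cutNorm_step_le (fun a b => H (τ a) (τ b) - A (x (τ a)) (x (τ b))) hε4 (by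
    rw [Q4_perm (fun a b => H a b - A (x a) (x b)) τ]; exact h1)
  have c2 := cutNorm_step_le (fun a b => A (x (τ a)) (x (τ b)) - B (f (x (τ a))) (f (x (τ b))))
    hε4 (by rw [Q4_perm (fun a b => A (x a) (x b) - B (f (x a)) (f (x b))) τ]; exact h2)
  have c4 := cutNorm_step_le (fun a b => A (σ a) (σ b) - B (f (σ a)) (f (σ b))) hε4 (by
    rw [Q4_perm (fun a b => A a b - B (f a) (f b)) σ]; exact h4)
  have c3 := mismatch mτ mσ (fun a => hf _) (fun a => hf _) hB
  simp only [cum_perm (fun a => f (x a)) τ, cum_perm f σ] at c3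
  have k1 : Ker (step (fun a b => H (τ a) (τ b) - A (x (τ a)) (x (τ b)))) 1 :=
    step_ker fun i j => sub_Icc_abs (hH.2 _ _) (hA.2 _ _)
  have k2 : Ker (step (fun a b => A (x (τ a)) (x (τ b)) - B (f (x (τ a))) (f (x (τ b))))) 1 :=
    step_ker fun i j => sub_Icc_abs (hA.2 _ _) (hB _ _)
  have k4 : Ker (step (fun a b => A (σ a) (σ b) - B (f (σ a)) (f (σ b)))) 1 :=
    step_ker fun i j => sub_Icc_abs (hA.2 _ _) (hB _ _)
  have k5 : Ker (step (fun a b => B (f (x (τ a))) (f (x (τ b))))) 1 :=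
    step_ker fun i j => habs (hB _ _)
  have k6 : Ker (step (fun a b => B (f (σ a)) (f (σ b)))) 1 :=
    step_ker fun i j => habs (hB _ _)
  have k3 := k5.sub k6
  have a1 := cutNorm_add_le k1 k2
  have a2 := cutNorm_add_le (k1.add k2) k3
  have a3 := cutNorm_add_le ((k1.add k2).add k3) (k4.neg)
  have e : (fun u v => step (fun i j => H (τ i) (τ j)) u v - step (fun i j => A (σ i) (σ j)) u v) =
    fun u v => ((step (fun a b => H (τ a) (τ b) - A (x (τ a)) (x (τ b))) u v +
      step (fun a b => A (x (τ a)) (x (τ b)) - B (f (x (τ a))) (f (x (τ b)))) u v) +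
      (step (fun a b => B (f (x (τ a))) (f (x (τ b)))) u v -
        step (fun a b => B (f (σ a)) (f (σ b))) u v)) +
      (- step (fun a b => A (σ a) (σ b) - B (f (σ a)) (f (σ b))) u v) := by
    funext u v; simp only [step]; ring
  rw [e]
  have a4 := cutNorm_neg (step (fun a b => A (σ a) (σ b) - B (f (σ a)) (f (σ b))))
  linarith

open scoped Classical in
lemma good_sample {ε : ℝ} (hε : 0 < ε) : ∃ k : ℕ, ∃ _ : NeZero k, ∀ (n : ℕ) [NeZero n]
    (A : Fin n → Fin n → ℝ), SymMat A →
    ∑ e ∈ (Ek k).powerset,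
      pr e A * (if ε < cutDist (step (adjm (gr e))) (step A) then 1 else 0) ≤ 1 / 3 := by
  set α : ℝ := (ε / 4) ^ 4 with hα
  have hα0 : 0 < α := by positivity
  obtain ⟨K, hK, hreg⟩ := regularity (η := α / 6) (by positivity)
  have hK' : (0:ℝ) < K := by exact_mod_cast hK
  set β : ℝ := (ε / (8 * K)) ^ 2 with hβ
  have hβ0 : 0 < β := by positivity
  obtain ⟨k, hk⟩ := exists_nat_gt (6 * (12 / α + K / β))
  have hk0 : (0:ℝ) < k := lt_trans (by positivity) hk
  have hkn : NeZero k := ⟨by rintro rfl; simp at hk0⟩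
  refine ⟨k, hkn, fun n _ A hA => ?_⟩
  obtain ⟨f, B, hf, hB, hQ⟩ := hreg n A hA.2
  have hn := npos n
  have hnk : (0:ℝ) < (n:ℝ) ^ k := by positivity
  set Q1 : (Fin k → Fin n) → Finset (Fin k × Fin k) → ℝ := fun x e =>
    Q4 (fun a b => adjm (gr e) a b - A (x a) (x b)) with hQ1
  set Q2 : (Fin k → Fin n) → ℝ := fun x =>
    Q4 (fun a b => A (x a) (x b) - B (f (x a)) (f (x b))) with hQ2
  set S : (Fin k → Fin n) → ℕ → ℝ := fun x c => (cum (fun a => f (x a)) c - cum f c) ^ 2 with hS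
  have hQ1n : ∀ x e, 0 ≤ Q1 x e / (k ^ 4 * α) := fun x e => div_nonneg (Q4_nonneg _) (by positivity)
  have hQ2n : ∀ x, 0 ≤ Q2 x / (k ^ 4 * α) := fun x => div_nonneg (Q4_nonneg _) (by positivity)
  have hSn : ∀ x c, 0 ≤ S x c / β := fun x c => div_nonneg (sq_nonneg _) (by positivity)
  have hpt : ∀ x e, (if ε < cutDist (step (adjm (gr e))) (step A) then (1:ℝ) else 0) ≤
      Q1 x e / (k ^ 4 * α) + Q2 x / (k ^ 4 * α) + ∑ c ∈ Finset.range K, S x c / β := by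
    intro x e
    have hs0 : 0 ≤ ∑ c ∈ Finset.range K, S x c / β := Finset.sum_nonneg fun c _ => hSn x c
    have := hQ1n x e
    have := hQ2n x
    split_ifs with hbad
    swap
    · positivity
    by_contra! hlt
    refine absurd (sample_det (adjm_sym (gr e)) hA hf hB x hε ?_ ?_ ?_ ?_) (not_le.2 hbad)
    · have h : Q1 x e / (k ^ 4 * α) ≤ 1 := by linarith
      rw [div_le_one (by positivity)] at h
      rw [div_le_iff₀ (by positivity), mul_comm]; exact h
    · have h : Q2 x / (k ^ 4 * α) ≤ 1 := by linarith
      rw [div_le_one (by positivity)] at h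
      rw [div_le_iff₀ (by positivity), mul_comm]; exact h
    · calc _ ≤ ∑ c ∈ Finset.range K, ε / (8 * K) := by
            refine Finset.sum_le_sum fun c hc => ?_
            have h := Finset.single_le_sum (fun c _ => hSn x c) hc
            have h : S x c / β ≤ 1 := by linarith
            rw [div_le_one hβ0] at h
            exact abs_le_of_sq_le_sq h (by positivity)
        _ = _ := by simp; field_simp
    · exact hQ.trans (by linarith)
  have hw : ∀ (x : Fin k → Fin n) e, 0 ≤ wt (fun a b => A (x a) (x b)) e :=
    fun x e => wt_nonneg (fun _ _ => hA.2 _ _) e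
  have hx : ∀ x : Fin k → Fin n, ∑ e ∈ (Ek k).powerset, wt (fun a b => A (x a) (x b)) e *
      (if ε < cutDist (step (adjm (gr e))) (step A) then (1:ℝ) else 0) ≤
      6 * (k:ℝ) ^ 3 / (k ^ 4 * α) + Q2 x / (k ^ 4 * α) + ∑ c ∈ Finset.range K, S x c / β := by
    intro x
    calc _ ≤ ∑ e ∈ (Ek k).powerset, wt (fun a b => A (x a) (x b)) e *
          (Q1 x e / (k ^ 4 * α) + (Q2 x / (k ^ 4 * α) + ∑ c ∈ Finset.range K, S x c / β)) := by
          refine Finset.sum_le_sum fun e _ => mul_le_mul_of_nonneg_left ?_ (hw x e)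
          rw [← add_assoc]; exact hpt x e
      _ = (∑ e ∈ (Ek k).powerset, wt (fun a b => A (x a) (x b)) e * Q1 x e) / (k ^ 4 * α) +
          (Q2 x / (k ^ 4 * α) + ∑ c ∈ Finset.range K, S x c / β) := by
          simp only [mul_add _ (Q1 x _ / (k ^ 4 * α)) _]
          rw [Finset.sum_add_distrib, ← Finset.sum_mul, sum_wt, one_mul, Finset.sum_div]
          simp only [mul_div_assoc]
      _ ≤ _ := by
          rw [← add_assoc]
          gcongr
          exact rand_Q4 ⟨fun _ _ => hA.1 _ _, fun _ _ => hA.2 _ _⟩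
  have h2 : (∑ x : Fin k → Fin n, Q2 x) / (n:ℝ) ^ k ≤ k ^ 4 * (α / 6) + 6 * k ^ 3 := by
    refine (sample_Q4 (D := fun i j => A i j - B (f i) (f j))
      (fun i j => sub_Icc_abs (hA.2 _ _) (hB _ _))).trans ?_
    gcongr
  have h3 : ∀ c, (∑ x : Fin k → Fin n, S x c) / (n:ℝ) ^ k ≤ 1 / k := fun c => cum_var f c
  calc _ = (∑ x : Fin k → Fin n, ∑ e ∈ (Ek k).powerset, wt (fun a b => A (x a) (x b)) e *
      (if ε < cutDist (step (adjm (gr e))) (step A) then (1:ℝ) else 0)) / (n:ℝ) ^ k := by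
        unfold pr
        rw [Finset.sum_comm, Finset.sum_div]
        refine Finset.sum_congr rfl fun e _ => ?_
        rw [← Finset.sum_mul]; ring
    _ ≤ (∑ x : Fin k → Fin n, (6 * (k:ℝ) ^ 3 / (k ^ 4 * α) + Q2 x / (k ^ 4 * α) +
          ∑ c ∈ Finset.range K, S x c / β)) / (n:ℝ) ^ k := by
        gcongr with x _
        exact hx x
    _ = 6 * (k:ℝ) ^ 3 / (k ^ 4 * α) + ((∑ x : Fin k → Fin n, Q2 x) / (n:ℝ) ^ k) / (k ^ 4 * α) +
          ∑ c ∈ Finset.range K, ((∑ x : Fin k → Fin n, S x c) / (n:ℝ) ^ k) / β := by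
        rw [Finset.sum_add_distrib, Finset.sum_add_distrib, Finset.sum_comm, add_div, add_div]
        congr 2
        · simp [mul_div_cancel_left₀ _ hnk.ne']
        · rw [← Finset.sum_div, div_right_comm]
        · rw [Finset.sum_div]
          refine Finset.sum_congr rfl fun c _ => ?_
          rw [← Finset.sum_div, div_right_comm]
    _ ≤ 6 * (k:ℝ) ^ 3 / (k ^ 4 * α) + (k ^ 4 * (α / 6) + 6 * k ^ 3) / (k ^ 4 * α) +
          ∑ c ∈ Finset.range K, (1 / k) / β := by
        exact add_le_add (add_le_add le_rfl (div_le_div_of_nonneg_right h2 (by positivity)))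
          (Finset.sum_le_sum fun c _ => div_le_div_of_nonneg_right (h3 c) hβ0.le)
    _ = (12 / α + K / β) / k + 1 / 6 := by
        simp only [Finset.sum_const, Finset.card_range, nsmul_eq_mul]
        field_simp
        ring
    _ ≤ 1 / 3 := by
        have : (12 / α + K / β) / k ≤ 1 / 6 := by
          rw [div_le_iff₀ hk0]; linarith
        linarith


lemma idx_close {n : ℕ} [NeZero n] {x : ℝ} (hx : x ∈ Icc (0:ℝ) 1) :
    |((idx n x : ℕ) : ℝ) / n - x| ≤ 1 / n := by
  have hn := npos n
  rcases hx.2.lt_or_eq with h | h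
  · have h2 := (idx_eq_iff (n := n) ⟨hx.1, h⟩ _).1 rfl
    rw [abs_le]
    have := h2.1; have := h2.2
    rw [add_div] at this
    constructor <;> linarith
  · subst h
    have : ((idx n (1:ℝ) : ℕ) : ℝ) = n - 1 := by
      have h1 := NeZero.pos n
      simp only [idx, mul_one, Nat.floor_natCast]
      rw [min_eq_right (by omega), Nat.cast_sub (by omega)]; simp
    rw [this, sub_div, div_self hn.ne']
    simp

lemma approx {W : ℝ → ℝ → ℝ} (hW : IsGraphon W) {ε : ℝ} (hε : 0 < ε) :
    ∃ n : ℕ, ∃ _ : NeZero n, ∃ A : Fin n → Fin n → ℝ, SymMat A ∧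
      cutNorm (fun x y => step A x y - W x y) ≤ ε := by
  have hWi : Integrable (Function.uncurry W) (μ01.prod μ01) := by
    refine Integrable.of_bound hW.1.aestronglyMeasurable 1 (ae_of_all _ fun z => ?_)
    exact hW.ker.2 z.1 z.2
  obtain ⟨g, gc, gi, gcont, gint⟩ := hWi.exists_hasCompactSupport_integral_sub_le
    (half_pos hε)
  have guc := gc.uniformContinuous_of_continuous gcont
  obtain ⟨δ, hδ, hg⟩ := Metric.uniformContinuous_iff.1 guc (ε / 2) (half_pos hε)
  obtain ⟨m, hm⟩ := exists_nat_one_div_lt hδ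
  have hn0 : NeZero (m + 1) := ⟨by omega⟩
  set n := m + 1 with hn
  have hδn : 1 / (n:ℝ) < δ := by rw [hn]; push_cast; exact hm
  set pt : Fin n → ℝ := fun i => ((i:ℕ):ℝ) / n with hpt
  set A : Fin n → Fin n → ℝ := fun i j => clamp ((g (pt i, pt j) + g (pt j, pt i)) / 2) with hA
  have hAs : SymMat A := ⟨fun i j => by simp only [hA]; rw [add_comm], fun i j => clamp_mem _⟩
  refine ⟨n, hn0, A, hAs, ?_⟩
  set h : ℝ × ℝ → ℝ := fun z => ‖Function.uncurry W z - g z‖ with hh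
  have hint : Integrable h (μ01.prod μ01) := (hWi.sub gint).norm
  have hints : Integrable (fun z : ℝ × ℝ => h z.swap) (μ01.prod μ01) := hint.swap
  have hgx : ∀ x ∈ Icc (0:ℝ) 1, ∀ y ∈ Icc (0:ℝ) 1,
      |g (x, y) - g (pt (idx n x), pt (idx n y))| ≤ ε / 2 := by
    intro x hx y hy
    refine (hg (a := (x, y)) (b := (pt (idx n x), pt (idx n y))) ?_).le
    rw [Prod.dist_eq, max_lt_iff]
    simp only [Real.dist_eq]
    rw [abs_sub_comm x, abs_sub_comm y]
    exact ⟨(idx_close hx).trans_lt hδn, (idx_close hy).trans_lt hδn⟩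
  have hbd : ∀ z ∈ Icc (0:ℝ) 1 ×ˢ Icc (0:ℝ) 1, |step A z.1 z.2 - W z.1 z.2| ≤
      ε / 2 + (h z + h z.swap) / 2 := by
    rintro ⟨x, y⟩ ⟨hx, hy⟩
    simp only at hx hy ⊢
    rw [abs_sub_comm]
    refine (clamp_sq (hW.2.2 x y)).trans ?_
    have b1 := hgx x hx y hy
    have b2 := hgx y hy x hx
    simp only [hh, Prod.swap, Function.uncurry, Real.norm_eq_abs]
    have e : W x y - (g (pt (idx n x), pt (idx n y)) + g (pt (idx n y), pt (idx n x))) / 2 =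
      ((W x y - g (x, y)) + (W y x - g (y, x)) + (g (x, y) - g (pt (idx n x), pt (idx n y))) +
        (g (y, x) - g (pt (idx n y), pt (idx n x)))) / 2 := by
      rw [hW.2.1 y x]; ring
    rw [e, abs_div, abs_two]
    have t1 := abs_add_le (W x y - g (x, y)) (W y x - g (y, x))
    have t2 := abs_add_le (W x y - g (x, y) + (W y x - g (y, x)))
      (g (x, y) - g (pt (idx n x), pt (idx n y)))
    have t3 := abs_add_le (W x y - g (x, y) + (W y x - g (y, x)) +
      (g (x, y) - g (pt (idx n x), pt (idx n y)))) (g (y, x) - g (pt (idx n y), pt (idx n x)))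
    linarith
  apply cutNorm_le
  intro S T hS hT hS' hT'
  have kU := (step_graphon hAs).ker.sub hW.ker
  have := isFin_of_sub hS'
  have := isFin_of_sub hT'
  have hUi : Integrable (Function.uncurry fun x y => step A x y - W x y)
      ((volume.restrict S).prod (volume.restrict T)) :=
    Integrable.of_bound kU.1.aestronglyMeasurable (1 + 1) (ae_of_all _ fun z => kU.2 z.1 z.2)
  have hUi' : Integrable (Function.uncurry fun x y => step A x y - W x y) (μ01.prod μ01) :=
    Integrable.of_bound kU.1.aestronglyMeasurable (1 + 1) (ae_of_all _ fun z => kU.2 z.1 z.2)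
  have hle : (volume.restrict S).prod (volume.restrict T) ≤ μ01.prod μ01 := by
    rw [Measure.prod_restrict, Measure.prod_restrict]
    exact Measure.restrict_mono (prod_mono hS' hT') le_rfl
  have hii : ∫ x in S, ∫ y in T, (step A x y - W x y) =
      ∫ z, (Function.uncurry fun x y => step A x y - W x y) z
        ∂((volume.restrict S).prod (volume.restrict T)) := (integral_prod _ hUi).symm
  rw [hii, ← Real.norm_eq_abs]
  refine (norm_integral_le_integral_norm _).trans ?_
  refine (integral_mono_measure hle (ae_of_all _ fun z => norm_nonneg _) hUi'.norm).trans ?_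
  have hswap : ∫ z, h z.swap ∂(μ01.prod μ01) = ∫ z, h z ∂(μ01.prod μ01) :=
    integral_prod_swap h
  calc _ ≤ ∫ z, (ε / 2 + (h z + h z.swap) / 2) ∂(μ01.prod μ01) := by
        refine integral_mono_ae hUi'.norm
          ((integrable_const _).add ((hint.add hints).div_const _)) ?_
        rw [Measure.prod_restrict]
        exact (ae_restrict_iff' (measurableSet_Icc.prod measurableSet_Icc)).2
          (ae_of_all _ hbd)
    _ = ε / 2 + ∫ z, h z ∂(μ01.prod μ01) := by
        have hi2 : Integrable (fun z : ℝ × ℝ => (h z + h z.swap) / 2) (μ01.prod μ01) :=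
          (hint.add hints).div_const _
        rw [integral_add (integrable_const _) hi2, integral_div, integral_div,
          integral_add hint hints, hswap]
        simp
    _ ≤ ε := by linarith

lemma pr_tendsto {k : ℕ} {ι : Type} {l : Filter ι} {N : ι → ℕ} {A : ∀ i, Fin (N i) → Fin (N i) → ℝ}
    {W : ℝ → ℝ → ℝ} (h : ∀ S ⊆ Ek k, Tendsto (fun i => tfin S (A i)) l (nhds (tS S W)))
    {η : ℝ} (hη : 0 < η) :
    ∀ᶠ i in l, ∑ e ∈ (Ek k).powerset,
      |pr e (A i) - ∑ T ∈ (Ek k \ e).powerset, (-1) ^ T.card * tS (e ∪ T) W| < η := by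
  have : Tendsto (fun i => ∑ e ∈ (Ek k).powerset,
      |pr e (A i) - ∑ T ∈ (Ek k \ e).powerset, (-1) ^ T.card * tS (e ∪ T) W|) l (nhds 0) := by
    rw [← Finset.sum_const_zero (s := (Ek k).powerset)]
    refine tendsto_finsetSum _ fun e he => ?_
    have h1 : Tendsto (fun i => pr e (A i)) l
        (nhds (∑ T ∈ (Ek k \ e).powerset, (-1) ^ T.card * tS (e ∪ T) W)) := by
      simp only [pr_eq]
      refine tendsto_finsetSum _ fun T hT => (h _ ?_).const_mul _
      rw [Finset.mem_powerset] at he hT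
      exact Finset.union_subset he (hT.trans Finset.sdiff_subset)
    have := (h1.sub_const (∑ T ∈ (Ek k \ e).powerset, (-1) ^ T.card * tS (e ∪ T) W)).abs
    simpa using this
  exact this.eventually_lt_const hη

open scoped Classical in
lemma common_sample {k n m : ℕ} [NeZero k] [NeZero n] [NeZero m] {A : Fin n → Fin n → ℝ}
    {A' : Fin m → Fin m → ℝ} (hA : SymMat A) (hA' : SymMat A') {ε : ℝ}
    (h1 : ∑ e ∈ (Ek k).powerset,
      pr e A * (if ε < cutDist (step (adjm (gr e))) (step A) then 1 else 0) ≤ 1 / 3)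
    (h2 : ∑ e ∈ (Ek k).powerset,
      pr e A' * (if ε < cutDist (step (adjm (gr e))) (step A') then 1 else 0) ≤ 1 / 3)
    {L : Finset (Fin k × Fin k) → ℝ}
    (h3 : ∑ e ∈ (Ek k).powerset, |pr e A - L e| < 1 / 6)
    (h4 : ∑ e ∈ (Ek k).powerset, |pr e A' - L e| < 1 / 6) :
    cutDist (step A) (step A') ≤ 2 * ε := by
  by_contra! hlt
  have key : ∀ e : Finset (Fin k × Fin k), ε < cutDist (step (adjm (gr e))) (step A) ∨
      ε < cutDist (step (adjm (gr e))) (step A') := by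
    intro e
    by_contra! hc
    have g0 := (step_graphon (adjm_sym (gr e))).ker
    have t := cutDist_triangle (step_graphon hA).ker g0 (step_graphon hA').ker
    have c := cutDist_comm_le (step_graphon hA).ker g0
    linarith [hc.1, hc.2]
  have : ∀ e ∈ (Ek k).powerset, pr e A ≤
      pr e A * (if ε < cutDist (step (adjm (gr e))) (step A) then 1 else 0) +
      pr e A' * (if ε < cutDist (step (adjm (gr e))) (step A') then 1 else 0) +
      |pr e A - L e| + |pr e A' - L e| := by
    intro e _
    have p1 := pr_nonneg hA e
    have p2 := pr_nonneg hA' e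
    have q1 := le_abs_self (pr e A - L e)
    have q2 := neg_le_abs (pr e A' - L e)
    have q3 := abs_nonneg (pr e A - L e)
    have q4 := abs_nonneg (pr e A' - L e)
    have := key e
    split_ifs with u v v
    · linarith
    · linarith
    · linarith
    · tauto
  have s := Finset.sum_le_sum this
  rw [pr_sum, Finset.sum_add_distrib, Finset.sum_add_distrib, Finset.sum_add_distrib] at s
  linarith

theorem main_fwd (N : ℕ → ℕ) (G : ∀ i, SimpleGraph (Fin (N i)))
    (hN : Filter.Tendsto N Filter.atTop Filter.atTop)
    (W : ℝ → ℝ → ℝ) (hW : IsGraphon W)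
    (h : ∀ (m : ℕ) (F : SimpleGraph (Fin m)),
        Filter.Tendsto (fun i => homDensityFin F (G i)) Filter.atTop (nhds (homDensity F W))) :
    Filter.Tendsto (fun i => cutDist (graphonOf (G i)) W) Filter.atTop (nhds 0) := by
  have happ : ∀ l : ℕ, ∃ n : ℕ, ∃ _ : NeZero n, ∃ A : Fin n → Fin n → ℝ, SymMat A ∧
      cutNorm (fun x y => step A x y - W x y) ≤ 1 / ((l:ℝ) + 1) :=
    fun l => approx hW (by positivity)
  choose n hn A hA hAc using happ
  have hc0 : Tendsto (fun l => cutNorm (fun x y => step (A l) x y - W x y)) atTop (nhds 0) :=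
    squeeze_zero (fun l => cutNorm_nonneg _) hAc tendsto_one_div_add_atTop_nhds_zero_nat
  have hAt : ∀ k, ∀ S ⊆ Ek k, Tendsto (fun l => tfin S (A l)) atTop (nhds (tS S W)) := by
    intro k S hS
    have hb : ∀ l, dist (tfin S (A l)) (tS S W) ≤
        S.card * cutNorm (fun x y => step (A l) x y - W x y) := by
      intro l
      rw [Real.dist_eq, ← tS_step]
      exact counting (step_graphon (hA l)) hW S (fun p hp => by simpa [Ek] using hS hp)
    rw [tendsto_iff_dist_tendsto_zero]
    refine squeeze_zero (fun _ => dist_nonneg) hb ?_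
    simpa using hc0.const_mul (S.card : ℝ)
  have hGt : ∀ k, ∀ S ⊆ Ek k, Tendsto (fun i => tfin S (adjm (G i))) atTop (nhds (tS S W)) := by
    intro k S hS
    have := h k (gr S)
    simp only [homDensityFin_eq, homDensity_eq, ES_gr hS] at this
    exact this
  rw [Metric.tendsto_atTop']
  intro ε hε
  obtain ⟨k, hk, hgood⟩ := good_sample (ε := ε / 8) (by positivity)
  obtain ⟨l, hl1, hl2⟩ := ((pr_tendsto (hAt k) (η := 1 / 6) (by norm_num)).and
    (hc0.eventually_lt_const (show (0:ℝ) < ε / 8 by positivity))).exists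
  have hev := (pr_tendsto (hGt k) (η := 1 / 6) (by norm_num)).and
    (hN.eventually_ge_atTop 1)
  obtain ⟨i0, hi0⟩ := eventually_atTop.1 hev
  refine ⟨i0, fun i hi => ?_⟩
  obtain ⟨h1, h2⟩ := hi0 i (le_of_lt hi)
  have hNi : NeZero (N i) := ⟨by omega⟩
  have hc := common_sample (adjm_sym (G i)) (hA l) (hgood _ _ (adjm_sym (G i))) (hgood _ _ (hA l))
    h1 hl1
  have kG := (step_graphon (adjm_sym (G i))).ker
  have kA := (step_graphon (hA l)).ker
  have t := cutDist_triangle kG kA hW.ker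
  have t2 := cutDist_le (U := step (A l)) (W := W) isInv_id
  rw [cutDist_graphonOf, Real.dist_eq, sub_zero, abs_of_nonneg (cutDist_nonneg _ _)]
  linarith

theorem main_bwd (N : ℕ → ℕ) (G : ∀ i, SimpleGraph (Fin (N i)))
    (hN : Filter.Tendsto N Filter.atTop Filter.atTop)
    (W : ℝ → ℝ → ℝ) (hW : IsGraphon W)
    (h : Filter.Tendsto (fun i => cutDist (graphonOf (G i)) W) Filter.atTop (nhds 0))
    (m : ℕ) (F : SimpleGraph (Fin m)) :
    Filter.Tendsto (fun i => homDensityFin F (G i)) Filter.atTop (nhds (homDensity F W)) := by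
  rw [tendsto_iff_dist_tendsto_zero]
  have hz : Tendsto (fun i => ((ES F).card : ℝ) * cutDist (graphonOf (G i)) W) atTop (nhds 0) := by
    simpa using h.const_mul ((ES F).card : ℝ)
  refine squeeze_zero' (Eventually.of_forall fun _ => dist_nonneg) ?_ hz
  filter_upwards [hN.eventually_ge_atTop 1] with i hi
  have hNi : NeZero (N i) := ⟨by omega⟩
  rw [homDensityFin_eq, homDensity_eq, ← tS_step, Real.dist_eq, cutDist_graphonOf]
  exact counting_dist (step_graphon (adjm_sym (G i))) hW (ES F) (ES_lt F)

/-- `t(F,G_n) → t(F,W)` for every finite simple graph `F` if and only if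
`δ_□(W_{G_n}, W) → 0`. -/
theorem conv_to_graphon_iff_cutDist (N : ℕ → ℕ) (G : ∀ i, SimpleGraph (Fin (N i)))
    (hN : Filter.Tendsto N Filter.atTop Filter.atTop)
    (W : ℝ → ℝ → ℝ) (hW : IsGraphon W) :
    (∀ (m : ℕ) (F : SimpleGraph (Fin m)),
        Filter.Tendsto (fun i => homDensityFin F (G i)) Filter.atTop (nhds (homDensity F W))) ↔
    Filter.Tendsto (fun i => cutDist (graphonOf (G i)) W) Filter.atTop (nhds 0) := by
  exact ⟨main_fwd N G hN W hW, fun h m F => main_bwd N G hN W hW h m F⟩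
end

section
/- Sample concentration, local version: let f be a graph parameter (a real-valued isomorphism-invariant function on finite simple graphs) such that |f(G) − f(G')| ≤ 1 whenever G and G' are graphs on the same vertex set that differ only in edges incident with a single node. Then for every finite simple graph G and every integer 1 ≤ k ≤ |V(G)| there is a real number f_0 such that for every t > 0, if S is a uniformly random k-element subset of V(G), then |f(G[S]) − f_0| < √(2tk) with probability at least 1 − e^{−t}. -/
open Finset
open scoped Classical

-- The subgraph of `G` induced by the vertex subset `S`, presented as a graph on `Fin S.card`
-- (via the order isomorphism between `Fin S.card` and `S`).
noncomputable def inducedCopy {n : ℕ} (G : SimpleGraph (Fin n)) (S : Finset (Fin n)) :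
    SimpleGraph (Fin S.card) :=
  SimpleGraph.comap (fun i => (S.orderIsoOfFin rfl i).1) G

/-! ### Part 1: finite distributions on the line -/

namespace SampleConc

section Distribution

variable {Ω : Type} [Fintype Ω] [Nonempty Ω]

/-- Expectation of `φ (Y ω)` for uniformly random `ω`. -/
noncomputable def EE (Y : Ω → ℝ) (φ : ℝ → ℝ) : ℝ := (∑ ω, φ (Y ω)) / (Fintype.card Ω : ℝ)

/-- Probability that `Y ω` lies in `s`. -/
noncomputable def PP (Y : Ω → ℝ) (s : Set ℝ) : ℝ := EE Y (s.indicator 1)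

theorem card_pos' : (0 : ℝ) < (Fintype.card Ω : ℝ) := by
  exact_mod_cast Fintype.card_pos

theorem EE_mono (Y : Ω → ℝ) {φ ψ : ℝ → ℝ} (h : ∀ y, φ y ≤ ψ y) : EE Y φ ≤ EE Y ψ := by
  unfold EE
  gcongr
  exact h _

theorem EE_add (Y : Ω → ℝ) (φ ψ : ℝ → ℝ) : EE Y (fun y => φ y + ψ y) = EE Y φ + EE Y ψ := by
  unfold EE
  rw [Finset.sum_add_distrib, add_div]

theorem EE_smul (Y : Ω → ℝ) (c : ℝ) (φ : ℝ → ℝ) : EE Y (fun y => c * φ y) = c * EE Y φ := by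
  unfold EE
  rw [← Finset.mul_sum, mul_div_assoc]

theorem EE_const (Y : Ω → ℝ) (c : ℝ) : EE Y (fun _ => c) = c := by
  unfold EE
  have := card_pos' (Ω := Ω)
  simp

theorem PP_mono (Y : Ω → ℝ) {s t : Set ℝ} (h : s ⊆ t) : PP Y s ≤ PP Y t := by
  apply EE_mono
  intro y
  exact Set.indicator_le_indicator_of_subset h (fun _ => zero_le_one) y

theorem PP_nonneg (Y : Ω → ℝ) (s : Set ℝ) : 0 ≤ PP Y s := by
  have := EE_mono Y (φ := fun _ => 0) (ψ := s.indicator 1)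
    (fun y => Set.indicator_nonneg (fun _ _ => zero_le_one) y)
  rwa [EE_const] at this

theorem PP_union_le (Y : Ω → ℝ) (s t : Set ℝ) : PP Y (s ∪ t) ≤ PP Y s + PP Y t := by
  unfold PP
  rw [← EE_add]
  apply EE_mono
  intro y
  by_cases h1 : y ∈ s <;> by_cases h2 : y ∈ t <;> simp [h1, h2]

theorem PP_compl (Y : Ω → ℝ) (s : Set ℝ) : PP Y sᶜ = 1 - PP Y s := by
  have h : EE Y (fun y => sᶜ.indicator 1 y + s.indicator 1 y) = 1 := by
    rw [← EE_const Y 1]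
    congr 1
    funext y
    by_cases h1 : y ∈ s <;> simp [h1]
  rw [EE_add] at h
  unfold PP
  linarith

theorem exists_mem_of_PP_pos (Y : Ω → ℝ) (s : Set ℝ) (h : 0 < PP Y s) : ∃ ω, Y ω ∈ s := by
  by_contra hc
  push Not at hc
  have : PP Y s = 0 := by
    unfold PP EE
    rw [Finset.sum_eq_zero]
    · simp
    · intro ω _
      simp [hc ω]
  linarith

/-- Repeated bisection of an interval. -/
theorem bisect (Y : Ω → ℝ) (a L M : ℝ) (hL : 0 < L) (hM : 0 < M)
    (h : M ≤ PP Y (Set.Icc a (a + L))) (j : ℕ) :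
    ∃ a', a ≤ a' ∧ a' + L / 2 ^ j ≤ a + L ∧ M / 2 ^ j ≤ PP Y (Set.Icc a' (a' + L / 2 ^ j)) ∧
      ∀ y ∈ Set.Icc a' (a' + L / 2 ^ j), ∀ ρ, L / 2 ^ j < ρ → ρ ≤ L →
        M * ρ / (2 * L) ≤ PP Y {z | |z - y| < ρ} := by
  induction j with
  | zero =>
    refine ⟨a, le_rfl, by simp, by simpa using h, ?_⟩
    intro y _ ρ h1 h2
    simp at h1
    linarith
  | succ j ih =>
    obtain ⟨b, hb1, hb2, hb3, hb4⟩ := ih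
    set ℓ := L / 2 ^ (j + 1) with hℓ
    have hℓ2 : L / 2 ^ j = 2 * ℓ := by rw [hℓ, pow_succ]; field_simp
    have hM2 : M / 2 ^ j = 2 * (M / 2 ^ (j + 1)) := by rw [pow_succ]; field_simp
    have hℓ0 : 0 < ℓ := by positivity
    rw [hℓ2] at hb2 hb3 hb4
    rw [hM2] at hb3
    have hsplit : PP Y (Set.Icc b (b + 2 * ℓ)) ≤
        PP Y (Set.Icc b (b + ℓ)) + PP Y (Set.Icc (b + ℓ) (b + ℓ + ℓ)) := by
      refine le_trans (PP_mono Y ?_) (PP_union_le Y _ _)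
      intro y hy
      rcases le_total y (b + ℓ) with h1 | h1
      · left; exact ⟨hy.1, h1⟩
      · right; exact ⟨h1, by linarith [hy.2]⟩
    have key : ∃ a', b ≤ a' ∧ a' + ℓ ≤ b + 2 * ℓ ∧
        M / 2 ^ (j + 1) ≤ PP Y (Set.Icc a' (a' + ℓ)) := by
      by_cases h1 : M / 2 ^ (j + 1) ≤ PP Y (Set.Icc b (b + ℓ))
      · exact ⟨b, le_rfl, by linarith, h1⟩
      · exact ⟨b + ℓ, by linarith, by linarith, by linarith⟩
    obtain ⟨a', h1, h2, h3⟩ := key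
    refine ⟨a', by linarith, by linarith, h3, ?_⟩
    intro y hy ρ hρ1 hρ2
    rcases lt_or_ge (2 * ℓ) ρ with h4 | h4
    · exact hb4 y ⟨by linarith [hy.1], by linarith [hy.2]⟩ ρ h4 hρ2
    · have h5 : M * ρ / (2 * L) ≤ M / 2 ^ (j + 1) := by
        have : M / 2 ^ (j + 1) = M * (2 * ℓ) / (2 * L) := by
          rw [hℓ]; field_simp
        rw [this]
        gcongr
      refine h5.trans (h3.trans (PP_mono Y ?_))
      intro z hz
      simp only [Set.mem_ofPred_eq, abs_lt]
      exact ⟨by linarith [hz.1, hy.2], by linarith [hz.2, hy.1]⟩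

theorem small_scale (Y : Ω → ℝ) (a b : ℝ) (hab : a < b)
    (h : (b - a) ^ 2 ≤ PP Y (Set.Icc a b)) :
    ∃ ω, Y ω ∈ Set.Icc a b ∧ ∀ ρ, 0 < ρ → ρ ≤ b - a →
      ρ ^ 2 / 2 ≤ PP Y {z | |z - Y ω| < ρ} := by
  by_contra hc
  push Not at hc
  choose! r hr using hc
  have hL : 0 < b - a := by linarith
  -- a uniform positive lower bound for the failing radii
  have hmin : ∃ δ : ℝ, 0 < δ ∧ ∀ ω, Y ω ∈ Set.Icc a b → δ ≤ r ω := by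
    let s : Finset Ω := Finset.univ.filter (fun ω => Y ω ∈ Set.Icc a b)
    rcases s.eq_empty_or_nonempty with hs | hs
    · refine ⟨1, one_pos, ?_⟩
      intro ω hω
      have : ω ∈ s := by simp [s, hω.1, hω.2]
      rw [hs] at this
      simp at this
    · obtain ⟨ω0, h0, h1⟩ := s.exists_min_image r hs
      refine ⟨r ω0, (hr ω0 (Finset.mem_filter.1 h0).2).1, ?_⟩
      intro ω hω
      exact h1 ω (by simp [s, hω.1, hω.2])
  obtain ⟨δ, hδ, hδr⟩ := hmin
  obtain ⟨j, hj⟩ := exists_pow_lt_of_lt_one (show 0 < δ / (b - a) by positivity)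
    (show (1 / 2 : ℝ) < 1 by norm_num)
  have hj' : (b - a) / 2 ^ j < δ := by
    rw [lt_div_iff₀ hL] at hj
    rw [one_div, inv_pow] at hj
    rw [div_eq_inv_mul]
    exact hj
  obtain ⟨a', h1, h2, h3, h4⟩ := bisect Y a (b - a) ((b - a) ^ 2) hL (by positivity)
    (by simpa using h) j
  obtain ⟨ω, hω⟩ := exists_mem_of_PP_pos Y _ (lt_of_lt_of_le (by positivity) h3)
  have hωI : Y ω ∈ Set.Icc a b := ⟨by linarith [hω.1], by linarith [hω.2]⟩
  obtain ⟨hr1, hr2, hr3⟩ := hr ω hωI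
  have h5 := h4 (Y ω) hω (r ω) (lt_of_lt_of_le hj' (hδr ω hωI)) hr2
  have h6 : (b - a) ^ 2 * r ω / (2 * (b - a)) = (b - a) * r ω / 2 := by
    field_simp
  rw [h6] at h5
  nlinarith

/-- All the information about the distribution that is used, together with the assumption
that no value of `Y` is a good centre. -/
structure Bad (Y : Ω → ℝ) : Prop where
  mean : EE Y (fun y => y) = 0
  var : EE Y (fun y => y ^ 2) ≤ 1 / 4
  tailR : ∀ y, 0 ≤ y → PP Y (Set.Ici y) ≤ Real.exp (-(2 * y ^ 2))
  tailL : ∀ y, 0 ≤ y → PP Y (Set.Iic (-y)) ≤ Real.exp (-(2 * y ^ 2))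
  bad : ∀ ω, ∃ ρ, 0 < ρ ∧ Real.exp (-(ρ ^ 2 / 2)) < PP Y {z | ρ ≤ |z - Y ω|}

theorem cheb {Y : Ω → ℝ} (h : Bad Y) (y ρ : ℝ) (hρ : 0 < ρ) :
    ρ ^ 2 * PP Y {z | ρ ≤ |z - y|} ≤ 1 / 4 + y ^ 2 := by
  have h1 : EE Y (fun z => ρ ^ 2 * ({z | ρ ≤ |z - y|} : Set ℝ).indicator 1 z) ≤
      EE Y (fun z => z ^ 2 + ((-2 * y) * z + y ^ 2)) := by
    apply EE_mono
    intro z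
    by_cases hz : ρ ≤ |z - y|
    · simp only [Set.mem_ofPred_eq, hz, Set.indicator_of_mem, Pi.one_apply]
      have : ρ ^ 2 ≤ (z - y) ^ 2 := by
        rw [← sq_abs (z - y)]
        gcongr
      linarith
    · simp only [Set.mem_ofPred_eq, hz, not_false_eq_true, Set.indicator_of_notMem]
      nlinarith [sq_nonneg (z - y)]
  rw [EE_smul, EE_add, EE_add, EE_smul, EE_const, h.mean] at h1
  unfold PP
  linarith [h.var]

/-- Upper bound for the exponential. -/
noncomputable def TT (x : ℝ) : ℝ :=
  1 + x + x ^ 2 / 2 + x ^ 3 / 6 + x ^ 4 / 24 + x ^ 5 / 120 + x ^ 6 * 7 / 4320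

theorem exp_le_TT (x : ℝ) (h0 : 0 ≤ x) (h1 : x ≤ 1) : Real.exp x ≤ TT x := by
  have := Real.exp_bound' h0 h1 (n := 6) (by norm_num)
  refine this.trans (le_of_eq ?_)
  unfold TT
  norm_num [Finset.sum_range_succ, Nat.factorial]

theorem exp_1445 : Real.exp (1.7 ^ 2 / 2) ≤ 4.297 := by
  have h := exp_le_TT (1.7 ^ 2 / 4) (by norm_num) (by norm_num)
  have h2 : Real.exp (1.7 ^ 2 / 2) = Real.exp (1.7 ^ 2 / 4) ^ 2 := by
    rw [← Real.exp_nat_mul]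
    norm_num
  rw [h2]
  calc Real.exp (1.7 ^ 2 / 4) ^ 2 ≤ (TT (1.7 ^ 2 / 4)) ^ 2 := by gcongr
    _ ≤ _ := by unfold TT; norm_num

theorem cheb_exp (R ρ t : ℝ) (hR : 0 < R) (hR1 : R ^ 2 / 2 ≤ 1) (ht0 : 0 < t) (ht : t ≤ 0.6725)
    (hT : TT (R ^ 2 / 2) * t ≤ R ^ 2) (h1 : R ≤ ρ) (h2 : ρ ≤ 1.7) :
    t ≤ ρ ^ 2 * Real.exp (-(ρ ^ 2 / 2)) := by
  have e0 : Real.exp (R ^ 2 / 2) * t ≤ R ^ 2 :=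
    le_trans (by gcongr; exact exp_le_TT _ (by positivity) hR1) hT
  have e1 : Real.exp (1.7 ^ 2 / 2) * t ≤ 1.7 ^ 2 := by
    calc Real.exp (1.7 ^ 2 / 2) * t ≤ 4.297 * 0.6725 := by
          gcongr; exact exp_1445
      _ ≤ _ := by norm_num
  have hRR : R < 1.7 := by nlinarith
  -- convexity
  have hsq1 : R ^ 2 ≤ ρ ^ 2 := by gcongr
  have hsq2 : ρ ^ 2 ≤ 1.7 ^ 2 := by
    have : 0 ≤ ρ := by linarith
    gcongr
  have hd : 0 < 1.7 ^ 2 - R ^ 2 := by nlinarith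
  set w := (ρ ^ 2 - R ^ 2) / (1.7 ^ 2 - R ^ 2) with hw
  have hw0 : 0 ≤ w := div_nonneg (by linarith) hd.le
  have hw1 : w ≤ 1 := by rw [hw, div_le_one hd]; linarith
  have hρw : ρ ^ 2 = (1 - w) * R ^ 2 + w * 1.7 ^ 2 := by
    have : w * (1.7 ^ 2 - R ^ 2) = ρ ^ 2 - R ^ 2 := by rw [hw]; field_simp
    linarith
  have hc := convexOn_exp.2 (Set.mem_univ (R ^ 2 / 2)) (Set.mem_univ ((1.7 : ℝ) ^ 2 / 2))
    (show 0 ≤ 1 - w by linarith) hw0 (by ring)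
  simp only [smul_eq_mul] at hc
  have e2 : (1 - w) * (R ^ 2 / 2) + w * (1.7 ^ 2 / 2) = ρ ^ 2 / 2 := by
    rw [hρw]; ring
  rw [e2] at hc
  have e3 : Real.exp (ρ ^ 2 / 2) * t ≤ ρ ^ 2 := by
    calc Real.exp (ρ ^ 2 / 2) * t
        ≤ ((1 - w) * Real.exp (R ^ 2 / 2) + w * Real.exp (1.7 ^ 2 / 2)) * t := by gcongr
      _ = (1 - w) * (Real.exp (R ^ 2 / 2) * t) + w * (Real.exp (1.7 ^ 2 / 2) * t) := by ring
      _ ≤ (1 - w) * R ^ 2 + w * 1.7 ^ 2 := by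
          have : 0 ≤ 1 - w := by linarith
          gcongr
      _ = ρ ^ 2 := hρw.symm
  rw [Real.exp_neg, ← div_eq_mul_inv, le_div_iff₀ (Real.exp_pos _)]
  linarith

theorem g_le (r ρ c : ℝ) (hr0 : 0 ≤ r) (hr : r ≤ ρ) (h1 : ρ ^ 2 / 2 ≤ 1)
    (hT : TT (ρ ^ 2 / 2) * (1 - c) ≤ 1) : 1 - Real.exp (-(r ^ 2 / 2)) ≤ c := by
  have hE : Real.exp (-(ρ ^ 2 / 2)) ≤ Real.exp (-(r ^ 2 / 2)) := by
    apply Real.exp_le_exp.2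
    have : r ^ 2 ≤ ρ ^ 2 := by gcongr
    linarith
  rcases le_or_gt (1 - c) 0 with h | h
  · linarith [Real.exp_pos (-(r ^ 2 / 2))]
  have h2 : Real.exp (ρ ^ 2 / 2) * (1 - c) ≤ 1 :=
    le_trans (by gcongr; exact exp_le_TT _ (by positivity) h1) hT
  have h3 : 1 - c ≤ Real.exp (-(ρ ^ 2 / 2)) := by
    rw [Real.exp_neg, ← one_div, le_div_iff₀ (Real.exp_pos _)]
    linarith
  linarith

theorem tail_ok {Y : Ω → ℝ} (h : Bad Y) (y ρ : ℝ) (hy : |y| ≤ 0.65) (hρ : 1.7 ≤ ρ) :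
    PP Y {z | ρ ≤ |z - y|} ≤ Real.exp (-(ρ ^ 2 / 2)) := by
  have hy' := abs_le.1 hy
  have h1 : PP Y {z | ρ ≤ |z - y|} ≤ PP Y (Set.Ici (ρ - 0.65)) + PP Y (Set.Iic (-(ρ - 0.65))) := by
    refine le_trans (PP_mono Y ?_) (PP_union_le Y _ _)
    intro z hz
    simp only [Set.mem_ofPred_eq] at hz
    rcases le_abs.1 hz with h2 | h2
    · left; simp only [Set.mem_Ici]; linarith
    · right; simp only [Set.mem_Iic]; linarith
  have h2 := h.tailR (ρ - 0.65) (by linarith)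
  have h3 := h.tailL (ρ - 0.65) (by linarith)
  have h4 : -(2 * (ρ - 0.65) ^ 2) ≤ -(ρ ^ 2 / 2) - Real.log 2 := by
    have := Real.log_two_lt_d9
    nlinarith
  have h5 : Real.exp (-(2 * (ρ - 0.65) ^ 2)) ≤ Real.exp (-(ρ ^ 2 / 2)) / 2 := by
    calc _ ≤ Real.exp (-(ρ ^ 2 / 2) - Real.log 2) := Real.exp_le_exp.2 h4
      _ = _ := by rw [Real.exp_sub, Real.exp_log (by norm_num)]
  linarith

theorem exp_neg_ge (ρ : ℝ) : 1 - ρ ^ 2 / 2 ≤ Real.exp (-(ρ ^ 2 / 2)) := by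
  have := Real.add_one_le_exp (-(ρ ^ 2 / 2))
  linarith

/-- The basic test for an interval. -/
theorem test {Y : Ω → ℝ} (h : Bad Y) (a b B R : ℝ) (hab : a < b) (ha : -B ≤ a) (hb : b ≤ B)
    (hB : B ≤ 0.65) (hR : 0 < R) (hR1 : R ^ 2 / 2 ≤ 1)
    (hT : TT (R ^ 2 / 2) * (1 / 4 + B ^ 2) ≤ R ^ 2) :
    PP Y (Set.Ioo a b) ≤ (b - a) ^ 2 ∨
      ∃ ρ, b - a ≤ ρ ∧ ρ < R ∧
        PP Y (Set.Ioo (b - ρ) (a + ρ)) ≤ 1 - Real.exp (-(ρ ^ 2 / 2)) := by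
  rcases le_or_gt (PP Y (Set.Icc a b)) ((b - a) ^ 2) with h1 | h1
  · left
    exact (PP_mono Y Set.Ioo_subset_Icc_self).trans h1
  right
  obtain ⟨ω, hω, hsm⟩ := small_scale Y a b hab h1.le
  obtain ⟨ρ, hρ0, hρ⟩ := h.bad ω
  have hcompl : PP Y {z | ρ ≤ |z - Y ω|} = 1 - PP Y {z | |z - Y ω| < ρ} := by
    rw [← PP_compl]
    congr 1
    ext z
    simp
  have hyB : |Y ω| ≤ B := abs_le.2 ⟨by linarith [hω.1], by linarith [hω.2]⟩
  have hlt : b - a < ρ := by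
    by_contra hc
    push Not at hc
    have := hsm ρ hρ0 hc
    have := exp_neg_ge ρ
    linarith
  have h17 : ρ < 1.7 := by
    by_contra hc
    push Not at hc
    have := tail_ok h (Y ω) ρ (hyB.trans hB) hc
    linarith
  have hB0 : 0 ≤ B := (abs_nonneg _).trans hyB
  have hρR : ρ < R := by
    by_contra hc
    push Not at hc
    have h3 := cheb_exp R ρ (1 / 4 + B ^ 2) hR hR1 (by positivity) (by nlinarith) hT hc h17.le
    have h4 := cheb h (Y ω) ρ hρ0
    have h5 : Y ω ^ 2 ≤ B ^ 2 := by
      rw [← sq_abs]; gcongr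
    have : ρ ^ 2 * Real.exp (-(ρ ^ 2 / 2)) < ρ ^ 2 * PP Y {z | ρ ≤ |z - Y ω|} := by
      gcongr
    linarith
  refine ⟨ρ, hlt.le, hρR, ?_⟩
  have h6 : PP Y (Set.Ioo (b - ρ) (a + ρ)) ≤ PP Y {z | |z - Y ω| < ρ} := by
    apply PP_mono
    intro z hz
    simp only [Set.mem_ofPred_eq, abs_lt]
    exact ⟨by linarith [hz.1, hω.2], by linarith [hz.2, hω.1]⟩
  linarith

end Distribution

/-! ### Part 2: the certificate -/

section Certificate

/-- A weighted interval bound: endpoints in hundredths and shifted by `200`, bound in `1/10000`,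
and a weight. -/
structure Ent where
  lo : ℕ
  hi : ℕ
  c : ℕ
  l : ℕ

def lamP (f : ℕ) : List Ent → ℕ
  | [] => 0
  | e :: t => bif Nat.blt e.lo f && Nat.blt f e.hi then Nat.add e.l (lamP f t) else lamP f t

def lamO (f : ℕ) : List Ent → ℕ
  | [] => 0
  | e :: t => bif Nat.ble e.lo f && Nat.blt f e.hi then Nat.add e.l (lamO f t) else lamO f t

def cost : List Ent → ℕ
  | [] => 0
  | e :: t => Nat.add (Nat.mul e.l e.c) (cost t)

/-- The pointwise inequalities at `f` and on `(f, f + 1)`. -/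
def chkAt (M C : ℕ) (es : List Ent) (f : ℕ) : Bool :=
  Nat.ble (M * f) (4 * (f * f) + C + lamP f es) &&
  Nat.ble (M * f + 1) (4 * (f * f) + C + lamO f es) &&
  Nat.ble (M * (f + 1) + 1) (4 * ((f + 1) * (f + 1)) + C + lamO f es)

/-- Check `chkAt` for `50 ≤ f < 50 + k`. -/
def chkUpTo (M C : ℕ) (es : List Ent) : ℕ → Bool
  | 0 => true
  | k + 1 => chkAt M C es (50 + k) && chkUpTo M C es k

def chk (M C : ℕ) (es : List Ent) : Bool :=
  Nat.blt (1700000000 + cost es + 10000 * C) (2000000 * M) &&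
  Nat.ble 400 M && Nat.ble M 2800 && Nat.ble (50 * M) (10000 + C) &&
  Nat.ble (350 * M) (490000 + C) && chkUpTo M C es 300

theorem chkUpTo_spec (M C : ℕ) (es : List Ent) (k : ℕ) (h : chkUpTo M C es k = true) (j : ℕ)
    (hj : j < k) : chkAt M C es (50 + j) = true := by
  induction k with
  | zero => omega
  | succ k ih =>
    simp only [chkUpTo, Bool.and_eq_true] at h
    rcases Nat.lt_succ_iff_lt_or_eq.1 hj with h1 | h1
    · exact ih h.2 h1
    · rw [h1]; exact h.1

/-- The interval of an entry. -/
def ivl (e : Ent) : Set ℝ := Set.Ioo (((e.lo : ℝ) - 200) / 100) (((e.hi : ℝ) - 200) / 100)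

noncomputable def bump (y : ℝ) : List Ent → ℝ
  | [] => 0
  | e :: t => (e.l : ℝ) * (ivl e).indicator 1 y + bump y t

theorem ind_nonneg (s : Set ℝ) (y : ℝ) : (0 : ℝ) ≤ s.indicator 1 y :=
  Set.indicator_nonneg (fun _ _ => zero_le_one) y

theorem bump_nonneg (y : ℝ) (es : List Ent) : 0 ≤ bump y es := by
  induction es with
  | nil => simp [bump]
  | cons e t ih =>
    have h3 := ind_nonneg (ivl e) y
    unfold bump
    positivity

theorem bump_int (y : ℝ) (f : ℕ) (hy : 100 * y + 200 = f) (es : List Ent) :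
    (lamP f es : ℝ) ≤ bump y es := by
  induction es with
  | nil => simp [bump, lamP]
  | cons e t ih =>
    have h3 := mul_nonneg (Nat.cast_nonneg (α := ℝ) e.l) (ind_nonneg (ivl e) y)
    unfold bump lamP
    cases hc : (Nat.blt e.lo f && Nat.blt f e.hi)
    · simp only [cond_false]
      linarith
    · simp only [Bool.and_eq_true, Nat.blt_eq] at hc
      have hm : y ∈ ivl e := by
        have a1 : (e.lo : ℝ) < f := by exact_mod_cast hc.1
        have a2 : (f : ℝ) < e.hi := by exact_mod_cast hc.2
        constructor <;> linarith
      simp only [cond_true, Nat.add_eq, hm, Set.indicator_of_mem, Pi.one_apply]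
      push_cast
      linarith

theorem bump_open (y : ℝ) (f : ℕ) (hy : f < 100 * y + 200) (hy' : 100 * y + 200 < f + 1)
    (es : List Ent) : (lamO f es : ℝ) ≤ bump y es := by
  induction es with
  | nil => simp [bump, lamO]
  | cons e t ih =>
    have h3 := mul_nonneg (Nat.cast_nonneg (α := ℝ) e.l) (ind_nonneg (ivl e) y)
    unfold bump lamO
    cases hc : (Nat.ble e.lo f && Nat.blt f e.hi)
    · simp only [cond_false]
      linarith
    · simp only [Bool.and_eq_true, Nat.blt_eq, Nat.ble_eq] at hc
      have hm : y ∈ ivl e := by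
        have a1 : (e.lo : ℝ) ≤ f := by exact_mod_cast hc.1
        have a2 : (f : ℝ) + 1 ≤ e.hi := by exact_mod_cast hc.2
        constructor <;> linarith
      simp only [cond_true, Nat.add_eq, hm, Set.indicator_of_mem, Pi.one_apply]
      push_cast
      linarith

theorem chk_sound (M C : ℕ) (es : List Ent) (hc : chk M C es = true) (y : ℝ) :
    0 ≤ 4 * (100 * y + 200) ^ 2 - M * (100 * y + 200) + C + bump y es := by
  simp only [chk, Bool.and_eq_true, Nat.ble_eq] at hc
  obtain ⟨⟨⟨⟨⟨-, hM1⟩, hM2⟩, hF1⟩, hF2⟩, hall⟩ := hc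
  set z := 100 * y + 200 with hz
  have hb0 := bump_nonneg y es
  have hM1' : (400 : ℝ) ≤ M := by exact_mod_cast hM1
  have hM2' : (M : ℝ) ≤ 2800 := by exact_mod_cast hM2
  have hF1' : 50 * (M : ℝ) ≤ 10000 + C := by exact_mod_cast hF1
  have hF2' : 350 * (M : ℝ) ≤ 490000 + C := by exact_mod_cast hF2
  rcases lt_or_ge z 50 with hlo | hlo
  · nlinarith
  rcases le_or_gt 350 z with hhi | hhi
  · nlinarith
  obtain ⟨f, hf⟩ : ∃ f, f = ⌊z⌋₊ := ⟨_, rfl⟩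
  have hf1 : (f : ℝ) ≤ z := by rw [hf]; exact Nat.floor_le (by linarith)
  have hf2 : z < f + 1 := by rw [hf]; exact Nat.lt_floor_add_one z
  have hfl : 50 ≤ f := by rw [hf]; exact Nat.le_floor (by exact_mod_cast hlo)
  have hfu : f < 350 := by
    have : (f : ℝ) < 350 := by linarith
    exact_mod_cast this
  have hq := chkUpTo_spec M C es 300 hall (f - 50) (by omega)
  have e1 : 50 + (f - 50) = f := by omega
  rw [e1] at hq
  simp only [chkAt, Bool.and_eq_true, Nat.ble_eq] at hq
  obtain ⟨⟨q1, q2⟩, q3⟩ := hq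
  have q1' : (M : ℝ) * f ≤ 4 * ((f : ℝ) * f) + C + lamP f es := by exact_mod_cast q1
  have q2' : (M : ℝ) * f + 1 ≤ 4 * ((f : ℝ) * f) + C + lamO f es := by exact_mod_cast q2
  have q3' : (M : ℝ) * (f + 1) + 1 ≤ 4 * (((f : ℝ) + 1) * (f + 1)) + C + lamO f es := by
    exact_mod_cast q3
  rcases hf1.eq_or_lt with heq | hlt
  · have := bump_int y f (by rw [← hz]; exact heq.symm) es
    rw [← heq]
    nlinarith
  · have := bump_open y f (by rw [← hz]; exact hlt) (by rw [← hz]; exact hf2) es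
    set s := z - f with hs
    have hs0 : 0 < s := by linarith
    have hs1 : s < 1 := by linarith
    have hzs : z = f + s := by rw [hs]; ring
    have k1 : 0 ≤ (1 - s) * (4 * ((f : ℝ) * f) + C + lamO f es - (M * f + 1)) :=
      mul_nonneg (by linarith) (by linarith)
    have k2 : 0 ≤ s * (4 * (((f : ℝ) + 1) * (f + 1)) + C + lamO f es - (M * (f + 1) + 1)) :=
      mul_nonneg (by linarith) (by linarith)
    rw [hzs]
    nlinarith [sq_nonneg (2 * s - 1)]

variable {Ω : Type} [Fintype Ω] [Nonempty Ω]

/-- `P (lo/100 < Y < hi/100) ≤ c/10000`. -/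
def PB (Y : Ω → ℝ) (lo hi c : ℤ) : Prop :=
  PP Y (Set.Ioo ((lo : ℝ) / 100) ((hi : ℝ) / 100)) ≤ (c : ℝ) / 10000

theorem EE_bump (Y : Ω → ℝ) (es : List Ent)
    (h : ∀ e ∈ es, PB Y ((e.lo : ℤ) - 200) ((e.hi : ℤ) - 200) e.c) :
    EE Y (fun y => bump y es) ≤ (cost es : ℝ) / 10000 := by
  induction es with
  | nil => simp [bump, cost, EE_const]
  | cons e t ih =>
    have h1 := ih (fun e he => h e (List.mem_cons_of_mem _ he))
    have h3 : PP Y (ivl e) ≤ (e.c : ℝ) / 10000 := by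
      simpa [PB, ivl] using h e List.mem_cons_self
    unfold PP at h3
    simp only [bump, cost, Nat.add_eq, Nat.mul_eq]
    rw [EE_add, EE_smul]
    push_cast
    have := mul_le_mul_of_nonneg_left h3 (Nat.cast_nonneg (α := ℝ) e.l)
    linarith

theorem leaf_aux {Y : Ω → ℝ} (h : Bad Y) (M C : ℕ) (es : List Ent)
    (hes : ∀ e ∈ es, PB Y ((e.lo : ℤ) - 200) ((e.hi : ℤ) - 200) e.c)
    (hc : chk M C es = true) : False := by
  have h1 := EE_mono Y (φ := fun _ => 0)
    (ψ := fun y => 40000 * y ^ 2 + ((160000 - 100 * (M : ℝ)) * y +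
      ((160000 - 200 * (M : ℝ) + C) + bump y es)))
    (fun y => by
      have := chk_sound M C es hc y
      linarith)
  rw [EE_add, EE_add, EE_add, EE_smul, EE_smul, EE_const, EE_const, h.mean] at h1
  simp only [chk, Bool.and_eq_true, Nat.blt_eq] at hc
  have h2 := EE_bump Y es hes
  have h3 : (1700000000 : ℝ) + cost es + 10000 * C < 2000000 * M := by
    exact_mod_cast hc.1.1.1.1.1
  have := h.var
  linarith

/-- Rows `(B, R, c)`: intervals within `[-B, B]` have Chebyshev radius `R`. -/
def rows : List (ℤ × ℤ × ℤ) :=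
  [(10, 55, 1404), (15, 57, 1500), (20, 59, 1598), (25, 62, 1749), (30, 65, 1905),
   (35, 69, 2119), (40, 74, 2396), (45, 79, 2681), (50, 85, 3032), (55, 92, 3451),
   (60, 101, 3996), (65, 113, 4719)]

def RowOK (B R c : ℝ) : Prop :=
  B ≤ 65 ∧ 0 < R ∧ (R / 100) ^ 2 / 2 ≤ 1 ∧
    TT ((R / 100) ^ 2 / 2) * (1 / 4 + (B / 100) ^ 2) ≤ (R / 100) ^ 2 ∧
    TT ((R / 100) ^ 2 / 2) * (1 - c / 10000) ≤ 1

theorem rows_ok : ∀ r ∈ rows, RowOK (r.1 : ℝ) (r.2.1 : ℝ) (r.2.2 : ℝ) := by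
  unfold rows RowOK TT
  simp only [List.mem_cons, List.not_mem_nil, or_false, forall_eq_or_imp, forall_eq]
  norm_num

def ucap (lo hi : ℤ) : List (ℤ × ℤ × ℤ) → ℤ
  | [] => 10000
  | r :: t => if -r.1 ≤ lo ∧ hi ≤ r.1 then max ((hi - lo) ^ 2) r.2.2 else ucap lo hi t

theorem PP_le_one (Y : Ω → ℝ) (s : Set ℝ) : PP Y s ≤ 1 := by
  have h1 := PP_compl Y s
  have h2 := PP_nonneg Y sᶜ
  linarith

/-- The remaining alternatives after an interval `[a,b]` turned out to be dense. -/
def Bd (Y : Ω → ℝ) (a b R r : ℤ) : Prop :=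
  ∃ ρ : ℝ, (r : ℝ) / 100 ≤ ρ ∧ ρ < (R : ℝ) / 100 ∧
    PP Y (Set.Ioo ((b : ℝ) / 100 - ρ) ((a : ℝ) / 100 + ρ)) ≤ 1 - Real.exp (-(ρ ^ 2 / 2))

theorem Bd_start {Y : Ω → ℝ} (h : Bad Y) (a b B R c : ℤ) (hr : (B, R, c) ∈ rows)
    (hab : a < b) (ha : -B ≤ a) (hb : b ≤ B) : PB Y a b ((b - a) ^ 2) ∨ Bd Y a b R (b - a) := by
  obtain ⟨h1, h2, h3, h4, -⟩ := rows_ok _ hr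
  have hab' : (a : ℝ) < b := by exact_mod_cast hab
  have ha' : -(B : ℝ) ≤ a := by exact_mod_cast ha
  have hb' : (b : ℝ) ≤ B := by exact_mod_cast hb
  dsimp only at h1 h2 h3 h4
  have := test h ((a : ℝ) / 100) ((b : ℝ) / 100) ((B : ℝ) / 100) ((R : ℝ) / 100)
    (by linarith) (by linarith) (by linarith) (by linarith) (by positivity) h3 h4
  rcases this with h5 | ⟨ρ, h5, h6, h7⟩
  · left
    unfold PB
    push_cast
    linarith
  · right
    refine ⟨ρ, ?_, h6, h7⟩
    push_cast
    linarith

/-- `c/10000` bounds `1 - exp (-(r/100)^2/2)`. -/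
def GOK (r c : ℝ) : Prop :=
  (r / 100) ^ 2 / 2 ≤ 1 ∧ TT ((r / 100) ^ 2 / 2) * (1 - c / 10000) ≤ 1

theorem Bd_cap {Y : Ω → ℝ} (a b r r' c : ℤ) (hr : 0 ≤ r) (hg : GOK r' c) (ρ : ℝ)
    (h1 : (r : ℝ) / 100 ≤ ρ) (h2 : ρ ≤ (r' : ℝ) / 100)
    (h3 : PP Y (Set.Ioo ((b : ℝ) / 100 - ρ) ((a : ℝ) / 100 + ρ)) ≤ 1 - Real.exp (-(ρ ^ 2 / 2))) :
    PB Y (b - r) (a + r) c := by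
  have hr' : (0 : ℝ) ≤ r := by exact_mod_cast hr
  have h4 := g_le ρ ((r' : ℝ) / 100) ((c : ℝ) / 10000) (by linarith) h2 hg.1 hg.2
  unfold PB
  refine le_trans (PP_mono Y ?_) (h3.trans h4)
  push_cast
  apply Set.Ioo_subset_Ioo <;> linarith

theorem Bd_step {Y : Ω → ℝ} {a b R r : ℤ} (h : Bd Y a b R r) (r' c : ℤ) (hr : 0 ≤ r)
    (hg : GOK r' c) : PB Y (b - r) (a + r) c ∨ Bd Y a b R r' := by
  obtain ⟨ρ, h1, h2, h3⟩ := h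
  rcases le_or_gt ρ ((r' : ℝ) / 100) with h4 | h4
  · left
    exact Bd_cap a b r r' c hr hg ρ h1 h4 h3
  · right
    exact ⟨ρ, h4.le, h2, h3⟩

theorem Bd_last {Y : Ω → ℝ} {a b R r : ℤ} (h : Bd Y a b R r) (c : ℤ) (hr : 0 ≤ r)
    (hg : GOK R c) : PB Y (b - r) (a + r) c := by
  obtain ⟨ρ, h1, h2, h3⟩ := h
  exact Bd_cap a b r R c hr hg ρ h1 h2.le h3

theorem PB_mono {Y : Ω → ℝ} {lo hi c c' : ℤ} (h : PB Y lo hi c) (hc : c ≤ c') :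
    PB Y lo hi c' := by
  unfold PB at *
  have : (c : ℝ) ≤ c' := by exact_mod_cast hc
  linarith

theorem PB_free {Y : Ω → ℝ} (h : Bad Y) (lo hi : ℤ) (hlt : lo < hi) (rs : List (ℤ × ℤ × ℤ))
    (hrs : ∀ r ∈ rs, r ∈ rows) : PB Y lo hi (ucap lo hi rs) := by
  induction rs with
  | nil =>
    have := PP_le_one Y (Set.Ioo ((lo : ℝ) / 100) ((hi : ℝ) / 100))
    unfold PB ucap
    norm_num
    exact this
  | cons r t ih =>
    unfold ucap
    split_ifs with hc
    · have hr := hrs r List.mem_cons_self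
      rcases Bd_start h lo hi r.1 r.2.1 r.2.2 hr hlt hc.1 hc.2 with h1 | h1
      · exact PB_mono h1 (le_max_left _ _)
      · obtain ⟨-, -, h3, -, h4⟩ := rows_ok _ hr
        have h5 := Bd_last h1 r.2.2 (by omega) ⟨h3, h4⟩
        have e1 : hi - (hi - lo) = lo := by ring
        have e2 : lo + (hi - lo) = hi := by ring
        rw [e1, e2] at h5
        exact PB_mono h5 (le_max_right _ _)
    · exact ih (fun r hr => hrs r (List.mem_cons_of_mem _ hr))

/-- Entries whose bound holds unconditionally. -/
def free (p : ℕ × ℕ × ℕ) : Ent :=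
  ⟨p.1, p.2.1, (ucap ((p.1 : ℤ) - 200) ((p.2.1 : ℤ) - 200) rows).toNat, p.2.2⟩

theorem leaf {Y : Ω → ℝ} (h : Bad Y) (M C : ℕ) (es : List Ent) (us : List (ℕ × ℕ × ℕ))
    (hes : ∀ e ∈ es, PB Y ((e.lo : ℤ) - 200) ((e.hi : ℤ) - 200) e.c)
    (hc : (us.all (fun p => Nat.blt p.1 p.2.1) && chk M C (es ++ us.map free)) = true) :
    False := by
  rw [Bool.and_eq_true, List.all_eq_true] at hc
  refine leaf_aux h M C _ ?_ hc.2
  intro e he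
  rcases List.mem_append.1 he with h1 | h1
  · exact hes e h1
  · obtain ⟨p, hp, rfl⟩ := List.mem_map.1 h1
    have h2 := hc.1 p hp
    rw [Nat.blt_eq] at h2
    have h3 : (p.1 : ℤ) - 200 < (p.2.1 : ℤ) - 200 := by omega
    exact PB_mono (PB_free h _ _ h3 rows (fun _ hr => hr)) (Int.self_le_toNat _)

set_option maxHeartbeats 4000000 in
theorem no_bad {Y : Ω → ℝ} (h : Bad Y) : False := by
  have p0 : PB Y (-65) (-30) 1225 ∨ Bd Y (-65) (-30) 113 51 := by
    rcases Bd_start h (-65) (-30) 65 113 4719 (by simp [rows]) (by norm_num) (by norm_num)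
      (by norm_num) with q | q
    · exact Or.inl (PB_mono q (by norm_num))
    · simpa using Bd_step q 51 1225 (by norm_num) (by norm_num [GOK, TT])
  rcases p0 with p0 | q
  · have p1 : PB Y (35) (65) 900 ∨ Bd Y (35) (65) 113 43 := by
      rcases Bd_start h (35) (65) 65 113 4719 (by simp [rows]) (by norm_num) (by norm_num)
        (by norm_num) with q | q
      · exact Or.inl (PB_mono q (by norm_num))
      · simpa using Bd_step q 43 900 (by norm_num) (by norm_num [GOK, TT])
    rcases p1 with p1 | q
    · have p2 : PB Y (10) (40) 900 ∨ Bd Y (10) (40) 74 43 := by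
        rcases Bd_start h (10) (40) 40 74 2396 (by simp [rows]) (by norm_num) (by norm_num)
          (by norm_num) with q | q
        · exact Or.inl (PB_mono q (by norm_num))
        · simpa using Bd_step q 43 900 (by norm_num) (by norm_num [GOK, TT])
      rcases p2 with p2 | q
      · have p3 : PB Y (-35) (-20) 225 ∨ Bd Y (-35) (-20) 69 21 := by
          rcases Bd_start h (-35) (-20) 35 69 2119 (by simp [rows]) (by norm_num) (by norm_num)
            (by norm_num) with q | q
          · exact Or.inl (PB_mono q (by norm_num))
          · simpa using Bd_step q 21 225 (by norm_num) (by norm_num [GOK, TT])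
        rcases p3 with p3 | q
        · have p4 : PB Y (30) (50) 697 ∨ Bd Y (30) (50) 85 38 := by
            rcases Bd_start h (30) (50) 50 85 3032 (by simp [rows]) (by norm_num) (by norm_num)
              (by norm_num) with q | q
            · exact Or.inl (PB_mono q (by norm_num))
            · simpa using Bd_step q 38 697 (by norm_num) (by norm_num [GOK, TT])
          rcases p4 with p4 | q
          · exact leaf h 1600 143101
                [⟨135, 170, 1225, 10500⟩, ⟨235, 265, 900, 6900⟩, ⟨210, 240, 900, 14400⟩,
                ⟨165, 180, 225, 12900⟩, ⟨230, 250, 697, 3600⟩]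
                [(160, 205, 100), (160, 210, 300), (160, 215, 1100), (175, 215, 13800),
                (185, 225, 900), (180, 220, 700)]
                (by simpa using ⟨p0, p1, p2, p3, p4⟩) (by decide +kernel)
          have p4 : PB Y (12) (68) 3032 := by
            simpa using Bd_last q 3032 (by norm_num) (by norm_num [GOK, TT])
          exact leaf h 1612 144721
              [⟨135, 170, 1225, 10800⟩, ⟨235, 265, 900, 10200⟩, ⟨210, 240, 900, 13920⟩,
              ⟨165, 180, 225, 13320⟩, ⟨212, 268, 3032, 1560⟩]
              [(180, 215, 1848), (175, 225, 1480), (160, 205, 48), (160, 210, 240),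
              (160, 215, 1272), (175, 215, 12800)]
              (by simpa using ⟨p0, p1, p2, p3, p4⟩) (by decide +kernel)
        have p3 : PB Y (-41) (-14) 595 ∨ Bd Y (-35) (-20) 69 35 := by
          simpa using Bd_step q 35 595 (by norm_num) (by norm_num [GOK, TT])
        clear q
        rcases p3 with p3 | q
        · exact leaf h 1600 143101
              [⟨135, 170, 1225, 9776⟩, ⟨235, 265, 900, 10400⟩, ⟨210, 240, 900, 12900⟩,
              ⟨159, 186, 595, 12900⟩]
              [(180, 215, 700), (185, 225, 900), (195, 245, 100), (155, 205, 100),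
              (185, 230, 1100), (155, 210, 300), (175, 215, 900), (190, 235, 300),
              (170, 215, 1100), (185, 220, 700), (185, 215, 10700)]
              (by simpa using ⟨p0, p1, p2, p3⟩) (by decide +kernel)
        have p3 : PB Y (-55) (0) 1452 ∨ Bd Y (-35) (-20) 69 56 := by
          simpa using Bd_step q 56 1452 (by norm_num) (by norm_num [GOK, TT])
        clear q
        rcases p3 with p3 | q
        · exact leaf h 1600 143101
              [⟨135, 170, 1225, 4800⟩, ⟨235, 265, 900, 6900⟩, ⟨210, 240, 900, 7600⟩,
              ⟨145, 200, 1452, 6800⟩]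
              [(165, 215, 6100), (175, 215, 900), (195, 245, 1700), (190, 230, 1100),
              (170, 215, 1100), (160, 205, 100), (160, 210, 300), (190, 235, 1300),
              (195, 250, 1900), (185, 225, 900), (195, 240, 800), (180, 220, 700)]
              (by simpa using ⟨p0, p1, p2, p3⟩) (by decide +kernel)
        have p3 : PB Y (-76) (21) 2119 := by
          simpa using Bd_last q 2119 (by norm_num) (by norm_num [GOK, TT])
        exact leaf h 1556 131441
            [⟨235, 265, 900, 11600⟩, ⟨210, 240, 900, 17072⟩, ⟨124, 221, 2119, 19880⟩]
            []
            (by simpa using ⟨p1, p2, p3⟩) (by decide +kernel)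
      have p2 : PB Y (-3) (53) 1220 ∨ Bd Y (10) (40) 74 51 := by
        simpa using Bd_step q 51 1220 (by norm_num) (by norm_num [GOK, TT])
      clear q
      rcases p2 with p2 | q
      · exact leaf h 1600 143101
            [⟨135, 170, 1225, 6900⟩, ⟨235, 265, 900, 5664⟩, ⟨197, 253, 1220, 14036⟩]
            [(185, 225, 500), (170, 200, 1100), (160, 205, 1500), (175, 215, 500),
            (175, 220, 400), (180, 225, 400), (180, 220, 300), (155, 200, 1700),
            (190, 230, 364), (165, 210, 8200), (150, 200, 1900)]
            (by simpa using ⟨p0, p1, p2⟩) (by decide +kernel)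
      have p2 : PB Y (-11) (61) 1452 ∨ Bd Y (10) (40) 74 56 := by
        simpa using Bd_step q 56 1452 (by norm_num) (by norm_num [GOK, TT])
      clear q
      rcases p2 with p2 | q
      · exact leaf h 1600 143101
            [⟨135, 170, 1225, 6900⟩, ⟨235, 265, 900, 2016⟩, ⟨189, 261, 1452, 13984⟩]
            [(185, 230, 416), (170, 190, 300), (165, 190, 8200), (160, 205, 1500),
            (175, 220, 700), (180, 225, 700), (170, 215, 800), (175, 225, 200),
            (155, 190, 1700), (150, 190, 1900)]
            (by simpa using ⟨p0, p1, p2⟩) (by decide +kernel)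
      have p2 : PB Y (-16) (66) 1749 ∨ Bd Y (10) (40) 74 62 := by
        simpa using Bd_step q 62 1749 (by norm_num) (by norm_num [GOK, TT])
      clear q
      rcases p2 with p2 | q
      · exact leaf h 1604 143641
            [⟨135, 170, 1225, 6960⟩, ⟨184, 266, 1749, 14168⟩]
            [(180, 230, 592), (160, 205, 1520), (175, 220, 40), (170, 215, 480), (175, 225, 880),
            (170, 220, 640), (155, 185, 1720), (165, 210, 8280), (150, 185, 1920)]
            (by simpa using ⟨p0, p2⟩) (by decide +kernel)
      have p2 : PB Y (-22) (72) 2396 := by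
        simpa using Bd_last q 2396 (by norm_num) (by norm_num [GOK, TT])
      exact leaf h 1628 146881
          [⟨135, 170, 1225, 7320⟩, ⟨178, 272, 2396, 14800⟩]
          [(175, 230, 648), (165, 180, 8160), (160, 205, 1640), (170, 220, 480), (170, 225, 760),
          (165, 215, 360), (165, 220, 80), (190, 230, 312), (155, 180, 1840), (165, 210, 160),
          (150, 180, 2040), (190, 235, 1160)]
          (by simpa using ⟨p0, p2⟩) (by decide +kernel)
    have p1 : PB Y (22) (78) 1311 ∨ Bd Y (35) (65) 113 53 := by
      simpa using Bd_step q 53 1311 (by norm_num) (by norm_num [GOK, TT])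
    clear q
    rcases p1 with p1 | q
    · exact leaf h 1652 150121
          [⟨135, 170, 1225, 7680⟩, ⟨222, 278, 1311, 13680⟩]
          [(170, 225, 1360), (190, 235, 1040), (160, 210, 1080), (180, 225, 960),
          (195, 245, 1440), (150, 195, 2160), (165, 225, 9240), (175, 225, 1160),
          (155, 200, 1960), (160, 215, 240), (160, 220, 440), (195, 250, 840), (195, 240, 1240),
          (190, 230, 840), (185, 225, 1600)]
          (by simpa using ⟨p0, p1⟩) (by decide +kernel)
    have p1 : PB Y (12) (88) 2973 ∨ Bd Y (35) (65) 113 84 := by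
      simpa using Bd_step q 84 2973 (by norm_num) (by norm_num [GOK, TT])
    clear q
    rcases p1 with p1 | q
    · exact leaf h 1692 155521
          [⟨135, 170, 1225, 10640⟩, ⟨212, 288, 2973, 15840⟩]
          [(180, 215, 200), (165, 215, 12400), (195, 245, 1240), (190, 240, 1040),
          (185, 230, 120), (160, 200, 240), (195, 250, 1440), (175, 220, 240), (180, 225, 440),
          (170, 215, 1560), (200, 255, 1640), (155, 195, 280), (155, 200, 1880),
          (160, 205, 1112), (185, 235, 840), (160, 215, 608), (175, 215, 1120), (180, 230, 520)]
          (by simpa using ⟨p0, p1⟩) (by decide +kernel)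
    have p1 : PB Y (-19) (119) 4238 ∨ Bd Y (35) (65) 113 105 := by
      simpa using Bd_step q 105 4238 (by norm_num) (by norm_num [GOK, TT])
    clear q
    rcases p1 with p1 | q
    · exact leaf h 1816 172261
          [⟨135, 170, 1225, 10140⟩, ⟨181, 319, 4238, 30720⟩]
          [(180, 230, 36), (175, 235, 220), (160, 185, 2580), (195, 250, 820), (155, 185, 2780),
          (200, 255, 1020), (175, 240, 84), (175, 185, 1676), (150, 185, 2980),
          (170, 185, 2180), (195, 245, 620), (180, 240, 336), (165, 185, 12520)]
          (by simpa using ⟨p0, p1⟩) (by decide +kernel)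
    have p1 : PB Y (-40) (140) 4719 := by
      simpa using Bd_last q 4719 (by norm_num) (by norm_num [GOK, TT])
    exact leaf h 1900 183601
        [⟨135, 170, 1225, 18000⟩, ⟨160, 340, 4719, 42024⟩]
        []
        (by simpa using ⟨p0, p1⟩) (by decide +kernel)
  have p0 : PB Y (-81) (-14) 1698 ∨ Bd Y (-65) (-30) 113 61 := by
    simpa using Bd_step q 61 1698 (by norm_num) (by norm_num [GOK, TT])
  clear q
  rcases p0 with p0 | q
  · exact leaf h 1536 126141
        [⟨119, 186, 1698, 14260⟩]
        [(185, 210, 1060), (170, 215, 524), (185, 225, 1220), (185, 230, 1420), (185, 235, 1620),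
        (185, 240, 1820), (185, 245, 2020), (185, 250, 2220), (185, 255, 2420),
        (200, 260, 2620), (160, 205, 1180), (180, 220, 1020), (190, 265, 16), (200, 265, 2804),
        (175, 215, 580), (155, 205, 1380), (165, 205, 980), (150, 205, 1580), (170, 200, 256)]
        (by simpa using p0) (by decide +kernel)
  have p0 : PB Y (-91) (-4) 3092 ∨ Bd Y (-65) (-30) 113 86 := by
    simpa using Bd_step q 86 3092 (by norm_num) (by norm_num [GOK, TT])
  clear q
  rcases p0 with p0 | q
  · exact leaf h 1496 115541
        [⟨109, 196, 3092, 18860⟩]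
        [(170, 220, 580), (190, 235, 1820), (195, 240, 2020), (195, 245, 2220), (195, 250, 2420),
        (195, 255, 2620), (155, 200, 352), (195, 260, 2820), (160, 210, 660), (150, 205, 1380),
        (200, 265, 1428), (195, 265, 1592), (160, 215, 320), (155, 210, 160), (175, 220, 380),
        (185, 225, 1420), (165, 215, 700), (180, 220, 180), (190, 230, 1620), (165, 220, 80),
        (155, 205, 668)]
        (by simpa using p0) (by decide +kernel)
  have p0 : PB Y (-116) (21) 3935 ∨ Bd Y (-65) (-30) 113 100 := by
    simpa using Bd_step q 100 3935 (by norm_num) (by norm_num [GOK, TT])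
  clear q
  rcases p0 with p0 | q
  · exact leaf h 1396 89041
        [⟨84, 221, 3935, 30360⟩]
        [(165, 225, 280), (185, 235, 160), (195, 240, 4680), (195, 245, 2720), (195, 250, 2920),
        (200, 255, 3120), (200, 260, 3320), (150, 180, 120), (150, 185, 760), (180, 225, 440),
        (200, 265, 3520), (170, 225, 80), (190, 230, 2392), (160, 225, 480), (155, 190, 680)]
        (by simpa using p0) (by decide +kernel)
  have p0 : PB Y (-130) (35) 4540 ∨ Bd Y (-65) (-30) 113 110 := by
    simpa using Bd_step q 110 4540 (by norm_num) (by norm_num [GOK, TT])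
  clear q
  rcases p0 with p0 | q
  · exact leaf h 1340 74201
        [⟨70, 235, 4540, 35000⟩]
        [(195, 240, 2800), (195, 245, 3000), (195, 250, 3200), (200, 255, 3400),
        (200, 260, 3600), (155, 180, 224), (145, 185, 800), (140, 170, 24), (140, 190, 976),
        (200, 265, 3800), (150, 195, 776), (165, 200, 24), (160, 195, 200)]
        (by simpa using p0) (by decide +kernel)
  have p0 : PB Y (-140) (45) 4719 := by
    simpa using Bd_last q 4719 (by norm_num) (by norm_num [GOK, TT])
  exact leaf h 1260 61201
      [⟨60, 245, 4719, 37800⟩]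
      [(195, 250, 3600), (150, 160, 24), (150, 165, 200), (200, 255, 3800)]
      (by simpa using p0) (by decide +kernel)

end Certificate

/-! ### Part 3: sampling without replacement -/

section Sampling

/-- Hoeffding's lemma for a uniformly random element of a finite set. -/
theorem hoeffding_fin {V : Type} (s : Finset V) (hs : s.Nonempty) (g : V → ℝ)
    (hg : ∀ v ∈ s, ∀ w ∈ s, |g v - g w| ≤ 1) (t : ℝ) :
    (∑ v ∈ s, Real.exp (t * g v)) / (s.card : ℝ) ≤
      Real.exp (t * ((∑ v ∈ s, g v) / (s.card : ℝ)) + t ^ 2 / 8) := by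
  obtain ⟨v0, hv0, hmin⟩ := s.exists_min_image g hs
  let _ : MeasurableSpace s := ⊤
  have : Nonempty s := ⟨⟨v0, hv0⟩⟩
  let μ : MeasureTheory.Measure s := (PMF.uniformOfFintype s).toMeasure
  have : MeasureTheory.IsProbabilityMeasure μ := PMF.toMeasure.isProbabilityMeasure _
  have hinteg : ∀ h : V → ℝ, ∫ x : s, h x ∂μ = (∑ v ∈ s, h v) / (s.card : ℝ) := by
    intro h
    rw [PMF.integral_eq_sum, ← Finset.sum_coe_sort s, Finset.sum_div]
    apply Finset.sum_congr rfl
    intro x _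
    simp [div_eq_inv_mul]
  have hX : ∀ᵐ x : s ∂μ, g x ∈ Set.Icc (g v0) (g v0 + 1) := by
    filter_upwards with x
    refine ⟨hmin x x.2, ?_⟩
    have := (abs_le.1 (hg x x.2 v0 hv0)).2
    linarith
  have hm : AEMeasurable (fun x : s => g x) μ := (measurable_from_top).aemeasurable
  have h1 := (ProbabilityTheory.hasSubgaussianMGF_of_mem_Icc hm hX).mgf_le t
  unfold ProbabilityTheory.mgf at h1
  rw [hinteg g] at h1
  have h2 := hinteg (fun v => Real.exp (t * (g v - (∑ v ∈ s, g v) / (s.card : ℝ))))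
  rw [h2] at h1
  have h3 : ∀ v, Real.exp (t * g v) = Real.exp (t * ((∑ v ∈ s, g v) / (s.card : ℝ))) *
      Real.exp (t * (g v - (∑ v ∈ s, g v) / (s.card : ℝ))) := by
    intro v
    rw [← Real.exp_add]
    congr 1
    ring
  simp_rw [h3]
  rw [← Finset.mul_sum, mul_div_assoc, Real.exp_add]
  gcongr
  refine h1.trans (le_of_eq ?_)
  congr 1
  simp
  ring

variable {V : Type} [Fintype V] [DecidableEq V]

/-- Average of `h` over the sets obtained from `A` by adding `m` random elements one by one. -/
noncomputable def Av (h : Finset V → ℝ) : ℕ → Finset V → ℝ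
  | 0, A => h A
  | m + 1, A => (∑ v ∈ Aᶜ, Av h m (insert v A)) / ((Aᶜ).card : ℝ)

theorem Av_map (σ : Equiv.Perm V) (h : Finset V → ℝ) (m : ℕ) (A : Finset V) :
    Av h m (A.map σ.toEmbedding) = Av (fun S => h (S.map σ.toEmbedding)) m A := by
  induction m generalizing A with
  | zero => rfl
  | succ m ih =>
    have hc : (A.map σ.toEmbedding)ᶜ = (Aᶜ).map σ.toEmbedding := by
      ext x
      simp
    simp only [Av]
    rw [hc, Finset.sum_map, Finset.card_map]
    congr 1
    apply Finset.sum_congr rfl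
    intro v _
    rw [← ih, Finset.map_insert]

theorem Av_close (h h' : Finset V → ℝ) (hh : ∀ S, |h S - h' S| ≤ 1) (m : ℕ) (A : Finset V) :
    |Av h m A - Av h' m A| ≤ 1 := by
  induction m generalizing A with
  | zero => exact hh A
  | succ m ih =>
    simp only [Av]
    rw [← sub_div, ← Finset.sum_sub_distrib, abs_div]
    have h1 : |∑ v ∈ Aᶜ, (Av h m (insert v A) - Av h' m (insert v A))| ≤ (Aᶜ).card := by
      refine (Finset.abs_sum_le_sum_abs _ _).trans ?_
      refine (Finset.sum_le_card_nsmul _ _ 1 (fun v _ => ih _)).trans ?_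
      simp
    rw [abs_of_nonneg (show (0 : ℝ) ≤ (Aᶜ).card by positivity)]
    exact div_le_one_of_le₀ h1 (by positivity)

theorem Av_mgf (X : Finset V → ℝ)
    (hX : ∀ (v w : V) (S : Finset V), |X S - X (S.map (Equiv.swap v w).toEmbedding)| ≤ 1)
    (t : ℝ) (m : ℕ) (A : Finset V) (hm : A.card + m ≤ Fintype.card V) :
    Av (fun S => Real.exp (t * X S)) m A ≤ Real.exp (t * Av X m A + t ^ 2 / 8 * m) := by
  induction m generalizing A with
  | zero => simp [Av]
  | succ m ih =>
    have hcard : (Aᶜ).card = Fintype.card V - A.card := Finset.card_compl A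
    have hne : (Aᶜ).Nonempty := by
      rw [← Finset.card_pos]
      omega
    simp only [Av]
    have h1 : (∑ v ∈ Aᶜ, Av (fun S => Real.exp (t * X S)) m (insert v A)) / ((Aᶜ).card : ℝ) ≤
        (∑ v ∈ Aᶜ, Real.exp (t * Av X m (insert v A)) * Real.exp (t ^ 2 / 8 * m)) /
          ((Aᶜ).card : ℝ) := by
      gcongr with v hv
      rw [← Real.exp_add]
      apply ih
      rw [Finset.card_insert_of_notMem (Finset.mem_compl.1 hv)]
      omega
    have h2 := hoeffding_fin Aᶜ hne (fun v => Av X m (insert v A)) (by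
      intro v hv w hw
      have hv' := Finset.mem_compl.1 hv
      have hw' := Finset.mem_compl.1 hw
      have e : insert w A = (insert v A).map (Equiv.swap v w).toEmbedding := by
        rw [Finset.map_insert]
        simp only [Equiv.coe_toEmbedding, Equiv.swap_apply_left]
        congr 1
        ext x
        simp only [Finset.mem_map_equiv, Equiv.symm_swap]
        by_cases hxv : x = v
        · subst hxv; simp [hv', hw']
        · by_cases hxw : x = w
          · subst hxw; simp [hv', hw']
          · rw [Equiv.swap_apply_of_ne_of_ne hxv hxw]
      rw [e, Av_map]
      exact Av_close _ _ (fun S => hX v w S) m _) t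
    refine h1.trans ?_
    rw [← Finset.sum_mul, mul_div_right_comm]
    refine (mul_le_mul_of_nonneg_right h2 (Real.exp_pos _).le).trans (le_of_eq ?_)
    rw [← Real.exp_add]
    congr 1
    push_cast
    ring

theorem Av_eq (h : Finset V → ℝ) (m : ℕ) (A : Finset V) (hm : A.card + m ≤ Fintype.card V) :
    Av h m A * ((Fintype.card V - A.card).choose m : ℝ) =
      ∑ S ∈ (Finset.powersetCard (A.card + m) (Finset.univ : Finset V)).filter (A ⊆ ·), h S := by
  induction m generalizing A with
  | zero =>
    have : (Finset.powersetCard (A.card + 0) (Finset.univ : Finset V)).filter (A ⊆ ·) = {A} := by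
      ext S
      simp only [Finset.mem_filter, Finset.mem_powersetCard, Finset.mem_singleton,
        Finset.subset_univ, true_and, add_zero]
      constructor
      · rintro ⟨h1, h2⟩
        exact (Finset.eq_of_subset_of_card_le h2 h1.le).symm
      · rintro rfl
        exact ⟨rfl, Finset.Subset.refl _⟩
    rw [this]
    simp [Av]
  | succ m ih =>
    obtain ⟨N, hN⟩ : ∃ N, Fintype.card V - A.card = N + 1 :=
      ⟨Fintype.card V - A.card - 1, by omega⟩
    have hcard : (Aᶜ).card = N + 1 := by rw [Finset.card_compl, hN]
    have h1 : ∀ v ∈ Aᶜ, Av h m (insert v A) * (N.choose m : ℝ) =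
        ∑ S ∈ (Finset.powersetCard (A.card + (m + 1)) (Finset.univ : Finset V)).filter
          (insert v A ⊆ ·), h S := by
      intro v hv
      have hc := Finset.card_insert_of_notMem (Finset.mem_compl.1 hv)
      have := ih (insert v A) (by omega)
      rw [hc] at this
      have e1 : Fintype.card V - (A.card + 1) = N := by omega
      have e2 : A.card + 1 + m = A.card + (m + 1) := by ring
      rw [e1, e2] at this
      exact this
    have h2 : (∑ v ∈ Aᶜ, Av h m (insert v A)) * (N.choose m : ℝ) =
        (m + 1) * ∑ S ∈ (Finset.powersetCard (A.card + (m + 1))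
          (Finset.univ : Finset V)).filter (A ⊆ ·), h S := by
      rw [Finset.sum_mul, Finset.sum_congr rfl h1, Finset.mul_sum]
      rw [Finset.sum_comm' (t' := (Finset.powersetCard (A.card + (m + 1))
          (Finset.univ : Finset V)).filter (A ⊆ ·)) (s' := fun S => S \ A)]
      · apply Finset.sum_congr rfl
        intro S hS
        simp only [Finset.mem_filter, Finset.mem_powersetCard, Finset.subset_univ, true_and] at hS
        have : (S \ A).card = m + 1 := by
          rw [Finset.card_sdiff_of_subset hS.2, hS.1]
          omega
        rw [Finset.sum_const, this]
        simp
      · intro v S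
        simp only [Finset.mem_filter, Finset.mem_powersetCard, Finset.subset_univ, true_and,
          Finset.mem_compl, Finset.mem_sdiff, Finset.insert_subset_iff]
        tauto
    have h3 : ((N : ℝ) + 1) * (N.choose m : ℝ) = ((N + 1).choose (m + 1) : ℝ) * (m + 1) := by
      exact_mod_cast Nat.add_one_mul_choose_eq N m
    simp only [Av]
    rw [hcard, hN]
    have hm0 : (m : ℝ) + 1 ≠ 0 := by positivity
    have hN0 : (N : ℝ) + 1 ≠ 0 := by positivity
    apply mul_left_cancel₀ hm0
    rw [← h2]
    push_cast
    field_simp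
    linear_combination (-(∑ v ∈ Aᶜ, Av h m (insert v A))) * h3

end Sampling

section Graphs

theorem f_congr (f : ∀ n : ℕ, SimpleGraph (Fin n) → ℝ)
    (hiso : ∀ (n : ℕ) (G G' : SimpleGraph (Fin n)), Nonempty (G ≃g G') → f n G = f n G')
    {m m' : ℕ} (hm : m = m') (H : SimpleGraph (Fin m)) (H' : SimpleGraph (Fin m'))
    (h : Nonempty (H ≃g H')) : f m H = f m' H' := by
  subst hm
  exact hiso _ _ _ h

theorem swap_close (f : ∀ n : ℕ, SimpleGraph (Fin n) → ℝ)
    (hiso : ∀ (n : ℕ) (G G' : SimpleGraph (Fin n)), Nonempty (G ≃g G') → f n G = f n G')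
    (hsmooth : ∀ (n : ℕ) (G G' : SimpleGraph (Fin n)),
      (∃ v : Fin n, ∀ i j : Fin n, i ≠ v → j ≠ v → (G.Adj i j ↔ G'.Adj i j)) →
      |f n G - f n G'| ≤ 1)
    {n : ℕ} (G : SimpleGraph (Fin n)) (v w : Fin n) (S : Finset (Fin n)) :
    |f S.card (inducedCopy G S) -
      f (S.map (Equiv.swap v w).toEmbedding).card
        (inducedCopy G (S.map (Equiv.swap v w).toEmbedding))| ≤ 1 := by
  set σ := Equiv.swap v w with hσ
  let x : Fin S.card → Fin n := fun i => (S.orderIsoOfFin rfl i).1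
  let H : SimpleGraph (Fin S.card) := SimpleGraph.comap (fun i => σ (x i)) G
  have hH : f (S.map σ.toEmbedding).card (inducedCopy G (S.map σ.toEmbedding)) = f S.card H := by
    symm
    apply f_congr f hiso (Finset.card_map _).symm
    have hmem : ∀ a, a ∈ S ↔ σ a ∈ S.map σ.toEmbedding := fun a => by simp
    refine ⟨⟨(S.orderIsoOfFin rfl).toEquiv.trans ((σ.subtypeEquiv hmem).trans
      ((S.map σ.toEmbedding).orderIsoOfFin rfl).symm.toEquiv), ?_⟩⟩
    intro i j
    simp [inducedCopy, H, x, -Finset.coe_orderIsoOfFin_apply]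
  rw [hH]
  -- an index outside which the two graphs agree is enough
  have key : ∀ u : Fin n, (u = v ∨ u = w) → u ∈ S → (∀ y ∈ S, y ≠ u → σ y = y) →
      |f S.card (inducedCopy G S) - f S.card H| ≤ 1 := by
    intro u _ hu hfix
    apply hsmooth
    refine ⟨(S.orderIsoOfFin rfl).symm ⟨u, hu⟩, ?_⟩
    have hx : ∀ i, i ≠ (S.orderIsoOfFin rfl).symm ⟨u, hu⟩ → σ (x i) = x i := by
      intro i hi
      apply hfix _ (S.orderIsoOfFin rfl i).2
      intro he
      apply hi
      rw [OrderIso.eq_symm_apply]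
      exact Subtype.ext he
    intro i j hi hj
    simp only [inducedCopy, H, SimpleGraph.comap_adj]
    rw [hx i hi, hx j hj]
  by_cases hv : v ∈ S <;> by_cases hw : w ∈ S
  · have hS : S.map σ.toEmbedding = S := by
      ext y
      simp only [Finset.mem_map_equiv, hσ, Equiv.symm_swap]
      by_cases hyv : y = v
      · subst hyv; simp [hv, hw]
      · by_cases hyw : y = w
        · subst hyw; simp [hv, hw]
        · rw [Equiv.swap_apply_of_ne_of_ne hyv hyw]
    rw [← hH, hS]
    simp
  · refine key v (Or.inl rfl) hv ?_
    intro y hy hyv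
    exact Equiv.swap_apply_of_ne_of_ne hyv (fun h => hw (h ▸ hy))
  · refine key w (Or.inr rfl) hw ?_
    intro y hy hyw
    exact Equiv.swap_apply_of_ne_of_ne (fun h => hv (h ▸ hy)) hyw
  · have : H = inducedCopy G S := by
      ext i j
      have hx : ∀ i, σ (x i) = x i := fun i =>
        Equiv.swap_apply_of_ne_of_ne (fun h => hv (h ▸ (S.orderIsoOfFin rfl i).2))
          (fun h => hw (h ▸ (S.orderIsoOfFin rfl i).2))
      simp only [inducedCopy, H, SimpleGraph.comap_adj]
      rw [hx i, hx j]
    rw [this]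
    simp

end Graphs

/-! ### Part 4: conclusion -/

section Conclusion

variable {Ω : Type} [Fintype Ω] [Nonempty Ω]

theorem tailR_of_mgf (Y : Ω → ℝ)
    (hm : ∀ s, EE Y (fun y => Real.exp (s * y)) ≤ Real.exp (s ^ 2 / 8)) (y : ℝ) (hy : 0 ≤ y) :
    PP Y (Set.Ici y) ≤ Real.exp (-(2 * y ^ 2)) := by
  have h1 : PP Y (Set.Ici y) ≤ EE Y (fun z => Real.exp (-(4 * y ^ 2)) * Real.exp (4 * y * z)) := by
    apply EE_mono
    intro z
    by_cases hz : y ≤ z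
    · have : z ∈ Set.Ici y := hz
      simp only [this, Set.indicator_of_mem, Pi.one_apply]
      rw [← Real.exp_add]
      apply Real.one_le_exp
      nlinarith
    · have : z ∉ Set.Ici y := hz
      simp only [this, not_false_eq_true, Set.indicator_of_notMem]
      positivity
  rw [EE_smul] at h1
  refine h1.trans ((mul_le_mul_of_nonneg_left (hm (4 * y)) (Real.exp_pos _).le).trans ?_)
  rw [← Real.exp_add]
  apply le_of_eq
  congr 1
  ring

theorem tailL_of_mgf (Y : Ω → ℝ)
    (hm : ∀ s, EE Y (fun y => Real.exp (s * y)) ≤ Real.exp (s ^ 2 / 8)) (y : ℝ) (hy : 0 ≤ y) :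
    PP Y (Set.Iic (-y)) ≤ Real.exp (-(2 * y ^ 2)) := by
  have h := tailR_of_mgf (fun ω => -Y ω) (fun s => by
    have := hm (-s)
    simpa [EE] using this) y hy
  refine le_trans (le_of_eq ?_) h
  unfold PP EE
  congr 1
  apply Finset.sum_congr rfl
  intro ω _
  have : Y ω ∈ Set.Iic (-y) ↔ -Y ω ∈ Set.Ici y := by
    simp only [Set.mem_Iic, Set.mem_Ici]
    constructor <;> intro h <;> linarith
  by_cases h1 : Y ω ∈ Set.Iic (-y)
  · simp only [h1, this.1 h1, Set.indicator_of_mem, Pi.one_apply]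
  · have h2 : -Y ω ∉ Set.Ici y := fun h => h1 (this.2 h)
    simp only [h1, h2, not_false_eq_true, Set.indicator_of_notMem]

theorem two_add_sq_le (u : ℝ) : 2 + u ^ 2 ≤ Real.exp u + Real.exp (-u) := by
  have h1 : Real.cosh u = 1 + 2 * Real.sinh (u / 2) ^ 2 := by
    have h := Real.cosh_two_mul (u / 2)
    have h' := Real.cosh_sq (u / 2)
    rw [h'] at h
    have e : 2 * (u / 2) = u := by ring
    rw [e] at h
    linarith
  have h2 : (u / 2) ^ 2 ≤ Real.sinh (u / 2) ^ 2 := by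
    rcases le_total 0 (u / 2) with h | h
    · have := Real.self_le_sinh_iff.2 h
      nlinarith
    · have := Real.sinh_le_self_iff.2 h
      nlinarith
  have h3 := Real.cosh_eq u
  rw [h3] at h1
  linarith

theorem var_of_mgf (Y : Ω → ℝ)
    (hm : ∀ s, EE Y (fun y => Real.exp (s * y)) ≤ Real.exp (s ^ 2 / 8)) :
    EE Y (fun y => y ^ 2) ≤ 1 / 4 := by
  set W := EE Y (fun y => y ^ 2) with hW
  have key : ∀ s : ℝ, 2 + s ^ 2 * W ≤ 2 * Real.exp (s ^ 2 / 8) := by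
    intro s
    have h1 : EE Y (fun y => 2 + s ^ 2 * y ^ 2) ≤
        EE Y (fun y => Real.exp (s * y) + Real.exp (-s * y)) := by
      apply EE_mono
      intro y
      have := two_add_sq_le (s * y)
      rw [mul_pow] at this
      rwa [neg_mul]
    rw [EE_add, EE_add, EE_const, EE_smul] at h1
    have h2 := hm s
    have h3 := hm (-s)
    rw [neg_sq] at h3
    linarith
  by_contra hc
  push Not at hc
  obtain ⟨w, hw0, hw1, hw2⟩ : ∃ w : ℝ, 0 < w ∧ w ≤ 1 ∧ w < 4 * W - 1 := by
    refine ⟨min 1 ((4 * W - 1) / 2), lt_min one_pos (by linarith), min_le_left _ _, ?_⟩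
    exact lt_of_le_of_lt (min_le_right _ _) (by linarith)
  have h1 := key (Real.sqrt (8 * w))
  rw [Real.sq_sqrt (by positivity)] at h1
  have e : 8 * w / 8 = w := by ring
  rw [e] at h1
  have h2 := (abs_le.1 (Real.abs_exp_sub_one_sub_id_le (x := w)
    (by rw [abs_of_pos hw0]; exact hw1))).2
  nlinarith

theorem good_centre (Y : Ω → ℝ) (h0 : EE Y (fun y => y) = 0)
    (hm : ∀ s, EE Y (fun y => Real.exp (s * y)) ≤ Real.exp (s ^ 2 / 8)) :
    ∃ ω, ∀ ρ, 0 < ρ → PP Y {z | ρ ≤ |z - Y ω|} ≤ Real.exp (-(ρ ^ 2 / 2)) := by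
  by_contra hc
  push Not at hc
  exact no_bad ⟨h0, var_of_mgf Y hm, tailR_of_mgf Y hm, tailL_of_mgf Y hm, hc⟩

theorem good_centre_scaled (Z : Ω → ℝ) (k : ℝ) (hk : 0 < k)
    (hm : ∀ s, EE Z (fun y => Real.exp (s * y)) ≤
      Real.exp (s * EE Z (fun y => y) + s ^ 2 / 8 * k)) :
    ∃ ω, ∀ t, 0 < t → 1 - Real.exp (-t) ≤ PP Z {z | |z - Z ω| < Real.sqrt (2 * t * k)} := by
  set μ := EE Z (fun y => y) with hμ
  set q := Real.sqrt k with hq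
  have hq0 : 0 < q := Real.sqrt_pos.2 hk
  have hqk : q ^ 2 = k := Real.sq_sqrt hk.le
  have hcomp : ∀ φ : ℝ → ℝ, EE (fun ω => (Z ω - μ) / q) φ = EE Z (fun z => φ ((z - μ) / q)) :=
    fun φ => rfl
  obtain ⟨ω, hω⟩ := good_centre (fun ω => (Z ω - μ) / q) (by
      rw [hcomp]
      have e : (fun z : ℝ => (z - μ) / q) = fun z => q⁻¹ * z + (-(μ / q)) := by
        funext z
        field_simp
        ring
      rw [e, EE_add, EE_smul, EE_const, ← hμ]
      field_simp
      ring) (by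
      intro s
      rw [hcomp]
      have e : (fun z : ℝ => Real.exp (s * ((z - μ) / q))) =
          fun z => Real.exp (-(s * μ / q)) * Real.exp (s / q * z) := by
        funext z
        rw [← Real.exp_add]
        congr 1
        field_simp
        ring
      rw [e, EE_smul]
      refine (mul_le_mul_of_nonneg_left (hm (s / q)) (Real.exp_pos _).le).trans ?_
      rw [← Real.exp_add]
      apply le_of_eq
      congr 1
      rw [← hqk]
      field_simp
      ring)
  refine ⟨ω, ?_⟩
  intro t ht
  have h1 := hω (Real.sqrt (2 * t)) (Real.sqrt_pos.2 (by linarith))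
  have h2 : Real.sqrt (2 * t) ^ 2 / 2 = t := by
    rw [Real.sq_sqrt (by linarith)]; ring
  rw [h2] at h1
  have h3 : PP (fun ω => (Z ω - μ) / q) {z | Real.sqrt (2 * t) ≤ |z - (Z ω - μ) / q|} =
      PP Z {z | |z - Z ω| < Real.sqrt (2 * t * k)}ᶜ := by
    unfold PP
    rw [hcomp]
    congr 1
    funext z
    have e : (z - μ) / q - (Z ω - μ) / q = (z - Z ω) / q := by
      field_simp
      ring
    have hiff : (z - μ) / q ∈ {z | Real.sqrt (2 * t) ≤ |z - (Z ω - μ) / q|} ↔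
        z ∈ ({z | |z - Z ω| < Real.sqrt (2 * t * k)}ᶜ : Set ℝ) := by
      simp only [Set.mem_ofPred_eq, Set.mem_compl_iff, not_lt]
      rw [e, abs_div, abs_of_pos hq0, le_div_iff₀ hq0, Real.sqrt_mul (show 0 ≤ 2 * t by linarith) k]
    by_cases h4 : z ∈ ({z | |z - Z ω| < Real.sqrt (2 * t * k)}ᶜ : Set ℝ)
    · rw [Set.indicator_of_mem h4, Set.indicator_of_mem (hiff.2 h4)]
      rfl
    · rw [Set.indicator_of_notMem h4, Set.indicator_of_notMem (fun h => h4 (hiff.1 h))]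
  rw [h3, PP_compl] at h1
  linarith

end Conclusion

end SampleConc

open SampleConc in
theorem sample_concentration_local (f : ∀ n : ℕ, SimpleGraph (Fin n) → ℝ)
    (hiso : ∀ (n : ℕ) (G G' : SimpleGraph (Fin n)), Nonempty (G ≃g G') → f n G = f n G')
    (hsmooth : ∀ (n : ℕ) (G G' : SimpleGraph (Fin n)),
      (∃ v : Fin n, ∀ i j : Fin n, i ≠ v → j ≠ v → (G.Adj i j ↔ G'.Adj i j)) →
      |f n G - f n G'| ≤ 1)
    (n : ℕ) (G : SimpleGraph (Fin n)) (k : ℕ) (hk1 : 1 ≤ k) (hkn : k ≤ n) :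
    ∃ f₀ : ℝ, ∀ t : ℝ, 0 < t →
      (1 - Real.exp (-t)) *
          ((Finset.powersetCard k (Finset.univ : Finset (Fin n))).card : ℝ) ≤
        (((Finset.powersetCard k (Finset.univ : Finset (Fin n))).filter
            (fun S : Finset (Fin n) =>
              |f S.card (inducedCopy G S) - f₀| < Real.sqrt (2 * t * k))).card : ℝ) := by
  let X : Finset (Fin n) → ℝ := fun S => f S.card (inducedCopy G S)
  have hX : ∀ (v w : Fin n) (S : Finset (Fin n)),
      |X S - X (S.map (Equiv.swap v w).toEmbedding)| ≤ 1 :=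
    fun v w S => swap_close f hiso hsmooth G v w S
  set D := Finset.powersetCard k (Finset.univ : Finset (Fin n)) with hD
  have hcardD : D.card = n.choose k := by simp [hD]
  have hDpos : 0 < D.card := by rw [hcardD]; exact Nat.choose_pos hkn
  have hDr : (0 : ℝ) < D.card := by exact_mod_cast hDpos
  have : Nonempty D := by
    obtain ⟨S, hS⟩ := Finset.card_pos.1 hDpos
    exact ⟨⟨S, hS⟩⟩
  let Z : D → ℝ := fun S => X S
  have hEE : ∀ φ : ℝ → ℝ, EE Z φ = (∑ S ∈ D, φ (X S)) / (D.card : ℝ) := by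
    intro φ
    unfold EE
    rw [Fintype.card_coe, ← Finset.sum_coe_sort D]
  have hAv : ∀ φ : ℝ → ℝ, EE Z φ = Av (fun S => φ (X S)) k ∅ := by
    intro φ
    have h1 := Av_eq (fun S => φ (X S)) k (∅ : Finset (Fin n)) (by simpa using hkn)
    simp only [Finset.card_empty, Fintype.card_fin, Nat.sub_zero, zero_add,
      Finset.empty_subset, Finset.filter_true] at h1
    rw [hEE, div_eq_iff hDr.ne', hcardD, h1]
  obtain ⟨ω, hω⟩ := good_centre_scaled Z (k : ℝ) (by exact_mod_cast hk1) (by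
    intro s
    rw [hAv, hAv]
    exact Av_mgf X hX s k ∅ (by simpa using hkn))
  refine ⟨Z ω, ?_⟩
  intro t ht
  have h1 := hω t ht
  unfold PP at h1
  rw [hEE, le_div_iff₀ hDr] at h1
  refine h1.trans (le_of_eq ?_)
  rw [Finset.card_filter]
  push_cast
  apply Finset.sum_congr rfl
  intro S _
  rw [Set.indicator_apply]
  rfl
end
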